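/- arXiv:math/0607497 — 2 statements merged into one kernel-verified Lean document; each statement's English description precedes it below -/
import Mathlib

section
/- Heawood's three color theorem: a finite plane triangulation is 3-colorable if and only if it is even, i.e., every vertex has even degree. -/
/-!
Every face of a triangulation has its frontier on a triangle `a b c` of the graph, hence is one of
the two sides of that triangle (`left_face_triangle`). So each directed edge `a b` has a third
vertex `t a b`, such that the face on the left of `a b` is also the face on the left of
`b (t a b)` and of `(t a b) a` (`exists_third`). This is all that is needed about faces in the
large; the Jordan curve theorem and Euler's formula are avoided by working with half-planes.

If the graph is 3-colored, then `u ↦ t v u` is an injection of the neighbors of `v` into themselves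
that exchanges the two colors available to them, so both colors occur equally often and the degree
of `v` is even (`even_of_colorable`).

Conversely, let all degrees be even, and fix a generic sweep direction. The parity of the number of
edges above a point does not change when the point passes below a vertex, because the degree of
that vertex is even; so it is constant on each face (`parity_const`), and it differs on the two
sides of an edge. This is a proper 2-coloring of the faces. Let `ω a b ∈ ZMod 3` be `1` or `-1`
according to the color of the face on the left of `a b`. Then `ω` is antisymmetric, and its sum
around each face is `3` or `-3`, that is, `0`. Such an `ω` has a potential `φ`
(`exists_potential`): values are given to the vertices in sweep order, and all the
earlier neighbors of a vertex `v` propose the same value for it, since two such neighbors that are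
consecutive around `v` span a face with `v` (`next_left`). As `ω` takes only the values `1` and
`-1`, `φ` is a proper coloring by `ZMod 3`.
-/

/-- A plane embedding of a simple graph: vertices are placed at distinct points of the
plane and edges are drawn as straight-line segments (by Fáry's theorem this loses no
generality for simple planar graphs) which meet only at common endpoints and contain
no vertices other than their endpoints. -/
structure PlaneEmbedding {V : Type*} (G : SimpleGraph V) where
  pos : V → ℝ × ℝ
  inj : Function.Injective pos
  edges_meet_only_at_endpoints : ∀ ⦃a b c d : V⦄, G.Adj a b → G.Adj c d →
    ∀ p, p ∈ segment ℝ (pos a) (pos b) → p ∈ segment ℝ (pos c) (pos d) →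
      s(a, b) = s(c, d) ∨ ∃ v : V, (v = a ∨ v = b) ∧ (v = c ∨ v = d) ∧ p = pos v
  vertex_not_in_edge_interior : ∀ ⦃a b : V⦄, G.Adj a b → ∀ v : V,
    pos v ∈ openSegment ℝ (pos a) (pos b) → v = a ∨ v = b

namespace PlaneEmbedding

variable {V : Type*} {G : SimpleGraph V}

/-- The subset of the plane covered by the drawing of the graph. -/
def imageSet (E : PlaneEmbedding G) : Set (ℝ × ℝ) :=
  Set.range E.pos ∪ ⋃ (a : V) (b : V) (_ : G.Adj a b), segment ℝ (E.pos a) (E.pos b)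

/-- The faces of a plane embedding are the connected components of the complement
of the drawing. -/
def IsFace (E : PlaneEmbedding G) (F : Set (ℝ × ℝ)) : Prop :=
  ∃ p ∉ E.imageSet, F = connectedComponentIn (E.imageSet)ᶜ p

/-- The vertices on the boundary of a face. -/
def boundaryVerts (E : PlaneEmbedding G) (F : Set (ℝ × ℝ)) : Set V :=
  {v | E.pos v ∈ frontier F}

/-- A plane graph is a triangulation if every face (including the outer face) is
bounded by a triangle. -/
def IsTriangulation (E : PlaneEmbedding G) : Prop :=
  ∀ F : Set (ℝ × ℝ), E.IsFace F → ∃ a b c : V,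
    G.Adj a b ∧ G.Adj b c ∧ G.Adj a c ∧ E.boundaryVerts F = {a, b, c}

end PlaneEmbedding

namespace Heawood

open Set Filter Topology

/-- Twice the signed area of the triangle `a b q`; it is positive exactly when `q` lies strictly to
the left of the directed line from `a` to `b`. -/
def det (a b q : ℝ × ℝ) : ℝ := (b.1 - a.1) * (q.2 - a.2) - (b.2 - a.2) * (q.1 - a.1)

/-- The point at signed distance `δ * |ab|` to the left of the midpoint of `ab`. -/
noncomputable def leftpt (a b : ℝ × ℝ) (δ : ℝ) : ℝ × ℝ :=
  ((a.1 + b.1) / 2 - δ * (b.2 - a.2), (a.2 + b.2) / 2 + δ * (b.1 - a.1))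

/-- The open half-plane to the left of the directed line from `a` to `b`. -/
def half (a b : ℝ × ℝ) : Set (ℝ × ℝ) := {q | 0 < det a b q}

/-- The interior of the triangle `a b c`, when its vertices are in counterclockwise order. -/
def tri (a b c : ℝ × ℝ) : Set (ℝ × ℝ) := half a b ∩ half b c ∩ half c a

/-- The boundary of the triangle `a b c`. -/
def bd (a b c : ℝ × ℝ) : Set (ℝ × ℝ) := segment ℝ a b ∪ segment ℝ b c ∪ segment ℝ c a

/-! ### Elementary plane geometry -/

theorem mem_half {a b q : ℝ × ℝ} : q ∈ half a b ↔ 0 < det a b q := Iff.rfl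

theorem continuous_det (a b : ℝ × ℝ) : Continuous (det a b) := by
  unfold det; fun_prop

theorem continuous_leftpt (a b : ℝ × ℝ) : Continuous (leftpt a b) := by
  unfold leftpt; fun_prop

theorem det_comb (a b x y : ℝ × ℝ) (s t : ℝ) (h : s + t = 1) :
    det a b (s • x + t • y) = s * det a b x + t * det a b y := by
  obtain rfl : s = 1 - t := by linarith
  simp only [det, Prod.fst_add, Prod.snd_add, Prod.smul_fst, Prod.smul_snd, smul_eq_mul]
  ring

theorem det_swap (a b q : ℝ × ℝ) : det b a q = -det a b q := by unfold det; ring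

theorem det_rot (a b c : ℝ × ℝ) : det b c a = det a b c := by unfold det; ring

theorem det_left (a b : ℝ × ℝ) : det a b a = 0 := by unfold det; ring

theorem det_right (a b : ℝ × ℝ) : det a b b = 0 := by unfold det; ring

theorem sq_pos_of_ne {a b : ℝ × ℝ} (h : a ≠ b) : 0 < (b.1 - a.1) ^ 2 + (b.2 - a.2) ^ 2 := by
  by_contra hc
  have h1 : b.1 - a.1 = 0 := by nlinarith [sq_nonneg (b.1 - a.1), sq_nonneg (b.2 - a.2)]
  have h2 : b.2 - a.2 = 0 := by nlinarith [sq_nonneg (b.1 - a.1), sq_nonneg (b.2 - a.2)]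
  exact h (Prod.ext (by linarith) (by linarith))

theorem det_leftpt (a b : ℝ × ℝ) (δ : ℝ) :
    det a b (leftpt a b δ) = δ * ((b.1 - a.1) ^ 2 + (b.2 - a.2) ^ 2) := by
  unfold det leftpt; ring

theorem det_add (a b q e : ℝ × ℝ) :
    det a b (q + e) = det a b q + ((b.1 - a.1) * e.2 - (b.2 - a.2) * e.1) := by
  simp only [det, Prod.fst_add, Prod.snd_add]; ring

theorem convex_half (a b : ℝ × ℝ) : Convex ℝ (half a b) := by
  intro x hx y hy s t hs ht hst
  simp only [mem_half] at *
  rw [det_comb _ _ _ _ _ _ hst]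
  rcases hs.lt_or_eq with h | rfl
  · have := mul_pos h hx
    have := mul_nonneg ht hy.le
    linarith
  · have : t = 1 := by linarith
    subst this; linarith

theorem isOpen_half (a b : ℝ × ℝ) : IsOpen (half a b) :=
  isOpen_lt continuous_const (continuous_det a b)

theorem det_segment {a b x y q : ℝ × ℝ} (h : q ∈ segment ℝ x y) :
    ∃ s t : ℝ, 0 ≤ s ∧ 0 ≤ t ∧ s + t = 1 ∧ det a b q = s * det a b x + t * det a b y := by
  obtain ⟨s, t, hs, ht, hst, rfl⟩ := h
  exact ⟨s, t, hs, ht, hst, det_comb _ _ _ _ _ _ hst⟩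

theorem isClosed_seg (a b : ℝ × ℝ) : IsClosed (segment ℝ a b) := by
  rw [segment_eq_image]
  exact (isCompact_Icc.image (by fun_prop)).isClosed

/-- A triangle that is clockwise in the order `a b c`, or degenerate, has no point to the left of
its directed side `a b`. -/
theorem half_disjoint_bd {a b c : ℝ × ℝ} (h : det a b c ≤ 0) : Disjoint (half a b) (bd a b c) := by
  rw [Set.disjoint_left]
  intro q hq hb
  have hq : 0 < det a b q := hq
  rcases hb with (hb | hb) | hb <;>
  · obtain ⟨s, t, hs, ht, -, e⟩ := det_segment (a := a) (b := b) hb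
    simp only [det_left, det_right] at e
    nlinarith

theorem tri_disjoint_bd (a b c : ℝ × ℝ) : Disjoint (tri a b c) (bd a b c) := by
  rw [Set.disjoint_left]
  rintro q ⟨⟨h1, h2⟩, h3⟩ hb
  simp only [mem_half] at h1 h2 h3
  rcases hb with (hb | hb) | hb
  · obtain ⟨s, t, hs, ht, -, e⟩ := det_segment (a := a) (b := b) hb
    simp only [det_left, det_right] at e
    linarith
  · obtain ⟨s, t, hs, ht, -, e⟩ := det_segment (a := b) (b := c) hb
    simp only [det_left, det_right] at e
    linarith
  · obtain ⟨s, t, hs, ht, -, e⟩ := det_segment (a := c) (b := a) hb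
    simp only [det_left, det_right] at e
    linarith

theorem bd_rot (a b c : ℝ × ℝ) : bd b c a = bd a b c := by
  unfold bd; ext q; simp only [mem_union]; tauto

/-- The half-planes beyond two consecutive sides of a clockwise triangle overlap, in the angle
opposite to the triangle at the common vertex. -/
theorem half_inter_half {a b c : ℝ × ℝ} (h : det a b c < 0) : (half a b ∩ half b c).Nonempty := by
  -- the point `b + (b - a) + (b - c)`
  refine ⟨(3 * b.1 - a.1 - c.1, 3 * b.2 - a.2 - c.2), ?_, ?_⟩ <;>
  · simp only [mem_half]
    unfold det at *
    nlinarith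

theorem leftpt_mem_half {a b : ℝ × ℝ} (h : a ≠ b) {δ : ℝ} (hδ : 0 < δ) :
    leftpt a b δ ∈ half a b := by
  simp only [mem_half, det_leftpt]
  exact mul_pos hδ (sq_pos_of_ne h)

theorem leftpt_zero (a b : ℝ × ℝ) : leftpt a b 0 = ((a.1 + b.1) / 2, (a.2 + b.2) / 2) := by
  simp [leftpt]

theorem mid_mem (a b : ℝ × ℝ) : leftpt a b 0 ∈ openSegment ℝ a b := by
  refine ⟨1 / 2, 1 / 2, by norm_num, by norm_num, by norm_num, ?_⟩
  rw [leftpt_zero]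
  ext <;> simp <;> ring

theorem leftpt_tendsto (a b : ℝ × ℝ) : Tendsto (leftpt a b) (𝓝[>] 0) (𝓝 (leftpt a b 0)) :=
  (continuous_leftpt a b).continuousAt.tendsto.mono_left nhdsWithin_le_nhds

theorem leftpt_eventually_tri {a b c : ℝ × ℝ} (h : 0 < det a b c) :
    ∀ᶠ δ in 𝓝[>] (0 : ℝ), leftpt a b δ ∈ tri a b c := by
  have hab : a ≠ b := by rintro rfl; unfold det at h; linarith
  have h1 : leftpt a b 0 ∈ half b c := by
    simp only [mem_half]; rw [leftpt_zero]; unfold det at *; simp only; linarith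
  have h2 : leftpt a b 0 ∈ half c a := by
    simp only [mem_half]; rw [leftpt_zero]; unfold det at *; simp only; linarith
  filter_upwards [self_mem_nhdsWithin,
    (leftpt_tendsto a b).eventually ((isOpen_half b c).mem_nhds h1),
    (leftpt_tendsto a b).eventually ((isOpen_half c a).mem_nhds h2)] with δ h3 h4 h5
  exact ⟨⟨leftpt_mem_half hab h3, h4⟩, h5⟩

theorem tri_rot (a b c : ℝ × ℝ) : tri b c a = tri a b c := by
  unfold tri; ext q; simp only [mem_inter_iff]; tauto

/-- A point collinear with `a ≠ b` is an affine combination of them. -/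
theorem collinear_param {a b q : ℝ × ℝ} (hab : a ≠ b) (h : det a b q = 0) :
    q = (1 - ((q.1 - a.1) * (b.1 - a.1) + (q.2 - a.2) * (b.2 - a.2)) /
        ((b.1 - a.1) ^ 2 + (b.2 - a.2) ^ 2)) • a +
      (((q.1 - a.1) * (b.1 - a.1) + (q.2 - a.2) * (b.2 - a.2)) /
        ((b.1 - a.1) ^ 2 + (b.2 - a.2) ^ 2)) • b := by
  have hp := sq_pos_of_ne hab
  unfold det at h
  ext
  · simp only [Prod.fst_add, Prod.smul_fst, smul_eq_mul]
    field_simp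
    linear_combination -(b.2 - a.2) * h
  · simp only [Prod.snd_add, Prod.smul_snd, smul_eq_mul]
    field_simp
    linear_combination (b.1 - a.1) * h

theorem comb_param {a b : ℝ × ℝ} (hab : a ≠ b) (t : ℝ) :
    ((((1 - t) • a + t • b).1 - a.1) * (b.1 - a.1) +
      (((1 - t) • a + t • b).2 - a.2) * (b.2 - a.2)) /
        ((b.1 - a.1) ^ 2 + (b.2 - a.2) ^ 2) = t := by
  have hp := sq_pos_of_ne hab
  rw [div_eq_iff hp.ne']
  simp only [Prod.fst_add, Prod.smul_fst, smul_eq_mul, Prod.snd_add, Prod.smul_snd]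
  ring

/-- On the line through `a` and `b`, the open segment is relatively open. -/
theorem eventually_mem_openSegment {a b p : ℝ × ℝ} (hab : a ≠ b) (hp : p ∈ openSegment ℝ a b) :
    ∀ᶠ q in 𝓝 p, det a b q = 0 → q ∈ openSegment ℝ a b := by
  let τ : ℝ × ℝ → ℝ := fun q => ((q.1 - a.1) * (b.1 - a.1) + (q.2 - a.2) * (b.2 - a.2)) /
        ((b.1 - a.1) ^ 2 + (b.2 - a.2) ^ 2)
  have hτ : Continuous τ := by fun_prop
  rw [openSegment_eq_image] at hp
  obtain ⟨t, ht, rfl⟩ := hp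
  have h0 : τ ((1 - t) • a + t • b) = t := comb_param hab t
  have := hτ.continuousAt.eventually (isOpen_Ioo.mem_nhds (h0.symm ▸ ht))
  filter_upwards [this] with q hq hd
  rw [openSegment_eq_image]
  exact ⟨τ q, hq, (collinear_param hab hd).symm⟩

/-- Of three distinct collinear points, one lies strictly between the others. -/
theorem between_of_collinear {a b c : ℝ × ℝ} (hab : a ≠ b) (hac : a ≠ c) (hbc : b ≠ c)
    (h : det a b c = 0) :
    c ∈ openSegment ℝ a b ∨ b ∈ openSegment ℝ a c ∨ a ∈ openSegment ℝ b c := by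
  have hc := collinear_param hab h
  generalize ((c.1 - a.1) * (b.1 - a.1) + (c.2 - a.2) * (b.2 - a.2)) /
        ((b.1 - a.1) ^ 2 + (b.2 - a.2) ^ 2) = t at hc
  have t0 : t ≠ 0 := by rintro rfl; apply hac; simp [hc]
  have t1 : t ≠ 1 := by rintro rfl; apply hbc; simp [hc]
  have e1 : c.1 = (1 - t) * a.1 + t * b.1 := by rw [hc]; simp
  have e2 : c.2 = (1 - t) * a.2 + t * b.2 := by rw [hc]; simp
  rcases lt_or_gt_of_ne t0 with h0 | h0
  · right; right
    have : 0 < 1 - t := by linarith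
    refine ⟨-t / (1 - t), 1 / (1 - t), by apply div_pos <;> linarith, by positivity,
      by field_simp; ring, ?_⟩
    ext <;> simp only [Prod.fst_add, Prod.snd_add, Prod.smul_fst, Prod.smul_snd, smul_eq_mul, e1, e2]
      <;> field_simp <;> ring
  · rcases lt_or_gt_of_ne t1 with h1 | h1
    · left
      exact ⟨1 - t, t, by linarith, h0, by ring, hc.symm⟩
    · right; left
      refine ⟨(t - 1) / t, 1 / t, by apply div_pos <;> linarith, by positivity,
        by field_simp; ring, ?_⟩
      ext <;> simp only [Prod.fst_add, Prod.snd_add, Prod.smul_fst, Prod.smul_snd, smul_eq_mul,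
        e1, e2] <;> field_simp <;> ring

/-! ### Faces of a straight-line drawing -/

variable {V : Type*} {G : SimpleGraph V}

theorem mem_image (E : PlaneEmbedding G) {q : ℝ × ℝ} :
    q ∈ E.imageSet ↔ (∃ v, E.pos v = q) ∨
      ∃ a b, G.Adj a b ∧ q ∈ segment ℝ (E.pos a) (E.pos b) := by
  simp [PlaneEmbedding.imageSet]

theorem segment_subset_image (E : PlaneEmbedding G) {a b : V} (h : G.Adj a b) :
    segment ℝ (E.pos a) (E.pos b) ⊆ E.imageSet :=
  fun _ hq => (mem_image E).2 (Or.inr ⟨a, b, h, hq⟩)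

theorem pos_mem_image (E : PlaneEmbedding G) (v : V) : E.pos v ∈ E.imageSet :=
  (mem_image E).2 (Or.inl ⟨v, rfl⟩)

theorem isClosed_image [Finite V] (E : PlaneEmbedding G) : IsClosed E.imageSet := by
  unfold PlaneEmbedding.imageSet
  refine (Set.finite_range _).isClosed.union ?_
  refine isClosed_iUnion_of_finite fun a => isClosed_iUnion_of_finite fun b =>
    isClosed_iUnion_of_finite fun _ => isClosed_seg _ _

theorem pos_ne (E : PlaneEmbedding G) {a b : V} (h : G.Adj a b) : E.pos a ≠ E.pos b :=
  fun e => h.ne (E.inj e)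

theorem pos_notMem_openSegment (E : PlaneEmbedding G) {a b : V} (h : G.Adj a b) (v : V) :
    E.pos v ∉ openSegment ℝ (E.pos a) (E.pos b) := by
  intro hv
  rcases E.vertex_not_in_edge_interior h v hv with rfl | rfl
  · exact pos_ne E h (left_mem_openSegment_iff.1 hv)
  · exact pos_ne E h (right_mem_openSegment_iff.1 hv)

/-- An interior point of an edge lies on no other edge. -/
theorem edge_unique (E : PlaneEmbedding G) {a b c d : V} (h : G.Adj a b) (h' : G.Adj c d)
    {p : ℝ × ℝ} (hp : p ∈ openSegment ℝ (E.pos a) (E.pos b))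
    (hp' : p ∈ segment ℝ (E.pos c) (E.pos d)) : s(a, b) = s(c, d) := by
  rcases E.edges_meet_only_at_endpoints h h' p (openSegment_subset_segment _ _ _ hp) hp' with
    e | ⟨v, -, -, rfl⟩
  · exact e
  · exact absurd hp (pos_notMem_openSegment E h v)

/-- Near an interior point of an edge, the drawing coincides with the line through that edge. -/
theorem local_edge [Finite V] (E : PlaneEmbedding G) {a b : V} (h : G.Adj a b) {p : ℝ × ℝ}
    (hp : p ∈ openSegment ℝ (E.pos a) (E.pos b)) :
    ∀ᶠ q in 𝓝 p, (q ∈ E.imageSet → det (E.pos a) (E.pos b) q = 0) ∧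
      (det (E.pos a) (E.pos b) q = 0 → q ∈ openSegment ℝ (E.pos a) (E.pos b)) := by
  have h1 : ∀ᶠ q in 𝓝 p, ∀ v, q ≠ E.pos v := by
    rw [eventually_all]
    intro v
    refine isOpen_ne.mem_nhds ?_
    rintro rfl
    exact pos_notMem_openSegment E h v hp
  have h2 : ∀ᶠ q in 𝓝 p, ∀ c d, G.Adj c d → s(a, b) ≠ s(c, d) →
      q ∉ segment ℝ (E.pos c) (E.pos d) := by
    simp only [eventually_all]
    intro c d hcd hne
    exact (isClosed_seg _ _).isOpen_compl.mem_nhds fun hq => hne (edge_unique E h hcd hp hq)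
  filter_upwards [h1, h2, eventually_mem_openSegment (pos_ne E h) hp] with q q1 q2 q3
  refine ⟨fun hq => ?_, q3⟩
  rcases (mem_image E).1 hq with ⟨v, rfl⟩ | ⟨c, d, hcd, hq⟩
  · exact absurd rfl (q1 v)
  · by_cases e : s(a, b) = s(c, d)
    · have : q ∈ segment ℝ (E.pos a) (E.pos b) := by
        rcases Sym2.eq_iff.1 e with ⟨rfl, rfl⟩ | ⟨rfl, rfl⟩
        · exact hq
        · rwa [segment_symm]
      obtain ⟨s, t, -, -, -, e⟩ := det_segment (a := E.pos a) (b := E.pos b) this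
      simpa [det_left, det_right] using e
    · exact absurd hq (q2 c d hcd e)

section Face

variable {E : PlaneEmbedding G} {F : Set (ℝ × ℝ)}

theorem face_open [Finite V] (hF : E.IsFace F) : IsOpen F := by
  obtain ⟨p, -, rfl⟩ := hF
  exact (isClosed_image E).isOpen_compl.connectedComponentIn

theorem face_preconn (hF : E.IsFace F) : IsPreconnected F := by
  obtain ⟨p, -, rfl⟩ := hF
  exact isPreconnected_connectedComponentIn

theorem face_notMem (hF : E.IsFace F) {q : ℝ × ℝ} (hq : q ∈ F) : q ∉ E.imageSet := by
  obtain ⟨p, -, rfl⟩ := hF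
  exact connectedComponentIn_subset _ _ hq

theorem face_max (hF : E.IsFace F) {S : Set (ℝ × ℝ)} (hS : IsPreconnected S)
    (hSi : S ⊆ E.imageSetᶜ) {q : ℝ × ℝ} (hq : q ∈ F) (hqS : q ∈ S) : S ⊆ F := by
  obtain ⟨p, -, rfl⟩ := hF
  rw [connectedComponentIn_eq hq]
  exact hS.subset_connectedComponentIn hqS hSi

theorem face_unique {F' : Set (ℝ × ℝ)} (hF : E.IsFace F) (hF' : E.IsFace F') {q : ℝ × ℝ}
    (hq : q ∈ F) (hq' : q ∈ F') : F = F' :=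
  Subset.antisymm
    (face_max hF' (face_preconn hF) (fun _ h => face_notMem hF h) hq' hq)
    (face_max hF (face_preconn hF') (fun _ h => face_notMem hF' h) hq hq')

theorem face_exists {q : ℝ × ℝ} (hq : q ∉ E.imageSet) : ∃ F, E.IsFace F ∧ q ∈ F :=
  ⟨_, ⟨q, hq, rfl⟩, mem_connectedComponentIn hq⟩

theorem frontier_face [Finite V] (hF : E.IsFace F) : frontier F ⊆ E.imageSet := by
  intro q hq
  by_contra hqi
  obtain ⟨F', hF', hqF'⟩ := face_exists hqi
  obtain ⟨x, hx', hx⟩ := mem_closure_iff.1 hq.1 F' (face_open hF') hqF'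
  rw [face_unique hF hF' hx hx', (face_open hF').frontier_eq] at hq
  exact hq.2 hqF'

theorem mem_frontier_of_image [Finite V] (hF : E.IsFace F) {q : ℝ × ℝ} (hq : q ∈ closure F)
    (hi : q ∈ E.imageSet) : q ∈ frontier F := by
  rw [(face_open hF).frontier_eq]
  exact ⟨hq, fun h => face_notMem hF h hi⟩

/-- A point on the line through `a` and `b` is a limit of points on the left of the line. -/
theorem mem_closure_half {a b q : ℝ × ℝ} (hab : a ≠ b) (hq : det a b q = 0) {U : Set (ℝ × ℝ)}
    (hU : U ∈ 𝓝 q) : q ∈ closure (U ∩ half a b) := by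
  let f : ℝ → ℝ × ℝ := fun δ => q + (-(δ * (b.2 - a.2)), δ * (b.1 - a.1))
  have hf : Continuous f := by fun_prop
  have h0 : f 0 = q := by ext <;> simp [f]
  have ht : Tendsto f (𝓝[>] 0) (𝓝 q) := by
    have := hf.continuousAt (x := 0)
    rw [ContinuousAt, h0] at this
    exact this.mono_left nhdsWithin_le_nhds
  refine mem_closure_of_tendsto ht ?_
  filter_upwards [ht hU, self_mem_nhdsWithin] with δ h1 h2
  refine ⟨h1, ?_⟩
  have h2 : 0 < δ := h2
  have := sq_pos_of_ne hab
  rw [mem_half, det_add, hq]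
  simp only
  nlinarith

/-- If the closure of a face contains an interior point of an edge, it contains all points of that
edge close to it: locally, the face contains a whole side of the edge. -/
theorem closure_face_local [Finite V] (hF : E.IsFace F) {a b : V} (h : G.Adj a b) {p : ℝ × ℝ}
    (hp : p ∈ openSegment ℝ (E.pos a) (E.pos b)) (hpF : p ∈ closure F) :
    ∀ᶠ q in 𝓝 p, det (E.pos a) (E.pos b) q = 0 → q ∈ closure F := by
  obtain ⟨ε, hε, hb⟩ := Metric.eventually_nhds_iff_ball.1 (local_edge E h hp)
  obtain ⟨x, hx, hxF⟩ := mem_closure_iff.1 hpF _ Metric.isOpen_ball (Metric.mem_ball_self hε)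
  -- the face contains whichever half of the ball it meets, and the line bounds both halves
  have key : ∀ u v : ℝ × ℝ, u ≠ v →
      (∀ q, det u v q = 0 ↔ det (E.pos a) (E.pos b) q = 0) → x ∈ half u v →
      ∀ q ∈ Metric.ball p ε, det (E.pos a) (E.pos b) q = 0 → q ∈ closure F := by
    intro u v huv hz hxu q hq hd
    have hsub : Metric.ball p ε ∩ half u v ⊆ F := by
      refine face_max hF ((convex_ball p ε).inter (convex_half u v)).isPreconnected ?_ hxF ⟨hx, hxu⟩
      rintro y ⟨hy, hy'⟩ hyi
      have := (hz y).2 ((hb y hy).1 hyi)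
      rw [mem_half] at hy'
      linarith
    exact closure_mono hsub
      (mem_closure_half huv ((hz q).2 hd) (Metric.isOpen_ball.mem_nhds hq))
  refine Metric.eventually_nhds_iff_ball.2 ⟨ε, hε, ?_⟩
  rcases lt_trichotomy (det (E.pos a) (E.pos b) x) 0 with hn | hz | hpos
  · refine key (E.pos b) (E.pos a) (pos_ne E h).symm (fun q => ?_) ?_
    · rw [det_swap, neg_eq_zero]
    · rw [mem_half, det_swap]; linarith
  · exact absurd (segment_subset_image E h (openSegment_subset_segment _ _ _ ((hb x hx).2 hz)))
      (face_notMem hF hxF)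
  · exact key (E.pos a) (E.pos b) (pos_ne E h) (fun q => Iff.rfl) hpos

/-- A face whose closure meets the interior of an edge has the entire edge on its frontier. -/
theorem edge_frontier [Finite V] (hF : E.IsFace F) {a b : V} (h : G.Adj a b) {p : ℝ × ℝ}
    (hp : p ∈ openSegment ℝ (E.pos a) (E.pos b)) (hpF : p ∈ closure F) :
    a ∈ E.boundaryVerts F ∧ b ∈ E.boundaryVerts F := by
  let f : ℝ → ℝ × ℝ := fun t => (1 - t) • E.pos a + t • E.pos b
  have hf : Continuous f := by fun_prop
  have hseg : ∀ t ∈ Ioo (0 : ℝ) 1, f t ∈ openSegment ℝ (E.pos a) (E.pos b) := fun t ht => by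
    rw [openSegment_eq_image]; exact ⟨t, ht, rfl⟩
  have hdet : ∀ t, det (E.pos a) (E.pos b) (f t) = 0 := fun t => by
    rw [det_comb _ _ _ _ _ _ (by ring), det_left, det_right]; ring
  have hsub : Ioo (0 : ℝ) 1 ⊆ interior (f ⁻¹' closure F) := by
    refine isPreconnected_Ioo.subset_of_closure_inter_subset isOpen_interior ?_ ?_
    · rw [openSegment_eq_image] at hp
      obtain ⟨t, ht, rfl⟩ := hp
      refine ⟨t, ht, mem_interior_iff_mem_nhds.2 ?_⟩
      filter_upwards [hf.continuousAt.eventually (closure_face_local hF h (hseg t ht) hpF)]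
        with u hu using hu (hdet u)
    · rintro t ⟨ht, ht1⟩
      have hc : f t ∈ closure F := by
        have := closure_mono interior_subset ht
        rwa [(isClosed_closure.preimage hf).closure_eq] at this
      refine mem_interior_iff_mem_nhds.2 ?_
      filter_upwards [hf.continuousAt.eventually (closure_face_local hF h (hseg t ht1) hc)]
        with u hu using hu (hdet u)
  have hcl : Icc (0 : ℝ) 1 ⊆ f ⁻¹' closure F := by
    rw [← closure_Ioo (zero_ne_one' ℝ)]
    exact closure_minimal (hsub.trans interior_subset) (isClosed_closure.preimage hf)
  constructor
  · have := hcl (left_mem_Icc.2 zero_le_one)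
    simp only [mem_preimage, f] at this
    exact mem_frontier_of_image hF (by simpa using this) (pos_mem_image E a)
  · have := hcl (right_mem_Icc.2 zero_le_one)
    simp only [mem_preimage, f] at this
    exact mem_frontier_of_image hF (by simpa using this) (pos_mem_image E b)

/-- A face whose boundary vertices form a triangle has its frontier on that triangle. -/
theorem frontier_subset_bd [Finite V] (hF : E.IsFace F) {a b c : V}
    (hv : E.boundaryVerts F = {a, b, c}) :
    frontier F ⊆ bd (E.pos a) (E.pos b) (E.pos c) := by
  have vert : ∀ v ∈ E.boundaryVerts F, v = a ∨ v = b ∨ v = c := fun v h => by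
    rw [hv] at h; simpa using h
  have hpos : ∀ v ∈ E.boundaryVerts F, E.pos v ∈ bd (E.pos a) (E.pos b) (E.pos c) := by
    intro v h
    rcases vert v h with rfl | rfl | rfl
    · exact Or.inl (Or.inl (left_mem_segment _ _ _))
    · exact Or.inl (Or.inl (right_mem_segment _ _ _))
    · exact Or.inr (left_mem_segment _ _ _)
  intro q hq
  rcases (mem_image E).1 (frontier_face hF hq) with ⟨v, rfl⟩ | ⟨x, y, hxy, hs⟩
  · exact hpos v hq
  · by_cases hqo : q ∈ openSegment ℝ (E.pos x) (E.pos y)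
    · obtain ⟨hx, hy⟩ := edge_frontier hF hxy hqo hq.1
      have hs' : q ∈ segment ℝ (E.pos y) (E.pos x) := by rwa [segment_symm]
      have hne := hxy.ne
      unfold bd
      rcases vert x hx with rfl | rfl | rfl <;> rcases vert y hy with rfl | rfl | rfl <;>
        simp_all
    · rw [← insert_endpoints_openSegment] at hs
      rcases hs with rfl | rfl | hs
      · exact hpos x hq
      · exact hpos y hq
      · exact absurd hs hqo

/-- A connected set disjoint from the triangle that carries the frontier of a face is contained in
that face as soon as it meets it. -/
theorem subset_face [Finite V] (hF : E.IsFace F) {a b c : V}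
    (hv : E.boundaryVerts F = {a, b, c}) {S : Set (ℝ × ℝ)} (hS : IsPreconnected S)
    (hd : Disjoint S (bd (E.pos a) (E.pos b) (E.pos c))) (hne : (S ∩ F).Nonempty) : S ⊆ F := by
  refine hS.subset_of_closure_inter_subset (face_open hF) hne ?_
  rintro q ⟨hq, hqS⟩
  by_contra hqF
  refine Set.disjoint_left.1 hd hqS (frontier_subset_bd hF hv ?_)
  rw [(face_open hF).frontier_eq]
  exact ⟨hq, hqF⟩

end Face

/-- `F` is the face on the left of the directed edge `a b`: it contains all points that are
slightly to the left of the midpoint. -/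
def IsLeft (E : PlaneEmbedding G) (a b : V) (F : Set (ℝ × ℝ)) : Prop :=
  E.IsFace F ∧ ∀ᶠ δ in 𝓝[>] (0 : ℝ), leftpt (E.pos a) (E.pos b) δ ∈ F

theorem IsLeft.unique {E : PlaneEmbedding G} {a b : V} {F F' : Set (ℝ × ℝ)} (h : IsLeft E a b F)
    (h' : IsLeft E a b F') : F = F' := by
  obtain ⟨δ, h1, h2⟩ := (h.2.and h'.2).exists
  exact face_unique h.1 h'.1 h1 h2

theorem IsLeft.exists [Finite V] (E : PlaneEmbedding G) {a b : V} (h : G.Adj a b) :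
    ∃ F, IsLeft E a b F := by
  have hab := pos_ne E h
  obtain ⟨ε, hε, hb⟩ := Metric.eventually_nhds_iff_ball.1 (local_edge E h (mid_mem _ _))
  set m := leftpt (E.pos a) (E.pos b) 0
  have hev : ∀ᶠ δ in 𝓝[>] (0 : ℝ),
      leftpt (E.pos a) (E.pos b) δ ∈ Metric.ball m ε ∩ half (E.pos a) (E.pos b) := by
    filter_upwards [leftpt_tendsto (E.pos a) (E.pos b) (Metric.ball_mem_nhds _ hε),
      self_mem_nhdsWithin] with δ h1 h2 using ⟨h1, leftpt_mem_half hab h2⟩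
  have hS : Metric.ball m ε ∩ half (E.pos a) (E.pos b) ⊆ E.imageSetᶜ := by
    rintro y ⟨hy, hy'⟩ hyi
    have := (hb y hy).1 hyi
    rw [mem_half] at hy'
    linarith
  obtain ⟨δ, hδ⟩ := hev.exists
  obtain ⟨F, hF, hδF⟩ := face_exists (hS hδ)
  have := face_max hF ((convex_ball m ε).inter (convex_half _ _)).isPreconnected hS hδF hδ
  exact ⟨F, hF, hev.mono fun _ h => this h⟩

theorem IsLeft.boundary [Finite V] {E : PlaneEmbedding G} {a b : V} (h : G.Adj a b)
    {F : Set (ℝ × ℝ)} (hF : IsLeft E a b F) : a ∈ E.boundaryVerts F ∧ b ∈ E.boundaryVerts F :=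
  edge_frontier hF.1 h (mid_mem _ _) (mem_closure_of_tendsto (leftpt_tendsto _ _) hF.2)

theorem det_ne_zero (E : PlaneEmbedding G) {a b c : V} (hab : G.Adj a b) (hbc : G.Adj b c)
    (hac : G.Adj a c) : det (E.pos a) (E.pos b) (E.pos c) ≠ 0 := by
  intro h
  rcases between_of_collinear (pos_ne E hab) (pos_ne E hac) (pos_ne E hbc) h with h | h | h
  · exact pos_notMem_openSegment E hab _ h
  · exact pos_notMem_openSegment E hac _ h
  · exact pos_notMem_openSegment E hbc _ h

/-- The left face of an edge of a triangulation has a triangle `a b c` as its boundary, and is also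
the left face of `b c` and of `c a`. It contains the interior of the triangle if the triangle is
counterclockwise, and the half-plane beyond the side `a b` if it is clockwise. -/
theorem left_face_triangle [Finite V] (E : PlaneEmbedding G) (htri : E.IsTriangulation) {a b : V}
    (h : G.Adj a b) {F : Set (ℝ × ℝ)} (hF : IsLeft E a b F) :
    ∃ c, G.Adj b c ∧ G.Adj a c ∧ E.boundaryVerts F = {a, b, c} ∧ IsLeft E b c F ∧
      IsLeft E c a F ∧
      (det (E.pos a) (E.pos b) (E.pos c) < 0 → half (E.pos a) (E.pos b) ⊆ F) ∧
      (0 < det (E.pos a) (E.pos b) (E.pos c) → tri (E.pos a) (E.pos b) (E.pos c) ⊆ F) := by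
  obtain ⟨c, hbc, hac, hv⟩ : ∃ c, G.Adj b c ∧ G.Adj a c ∧ E.boundaryVerts F = {a, b, c} := by
    obtain ⟨x, y, z, hxy, hyz, hxz, hv⟩ := htri F hF.1
    obtain ⟨ha, hb⟩ := hF.boundary h
    have hne := h.ne
    rw [hv] at ha hb ⊢
    simp only [mem_insert_iff, mem_singleton_iff] at ha hb
    rcases ha with rfl | rfl | rfl <;> rcases hb with rfl | rfl | rfl
    · exact absurd rfl hne
    · exact ⟨z, hyz, hxz, rfl⟩
    · exact ⟨y, hyz.symm, hxy, by ext; simp; tauto⟩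
    · exact ⟨z, hxz, hyz, by ext; simp; tauto⟩
    · exact absurd rfl hne
    · exact ⟨x, hxz.symm, hxy.symm, by ext; simp; tauto⟩
    · exact ⟨y, hxy, hyz.symm, by ext; simp; tauto⟩
    · exact ⟨x, hxy.symm, hxz.symm, by ext; simp; tauto⟩
    · exact absurd rfl hne
  have hd := det_ne_zero E h hbc hac
  have hab := pos_ne E h
  have hbc' := pos_ne E hbc
  have hca' := (pos_ne E hac).symm
  refine ⟨c, hbc, hac, hv, ?_⟩
  rcases lt_or_gt_of_ne hd with hneg | hpos
  · have hneg2 : det (E.pos b) (E.pos c) (E.pos a) < 0 := by rwa [det_rot]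
    have hneg3 : det (E.pos c) (E.pos a) (E.pos b) < 0 := by rwa [det_rot]
    have mem : ∀ {u w : ℝ × ℝ}, u ≠ w → ∀ᶠ δ in 𝓝[>] (0 : ℝ), leftpt u w δ ∈ half u w :=
      fun hne => by
        filter_upwards [self_mem_nhdsWithin] with δ hδ using leftpt_mem_half hne hδ
    have h1 : half (E.pos a) (E.pos b) ⊆ F := by
      obtain ⟨δ, h1, h2⟩ := ((mem hab).and hF.2).exists
      exact subset_face hF.1 hv (convex_half _ _).isPreconnected (half_disjoint_bd hneg.le)
        ⟨_, h1, h2⟩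
    have h2 : half (E.pos b) (E.pos c) ⊆ F := by
      obtain ⟨q, q1, q2⟩ := half_inter_half hneg
      refine subset_face hF.1 hv (convex_half _ _).isPreconnected ?_ ⟨q, q2, h1 q1⟩
      rw [← bd_rot]
      exact half_disjoint_bd hneg2.le
    have h3 : half (E.pos c) (E.pos a) ⊆ F := by
      obtain ⟨q, q1, q2⟩ := half_inter_half hneg2
      refine subset_face hF.1 hv (convex_half _ _).isPreconnected ?_ ⟨q, q2, h2 q1⟩
      rw [← bd_rot, ← bd_rot]
      exact half_disjoint_bd hneg3.le
    exact ⟨⟨hF.1, (mem hbc').mono fun _ h => h2 h⟩, ⟨hF.1, (mem hca').mono fun _ h => h3 h⟩,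
      fun _ => h1, fun h => absurd h hneg.not_gt⟩
  · have hpos2 : 0 < det (E.pos b) (E.pos c) (E.pos a) := by rwa [det_rot]
    have hpos3 : 0 < det (E.pos c) (E.pos a) (E.pos b) := by rwa [det_rot]
    have h1 : tri (E.pos a) (E.pos b) (E.pos c) ⊆ F := by
      obtain ⟨δ, h1, h2⟩ := ((leftpt_eventually_tri hpos).and hF.2).exists
      exact subset_face hF.1 hv (((convex_half _ _).inter (convex_half _ _)).inter
        (convex_half _ _)).isPreconnected (tri_disjoint_bd _ _ _) ⟨_, h1, h2⟩
    refine ⟨⟨hF.1, ?_⟩, ⟨hF.1, ?_⟩, fun h => absurd h hpos.not_gt, fun _ => h1⟩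
    · filter_upwards [leftpt_eventually_tri hpos2] with δ hδ
      rw [tri_rot] at hδ
      exact h1 hδ
    · filter_upwards [leftpt_eventually_tri hpos3] with δ hδ
      rw [tri_rot, tri_rot] at hδ
      exact h1 hδ

/-- The third vertex `t a b` of the face on the left of `a b`, as a function. Going around the face,
`(a, b) ↦ (b, t a b)` has order three on directed edges. -/
theorem exists_third [Finite V] (E : PlaneEmbedding G) (htri : E.IsTriangulation) :
    ∃ t : V → V → V, ∀ a b, G.Adj a b →
      G.Adj b (t a b) ∧ G.Adj a (t a b) ∧ t b (t a b) = a ∧ t (t a b) a = b ∧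
      ∃ F, IsLeft E a b F ∧ IsLeft E b (t a b) F ∧
        (det (E.pos a) (E.pos b) (E.pos (t a b)) < 0 → half (E.pos a) (E.pos b) ⊆ F) ∧
        (0 < det (E.pos a) (E.pos b) (E.pos (t a b)) →
          tri (E.pos a) (E.pos b) (E.pos (t a b)) ⊆ F) := by
  choose! L hL using fun (a b : V) (h : G.Adj a b) => IsLeft.exists E h
  choose! t h1 h2 h3 h4 h5 h6 using
    fun (a b : V) (h : G.Adj a b) => left_face_triangle E htri h (hL a b h)
  refine ⟨t, fun a b h => ?_⟩
  have hb := h3 a b h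
  have fresh : ∀ c, c ∈ E.boundaryVerts (L a b) → c ≠ b → c ≠ t a b → c = a := fun c hc n1 n2 => by
    rw [hb] at hc
    simp only [mem_insert_iff, mem_singleton_iff] at hc
    tauto
  have fresh' : ∀ c, c ∈ E.boundaryVerts (L a b) → c ≠ a → c ≠ t a b → c = b := fun c hc n1 n2 => by
    rw [hb] at hc
    simp only [mem_insert_iff, mem_singleton_iff] at hc
    tauto
  refine ⟨h1 a b h, h2 a b h, ?_, ?_, L a b, hL a b h, h4 a b h, h6 a b h⟩
  · have hbc := h1 a b h
    have e : L b (t a b) = L a b := (hL _ _ hbc).unique (h4 a b h)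
    have hb2 := h3 _ _ hbc
    rw [e] at hb2
    exact fresh _ (by rw [hb2]; simp) (h2 _ _ hbc).ne' (h1 _ _ hbc).ne'
  · have hca := (h2 a b h).symm
    have e : L (t a b) a = L a b := (hL _ _ hca).unique (h5 a b h)
    have hb2 := h3 _ _ hca
    rw [e] at hb2
    exact fresh' _ (by rw [hb2]; simp) (h1 _ _ hca).ne' (h2 _ _ hca).ne.symm

/-! ### A 3-colorable triangulation is even -/

/-- The map `u ↦ t v u` exchanges the two color classes of neighbors of `v`, injectively, so the
classes have the same size. -/
theorem even_of_colorable [Fintype V] (t : V → V → V)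
    (ht : ∀ a b, G.Adj a b →
      G.Adj b (t a b) ∧ G.Adj a (t a b) ∧ t b (t a b) = a ∧ t (t a b) a = b)
    (hc : G.Colorable 3) (v : V) : Even (G.neighborSet v).ncard := by
  classical
  obtain ⟨C⟩ := hc
  have hcol : ∀ i j, i ≠ j → i ≠ C v → j ≠ C v →
      (Finset.univ.filter fun u => G.Adj v u ∧ C u = i).card ≤
        (Finset.univ.filter fun u => G.Adj v u ∧ C u = j).card := by
    intro i j hij hi hj
    refine Finset.card_le_card_of_injOn (t v) ?_ ?_
    · intro u hu
      simp only [Finset.coe_filter, Finset.mem_univ, true_and, mem_ofPred_eq] at hu ⊢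
      obtain ⟨h1, h2, -⟩ := ht v u hu.1
      refine ⟨h2, ?_⟩
      have n1 := C.valid h1
      have n2 := C.valid h2
      rw [hu.2] at n1
      omega
    · intro u hu u' hu' e
      simp only [Finset.coe_filter, Finset.mem_univ, true_and, mem_ofPred_eq] at hu hu'
      rw [← (ht v u hu.1).2.2.2, ← (ht v u' hu'.1).2.2.2, e]
  obtain ⟨i, j, hij, hi, hj, hall⟩ : ∃ i j : Fin 3, i ≠ j ∧ i ≠ C v ∧ j ≠ C v ∧
      ∀ k, k ≠ C v → k = i ∨ k = j := by
    generalize C v = k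
    revert k; decide
  have e : G.neighborSet v = ↑((Finset.univ.filter fun u => G.Adj v u ∧ C u = i) ∪
      (Finset.univ.filter fun u => G.Adj v u ∧ C u = j)) := by
    ext u
    simp only [SimpleGraph.mem_neighborSet, Finset.coe_union, Finset.coe_filter, Finset.mem_univ,
      true_and, mem_union, mem_ofPred_eq]
    constructor
    · intro h
      rcases hall _ (C.valid h).symm with h' | h'
      · exact Or.inl ⟨h, h'⟩
      · exact Or.inr ⟨h, h'⟩
    · rintro (h | h) <;> exact h.1
  rw [e, ncard_coe_finset, Finset.card_union_of_disjoint, le_antisymm (hcol i j hij hi hj)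
    (hcol j i hij.symm hj hi)]
  · exact ⟨_, rfl⟩
  · rw [Finset.disjoint_filter]
    rintro u - ⟨-, h1⟩ ⟨-, h2⟩
    exact hij (h1.symm.trans h2)

/-! ### The parity of the number of edges above a point -/

/-- The sweep coordinate, a perturbation of the first coordinate. -/
noncomputable def lam (ε : ℝ) (p : ℝ × ℝ) : ℝ := p.1 + ε * p.2

theorem continuous_lam (ε : ℝ) : Continuous (lam ε) := by unfold lam; fun_prop

theorem det_lam (ε : ℝ) (a b q : ℝ × ℝ) :
    det a b q = (lam ε b - lam ε a) * (q.2 - a.2) - (b.2 - a.2) * (lam ε q - lam ε a) := by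
  unfold det lam; ring

theorem lam_comb (ε s t : ℝ) (x y : ℝ × ℝ) :
    lam ε (s • x + t • y) = s * lam ε x + t * lam ε y := by
  simp only [lam, Prod.fst_add, Prod.smul_fst, smul_eq_mul, Prod.snd_add, Prod.smul_snd]; ring

/-- A generic sweep direction separates all vertices. -/
theorem exists_generic [Finite V] (E : PlaneEmbedding G) :
    ∃ ε : ℝ, Function.Injective fun v => lam ε (E.pos v) := by
  have hfin : (Set.range fun p : V × V =>
      -((E.pos p.1).1 - (E.pos p.2).1) / ((E.pos p.1).2 - (E.pos p.2).2)).Finite :=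
    Set.finite_range _
  obtain ⟨ε, hε⟩ := hfin.exists_notMem
  refine ⟨ε, fun u v h => ?_⟩
  simp only [lam] at h
  by_cases h2 : (E.pos u).2 = (E.pos v).2
  · rw [h2] at h
    exact E.inj (Prod.ext (by linarith) h2)
  · refine absurd ⟨(u, v), ?_⟩ hε
    have : (E.pos u).2 - (E.pos v).2 ≠ 0 := sub_ne_zero.2 h2
    simp only
    rw [div_eq_iff this]
    linarith

theorem mem_openSegment_of_lam {ε : ℝ} {a b q : ℝ × ℝ} (h : det a b q = 0)
    (h1 : lam ε a < lam ε q) (h2 : lam ε q < lam ε b) : q ∈ openSegment ℝ a b := by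
  have hab : a ≠ b := by rintro rfl; linarith
  have hq := collinear_param hab h
  generalize ((q.1 - a.1) * (b.1 - a.1) + (q.2 - a.2) * (b.2 - a.2)) /
        ((b.1 - a.1) ^ 2 + (b.2 - a.2) ^ 2) = t at hq
  rw [hq, lam_comb] at h1 h2
  exact ⟨1 - t, t, by nlinarith, by nlinarith, by ring, hq.symm⟩

section Parity

open Classical in
/-- The edges, each listed once, from its endpoint of smaller sweep coordinate to the other. -/
noncomputable def edges [Fintype V] (E : PlaneEmbedding G) (ε : ℝ) : Finset (V × V) :=
  Finset.univ.filter fun e => G.Adj e.1 e.2 ∧ lam ε (E.pos e.1) < lam ε (E.pos e.2)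

open Classical in
/-- The indicator, modulo 2, of the edge `e` passing strictly above `q`. The interval of sweep
coordinates spanned by `e` is half-open. -/
noncomputable def ind (E : PlaneEmbedding G) (ε : ℝ) (e : V × V) (q : ℝ × ℝ) : ZMod 2 :=
  if lam ε (E.pos e.1) ≤ lam ε q ∧ lam ε q < lam ε (E.pos e.2) ∧
    det (E.pos e.1) (E.pos e.2) q < 0 then 1 else 0

theorem mem_edges [Fintype V] {E : PlaneEmbedding G} {ε : ℝ} {e : V × V} :
    e ∈ edges E ε ↔ G.Adj e.1 e.2 ∧ lam ε (E.pos e.1) < lam ε (E.pos e.2) := by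
  simp [edges]

/-- The indicator of an edge is locally constant at `p` unless the edge passes through `p` or has an
endpoint with the sweep coordinate of `p`. -/
theorem ind_stable (E : PlaneEmbedding G) {ε : ℝ} {e : V × V} {p : ℝ × ℝ}
    (hp : p ∉ segment ℝ (E.pos e.1) (E.pos e.2)) (h1 : lam ε (E.pos e.1) ≠ lam ε p)
    (h2 : lam ε (E.pos e.2) ≠ lam ε p) : ∀ᶠ q in 𝓝 p, ind E ε e q = ind E ε e p := by
  have hl := (continuous_lam ε).continuousAt (x := p)
  rcases lt_or_gt_of_ne h1 with h1 | h1
  · rcases lt_or_gt_of_ne h2 with h2 | h2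
    · filter_upwards [hl.eventually (lt_mem_nhds h2)] with q hq
      rw [ind, ind, if_neg (fun h => h.2.1.not_gt hq), if_neg (fun h => h.2.1.not_gt h2)]
    · have hd : det (E.pos e.1) (E.pos e.2) p ≠ 0 := fun h =>
        hp (openSegment_subset_segment _ _ _ (mem_openSegment_of_lam h h1 h2))
      have hc := (continuous_det (E.pos e.1) (E.pos e.2)).continuousAt (x := p)
      rcases lt_or_gt_of_ne hd with hd | hd
      · filter_upwards [hl.eventually (lt_mem_nhds h1), hl.eventually (gt_mem_nhds h2),
          hc.eventually (gt_mem_nhds hd)] with q q1 q2 q3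
        rw [ind, ind, if_pos ⟨q1.le, q2, q3⟩, if_pos ⟨h1.le, h2, hd⟩]
      · filter_upwards [hc.eventually (lt_mem_nhds hd)] with q q3
        rw [ind, ind, if_neg (fun h => h.2.2.not_gt q3), if_neg (fun h => h.2.2.not_gt hd)]
  · filter_upwards [hl.eventually (gt_mem_nhds h1)] with q hq
    rw [ind, ind, if_neg (fun h => h.1.not_gt hq), if_neg (fun h => h.1.not_gt h1)]

variable [Fintype V]

open Classical in
/-- At a vertex of even degree, as many edges end as start, modulo 2. -/
theorem card_edges_at (E : PlaneEmbedding G) {ε : ℝ}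
    (hinj : Function.Injective fun v => lam ε (E.pos v))
    {v : V} (hev : Even (G.neighborSet v).ncard) :
    (((edges E ε).filter fun e => e.2 = v).card : ZMod 2) =
      ((edges E ε).filter fun e => e.1 = v).card := by
  have h1 : ((edges E ε).filter fun e => e.1 = v).card =
      (Finset.univ.filter fun u => G.Adj v u ∧ lam ε (E.pos v) < lam ε (E.pos u)).card := by
    refine Finset.card_nbij' Prod.snd (fun u => (v, u)) ?_ ?_ ?_ ?_
    · rintro ⟨a, b⟩ h
      simp only [Finset.mem_coe, Finset.mem_filter, mem_edges] at h
      obtain ⟨h, rfl⟩ := h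
      simpa using h
    · intro u h
      simpa [mem_edges] using h
    · rintro ⟨a, b⟩ h
      simp only [Finset.mem_coe, Finset.mem_filter, mem_edges] at h
      obtain ⟨h, rfl⟩ := h
      rfl
    · intro u h; rfl
  have h2 : ((edges E ε).filter fun e => e.2 = v).card =
      (Finset.univ.filter fun u => G.Adj v u ∧ lam ε (E.pos u) < lam ε (E.pos v)).card := by
    refine Finset.card_nbij' Prod.fst (fun u => (u, v)) ?_ ?_ ?_ ?_
    · rintro ⟨a, b⟩ h
      simp only [Finset.mem_coe, Finset.mem_filter, mem_edges] at h
      obtain ⟨h, rfl⟩ := h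
      simpa [G.adj_comm] using h
    · intro u h
      simpa [mem_edges, G.adj_comm] using h
    · rintro ⟨a, b⟩ h
      simp only [Finset.mem_coe, Finset.mem_filter, mem_edges] at h
      obtain ⟨h, rfl⟩ := h
      rfl
    · intro u h; rfl
  have h3 : (G.neighborSet v).ncard =
      (Finset.univ.filter fun u => G.Adj v u ∧ lam ε (E.pos u) < lam ε (E.pos v)).card +
      (Finset.univ.filter fun u => G.Adj v u ∧ lam ε (E.pos v) < lam ε (E.pos u)).card := by
    rw [← Finset.card_union_of_disjoint, ← ncard_coe_finset]
    · congr 1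
      ext u
      simp only [SimpleGraph.mem_neighborSet, Finset.coe_union, Finset.coe_filter, Finset.mem_univ,
        true_and, mem_union, mem_ofPred_eq]
      constructor
      · intro h
        rcases lt_or_gt_of_ne (fun e => h.ne (hinj e) :
          lam ε (E.pos v) ≠ lam ε (E.pos u)) with h' | h'
        · exact Or.inr ⟨h, h'⟩
        · exact Or.inl ⟨h, h'⟩
      · rintro (h | h) <;> exact h.1
    · rw [Finset.disjoint_filter]
      rintro u - ⟨-, h1⟩ ⟨-, h2⟩
      exact h1.not_gt h2
  rw [h3, ← h2, ← h1, ← ZMod.natCast_eq_zero_iff_even, Nat.cast_add] at hev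
  rw [← sub_eq_zero, CharTwo.sub_eq_add]
  exact hev

open Classical in
/-- The total contribution of the edges at a vertex `v` with the same sweep coordinate as `p` is
locally constant at `p`: passing `v` replaces the edges that end at `v` by those that start at `v`,
and the degree of `v` is even. -/
theorem sum_at_vertex (E : PlaneEmbedding G) {ε : ℝ}
    (hinj : Function.Injective fun v => lam ε (E.pos v))
    {v : V} (hev : Even (G.neighborSet v).ncard) {p : ℝ × ℝ} (hpv : p ≠ E.pos v)
    (hl : lam ε (E.pos v) = lam ε p) :
    ∃ c : ZMod 2, ∀ᶠ q in 𝓝 p,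
      ∑ e ∈ (edges E ε).filter (fun e => e.1 = v ∨ e.2 = v), ind E ε e q = c := by
  have hne : p.2 ≠ (E.pos v).2 := by
    intro h
    refine hpv (Prod.ext ?_ h)
    simp only [lam, h] at hl
    linarith
  have hlc := (continuous_lam ε).continuousAt (x := p)
  have d1 : ∀ e ∈ edges E ε, e.1 = v → det (E.pos e.1) (E.pos e.2) p =
      (lam ε (E.pos e.2) - lam ε (E.pos e.1)) * (p.2 - (E.pos v).2) := by
    rintro e he rfl
    rw [det_lam ε, hl]; ring
  have d2 : ∀ e ∈ edges E ε, e.2 = v → det (E.pos e.1) (E.pos e.2) p =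
      (lam ε (E.pos e.2) - lam ε (E.pos e.1)) * (p.2 - (E.pos v).2) := by
    rintro e he rfl
    rw [det_lam ε, hl]; ring
  have split : ∀ q, ∑ e ∈ (edges E ε).filter (fun e => e.1 = v ∨ e.2 = v), ind E ε e q =
      ∑ e ∈ (edges E ε).filter (fun e => e.1 = v), ind E ε e q +
      ∑ e ∈ (edges E ε).filter (fun e => e.2 = v), ind E ε e q := by
    intro q
    rw [Finset.filter_or, Finset.sum_union]
    rw [Finset.disjoint_filter]
    intro e he h1 h2
    exact (mem_edges.1 he).1.ne (h1.trans h2.symm)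
  rcases lt_or_gt_of_ne hne with hU | hU
  · refine ⟨((edges E ε).filter fun e => e.1 = v).card, ?_⟩
    have h1 : ∀ᶠ q in 𝓝 p, ∀ e ∈ edges E ε, (e.1 = v ∨ e.2 = v) →
        det (E.pos e.1) (E.pos e.2) q < 0 := by
      rw [Finset.eventually_all]
      intro e he
      rw [eventually_imp_distrib_left]
      intro hev'
      refine (continuous_det _ _).continuousAt.eventually (gt_mem_nhds ?_)
      have := (mem_edges.1 he).2
      rcases hev' with h | h
      · rw [d1 e he h]; nlinarith
      · rw [d2 e he h]; nlinarith
    have h2 : ∀ᶠ q in 𝓝 p, ∀ e ∈ edges E ε, (e.1 = v → lam ε q < lam ε (E.pos e.2)) ∧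
        (e.2 = v → lam ε (E.pos e.1) < lam ε q) := by
      rw [Finset.eventually_all]
      intro e he
      have := (mem_edges.1 he).2
      rw [eventually_and, eventually_imp_distrib_left, eventually_imp_distrib_left]
      constructor
      · rintro rfl; exact hlc.eventually (gt_mem_nhds (hl ▸ this))
      · rintro rfl; exact hlc.eventually (lt_mem_nhds (hl ▸ this))
    filter_upwards [h1, h2] with q q1 q2
    rw [split]
    rcases le_or_gt (lam ε (E.pos v)) (lam ε q) with hq | hq
    · rw [Finset.sum_eq_card_nsmul (b := 1), Finset.sum_eq_zero]
      · simp
      · intro e he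
        obtain ⟨he', rfl⟩ := Finset.mem_filter.1 he
        exact if_neg fun h => h.2.1.not_ge hq
      · intro e he
        obtain ⟨he', rfl⟩ := Finset.mem_filter.1 he
        exact if_pos ⟨hq, (q2 e he').1 rfl, q1 e he' (Or.inl rfl)⟩
    · rw [Finset.sum_eq_zero, Finset.sum_eq_card_nsmul (b := 1)]
      · simpa using card_edges_at E hinj hev
      · intro e he
        obtain ⟨he', rfl⟩ := Finset.mem_filter.1 he
        exact if_pos ⟨((q2 e he').2 rfl).le, hq, q1 e he' (Or.inr rfl)⟩
      · intro e he
        obtain ⟨he', rfl⟩ := Finset.mem_filter.1 he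
        exact if_neg fun h => h.1.not_gt hq
  · refine ⟨0, ?_⟩
    have h1 : ∀ᶠ q in 𝓝 p, ∀ e ∈ edges E ε, (e.1 = v ∨ e.2 = v) →
        0 < det (E.pos e.1) (E.pos e.2) q := by
      rw [Finset.eventually_all]
      intro e he
      rw [eventually_imp_distrib_left]
      intro hev'
      refine (continuous_det _ _).continuousAt.eventually (lt_mem_nhds ?_)
      have := (mem_edges.1 he).2
      rcases hev' with h | h
      · rw [d1 e he h]; nlinarith
      · rw [d2 e he h]; nlinarith
    filter_upwards [h1] with q q1
    refine Finset.sum_eq_zero fun e he => ?_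
    obtain ⟨he, he'⟩ := Finset.mem_filter.1 he
    exact if_neg fun h => h.2.2.not_gt (q1 e he he')

open Classical in
/-- Away from the vertices, the parity of the number of edges above a point, among those avoiding
`p`, is constant near `p`. -/
theorem local_parity (E : PlaneEmbedding G) {ε : ℝ}
    (hinj : Function.Injective fun v => lam ε (E.pos v))
    (hev : ∀ v, Even (G.neighborSet v).ncard) {p : ℝ × ℝ} (hp : ∀ v, p ≠ E.pos v) :
    ∀ᶠ q in 𝓝 p,
      ∑ e ∈ (edges E ε).filter (fun e => p ∉ segment ℝ (E.pos e.1) (E.pos e.2)), ind E ε e q =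
      ∑ e ∈ (edges E ε).filter (fun e => p ∉ segment ℝ (E.pos e.1) (E.pos e.2)), ind E ε e p := by
  set S := (edges E ε).filter (fun e => p ∉ segment ℝ (E.pos e.1) (E.pos e.2)) with hS
  by_cases hv : ∃ v, lam ε (E.pos v) = lam ε p
  · obtain ⟨v, hv⟩ := hv
    obtain ⟨c, hc⟩ := sum_at_vertex E hinj (hev v) (hp v) hv
    have huniq : ∀ u, lam ε (E.pos u) = lam ε p → u = v := fun u hu => hinj (hu.trans hv.symm)
    -- an edge at `v` cannot contain `p`, since `v` is its only point with this sweep coordinate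
    have hSv : S.filter (fun e => e.1 = v ∨ e.2 = v) =
        (edges E ε).filter (fun e => e.1 = v ∨ e.2 = v) := by
      rw [hS, Finset.filter_filter]
      refine Finset.filter_congr fun e he => ⟨fun h => h.2, fun h => ⟨fun hs => ?_, h⟩⟩
      have hlt := (mem_edges.1 he).2
      obtain ⟨s, t, hs, ht, hst, rfl⟩ := hs
      obtain rfl : s = 1 - t := by linarith
      rw [lam_comb] at hv
      rcases h with rfl | rfl
      · have : t = 0 := by nlinarith
        subst this
        exact hp e.1 (by simp)
      · have : t = 1 := by nlinarith
        subst this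
        exact hp e.2 (by simp)
    have hrest : ∀ᶠ q in 𝓝 p, ∀ e ∈ S.filter (fun e => ¬ (e.1 = v ∨ e.2 = v)),
        ind E ε e q = ind E ε e p := by
      rw [Finset.eventually_all]
      intro e he
      simp only [hS, Finset.mem_filter, not_or] at he
      exact ind_stable E he.1.2 (fun h => he.2.1 (huniq _ h)) (fun h => he.2.2 (huniq _ h))
    filter_upwards [hc, hrest] with q q1 q2
    rw [← Finset.sum_filter_add_sum_filter_not S (fun e => e.1 = v ∨ e.2 = v),
      ← Finset.sum_filter_add_sum_filter_not S (fun e => e.1 = v ∨ e.2 = v) (fun e => ind E ε e p),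
      hSv, q1, hc.self_of_nhds, Finset.sum_congr rfl q2]
  · push Not at hv
    have : ∀ᶠ q in 𝓝 p, ∀ e ∈ S, ind E ε e q = ind E ε e p := by
      rw [Finset.eventually_all]
      intro e he
      exact ind_stable E (Finset.mem_filter.1 he).2 (hv _) (hv _)
    filter_upwards [this] with q hq
    exact Finset.sum_congr rfl hq

theorem parity_const (E : PlaneEmbedding G) {ε : ℝ}
    (hinj : Function.Injective fun v => lam ε (E.pos v))
    (hev : ∀ v, Even (G.neighborSet v).ncard) {F : Set (ℝ × ℝ)} (hF : E.IsFace F) {x y : ℝ × ℝ}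
    (hx : x ∈ F) (hy : y ∈ F) :
    ∑ e ∈ edges E ε, ind E ε e x = ∑ e ∈ edges E ε, ind E ε e y := by
  classical
  refine (face_preconn hF).constant (f := fun q => ∑ e ∈ edges E ε, ind E ε e q) ?_ hx hy
  intro p hp
  have hpi := face_notMem hF hp
  refine ContinuousAt.continuousWithinAt ?_
  have := local_parity E hinj hev (p := p) (fun v h => hpi (h ▸ pos_mem_image E v))
  rw [Finset.filter_true_of_mem] at this
  · exact tendsto_nhds_of_eventually_eq this
  · intro e he hs
    exact hpi (segment_subset_image E (mem_edges.1 he).1 hs)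

open Classical in
/-- The parity of the number of edges above the points just to the left of the directed
edge `a b`: that of the other edges above its midpoint, plus one if `a b` itself is above such
points, which happens when it is directed against the sweep. -/
noncomputable def side (E : PlaneEmbedding G) (ε : ℝ) (a b : V) : ZMod 2 :=
  (∑ e ∈ (edges E ε).filter
      (fun e => leftpt (E.pos a) (E.pos b) 0 ∉ segment ℝ (E.pos e.1) (E.pos e.2)),
    ind E ε e (leftpt (E.pos a) (E.pos b) 0)) +
  if lam ε (E.pos a) < lam ε (E.pos b) then 0 else 1

theorem side_swap (E : PlaneEmbedding G) {ε : ℝ}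
    (hinj : Function.Injective fun v => lam ε (E.pos v)) {a b : V} (h : G.Adj a b) :
    side E ε b a = side E ε a b + 1 := by
  have hm : leftpt (E.pos b) (E.pos a) 0 = leftpt (E.pos a) (E.pos b) 0 := by
    rw [leftpt_zero, leftpt_zero, add_comm, add_comm (E.pos b).2]
  unfold side
  rw [hm, add_assoc]
  congr 1
  rcases lt_or_gt_of_ne (fun e => h.ne (hinj e) : lam ε (E.pos a) ≠ lam ε (E.pos b)) with h' | h'
  · rw [if_neg h'.not_gt, if_pos h', zero_add]
  · rw [if_pos h', if_neg h'.not_gt]; decide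

/-- Points just to the left of `a b` see the same edges above them as the midpoint does, and the
edge itself when it is directed backwards. -/
theorem side_spec (E : PlaneEmbedding G) {ε : ℝ}
    (hinj : Function.Injective fun v => lam ε (E.pos v))
    (hev : ∀ v, Even (G.neighborSet v).ncard) {a b : V} (h : G.Adj a b) :
    ∀ᶠ δ in 𝓝[>] (0 : ℝ),
      ∑ e ∈ edges E ε, ind E ε e (leftpt (E.pos a) (E.pos b) δ) = side E ε a b := by
  classical
  set m := leftpt (E.pos a) (E.pos b) 0 with hm
  have hmo := mid_mem (E.pos a) (E.pos b)
  rw [← hm] at hmo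
  have hT := leftpt_tendsto (E.pos a) (E.pos b)
  have hmv : ∀ v, m ≠ E.pos v := fun v e => pos_notMem_openSegment E h v (e ▸ hmo)
  have hml : lam ε m = (lam ε (E.pos a) + lam ε (E.pos b)) / 2 := by
    rw [hm, leftpt_zero]; simp only [lam]; ring
  have hl := (continuous_lam ε).continuousAt (x := m)
  have huniq : ∀ e ∈ edges E ε, m ∈ segment ℝ (E.pos e.1) (E.pos e.2) → s(a, b) = s(e.1, e.2) :=
    fun e he hs => edge_unique E h (mem_edges.1 he).1 hmo hs
  rcases lt_or_gt_of_ne (fun e => h.ne (hinj e) : lam ε (E.pos a) ≠ lam ε (E.pos b)) with h' | h'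
  · have hsing : (edges E ε).filter (fun e => ¬ (m ∉ segment ℝ (E.pos e.1) (E.pos e.2))) =
        {(a, b)} := by
      ext e
      simp only [Finset.mem_filter, not_not, Finset.mem_singleton]
      constructor
      · rintro ⟨he, hs⟩
        rcases Sym2.eq_iff.1 (huniq e he hs) with ⟨h1, h2⟩ | ⟨h1, h2⟩
        · exact Prod.ext h1.symm h2.symm
        · have := (mem_edges.1 he).2
          rw [← h1, ← h2] at this
          exact absurd this h'.not_gt
      · rintro rfl
        exact ⟨mem_edges.2 ⟨h, h'⟩, openSegment_subset_segment _ _ _ hmo⟩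
    filter_upwards [hT.eventually (local_parity E hinj hev hmv), self_mem_nhdsWithin] with δ q1 q2
    rw [← Finset.sum_filter_add_sum_filter_not (edges E ε)
      (fun e => m ∉ segment ℝ (E.pos e.1) (E.pos e.2)), q1, hsing, Finset.sum_singleton, side,
      if_pos h']
    congr 1
    exact if_neg fun hh => (leftpt_mem_half (pos_ne E h) q2).not_gt hh.2.2
  · have hsing : (edges E ε).filter (fun e => ¬ (m ∉ segment ℝ (E.pos e.1) (E.pos e.2))) =
        {(b, a)} := by
      ext e
      simp only [Finset.mem_filter, not_not, Finset.mem_singleton]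
      constructor
      · rintro ⟨he, hs⟩
        rcases Sym2.eq_iff.1 (huniq e he hs) with ⟨h1, h2⟩ | ⟨h1, h2⟩
        · have := (mem_edges.1 he).2
          rw [← h1, ← h2] at this
          exact absurd this h'.not_gt
        · exact Prod.ext h2.symm h1.symm
      · rintro rfl
        refine ⟨mem_edges.2 ⟨h.symm, h'⟩, ?_⟩
        rw [segment_symm]
        exact openSegment_subset_segment _ _ _ hmo
    filter_upwards [hT.eventually (local_parity E hinj hev hmv), self_mem_nhdsWithin,
      hT.eventually (hl.eventually (lt_mem_nhds (by linarith : lam ε (E.pos b) < lam ε m))),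
      hT.eventually (hl.eventually (gt_mem_nhds (by linarith : lam ε m < lam ε (E.pos a))))]
      with δ q1 q2 q3 q4
    rw [← Finset.sum_filter_add_sum_filter_not (edges E ε)
      (fun e => m ∉ segment ℝ (E.pos e.1) (E.pos e.2)), q1, hsing, Finset.sum_singleton, side,
      if_neg h'.not_gt]
    congr 1
    refine if_pos ⟨q3.le, q4, ?_⟩
    have := leftpt_mem_half (pos_ne E h) q2
    rw [mem_half] at this
    rw [det_swap]
    linarith

theorem side_eq (E : PlaneEmbedding G) {ε : ℝ}
    (hinj : Function.Injective fun v => lam ε (E.pos v))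
    (hev : ∀ v, Even (G.neighborSet v).ncard) {a b c : V} (hab : G.Adj a b) (hbc : G.Adj b c)
    {F : Set (ℝ × ℝ)} (h1 : IsLeft E a b F) (h2 : IsLeft E b c F) :
    side E ε a b = side E ε b c := by
  obtain ⟨δ, d1, d2⟩ := ((side_spec E hinj hev hab).and h1.2).exists
  obtain ⟨δ', d1', d2'⟩ := ((side_spec E hinj hev hbc).and h2.2).exists
  rw [← d1, ← d1', parity_const E hinj hev h1.1 d2 d2']

end Parity

/-! ### An even triangulation is 3-colorable -/

/-- Let `u` and `u'` be neighbors of `v` that precede it in the sweep, with `u'` counterclockwise of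
`u` as seen from `v`. Then the third vertex `w` of the face `F` on the left of `v u` also precedes
`v` and is counterclockwise of `u`: otherwise `F` would contain `u'` or points of the edge
`v u'`. -/
theorem next_left (E : PlaneEmbedding G) {ε : ℝ}
    (hinj : Function.Injective fun v => lam ε (E.pos v)) {v u w u' : V}
    (hvu : G.Adj v u) (huw : G.Adj u w) (hvw : G.Adj v w) (hvu' : G.Adj v u')
    (hu : lam ε (E.pos u) < lam ε (E.pos v)) (hu' : lam ε (E.pos u') < lam ε (E.pos v))
    (hd : 0 < det (E.pos v) (E.pos u) (E.pos u')) {F : Set (ℝ × ℝ)} (hF : E.IsFace F)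
    (hneg : det (E.pos v) (E.pos u) (E.pos w) < 0 → half (E.pos v) (E.pos u) ⊆ F)
    (hpos : 0 < det (E.pos v) (E.pos u) (E.pos w) →
      tri (E.pos v) (E.pos u) (E.pos w) ⊆ F) :
    lam ε (E.pos w) < lam ε (E.pos v) ∧ 0 < det (E.pos v) (E.pos u) (E.pos w) := by
  rcases lt_or_gt_of_ne (det_ne_zero E hvu huw hvw) with h | h
  · exact absurd (pos_mem_image E u') (face_notMem hF (hneg h hd))
  · refine ⟨?_, h⟩
    by_contra hw
    have hw : lam ε (E.pos v) < lam ε (E.pos w) :=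
      lt_of_le_of_ne (not_lt.1 hw) fun e => hvw.ne (hinj e)
    -- the direction of `u'` lies strictly inside the angle `u v w`
    have hcross : 0 < det (E.pos w) (E.pos v) (E.pos u') := by
      have key : det (E.pos w) (E.pos v) (E.pos u') * (lam ε (E.pos u) - lam ε (E.pos v)) =
          det (E.pos v) (E.pos u) (E.pos w) * (lam ε (E.pos u') - lam ε (E.pos v)) -
          det (E.pos v) (E.pos u) (E.pos u') * (lam ε (E.pos w) - lam ε (E.pos v)) := by
        unfold det lam; ring
      have h1 := mul_pos h (sub_pos.2 hu')
      have h2 := mul_pos hd (sub_pos.2 hw)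
      by_contra hc
      have h3 := mul_nonneg (neg_nonneg.2 (not_lt.1 hc)) (sub_pos.2 hu).le
      nlinarith
    let f : ℝ → ℝ × ℝ := fun η => (1 - η) • E.pos v + η • E.pos u'
    have hf : Continuous f := by fun_prop
    have h0 : f 0 ∈ half (E.pos u) (E.pos w) := by
      simp only [f, mem_half]
      rw [sub_zero, one_smul, zero_smul, add_zero, det_rot]
      exact h
    have e1 := (hf.continuousAt.eventually ((isOpen_half _ _).mem_nhds h0)).filter_mono
      (nhdsWithin_le_nhds (s := Ioi (0 : ℝ)))
    have e2 : ∀ᶠ η in 𝓝[>] (0 : ℝ), η < 1 :=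
      (gt_mem_nhds zero_lt_one).filter_mono nhdsWithin_le_nhds
    obtain ⟨η, h1, h2, h3⟩ := (e1.and (e2.and self_mem_nhdsWithin)).exists
    have h3 : 0 < η := h3
    have hmem : f η ∈ tri (E.pos v) (E.pos u) (E.pos w) := by
      refine ⟨⟨?_, h1⟩, ?_⟩
      · rw [mem_half, det_comb _ _ _ _ _ _ (by ring), det_left]
        have := mul_pos h3 hd
        linarith
      · rw [mem_half, det_comb _ _ _ _ _ _ (by ring), det_right]
        have := mul_pos h3 hcross
        linarith
    exact face_notMem hF (hpos h hmem) (segment_subset_image E hvu'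
      ⟨1 - η, η, by linarith, h3.le, by ring, rfl⟩)

/-- A function on the directed edges that is antisymmetric and sums to zero around every face is
a difference of values at the endpoints. The values are assigned in sweep order; those proposed for
`v` by its preceding neighbors agree because such neighbors, when consecutive around `v`, span a
face with `v`. -/
theorem exists_potential [Finite V] (E : PlaneEmbedding G) {ε : ℝ}
    (hinj : Function.Injective fun v => lam ε (E.pos v)) (t : V → V → V)
    (ht : ∀ a b, G.Adj a b → G.Adj b (t a b) ∧ G.Adj a (t a b) ∧
      ∃ F, E.IsFace F ∧
        (det (E.pos a) (E.pos b) (E.pos (t a b)) < 0 → half (E.pos a) (E.pos b) ⊆ F) ∧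
        (0 < det (E.pos a) (E.pos b) (E.pos (t a b)) →
          tri (E.pos a) (E.pos b) (E.pos (t a b)) ⊆ F))
    {A : Type*} [AddCommGroup A] (ω : V → V → A) (hanti : ∀ a b, G.Adj a b → ω b a = -ω a b)
    (hclosed : ∀ a b, G.Adj a b → ω a b + ω b (t a b) + ω (t a b) a = 0) :
    ∃ φ : V → A, ∀ a b, G.Adj a b → φ b = φ a + ω a b := by
  classical
  have := Fintype.ofFinite V
  let l : V → ℝ := fun v => lam ε (E.pos v)
  have wfr : ∀ f : V → ℝ, WellFounded fun u v : V => f u < f v := fun f => by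
    have : IsTrans V fun u v => f u < f v := ⟨fun _ _ _ => lt_trans⟩
    have : Std.Irrefl fun u v : V => f u < f v := ⟨fun _ => lt_irrefl _⟩
    exact Finite.wellFounded_of_trans_of_irrefl _
  have hwf := wfr l
  -- each vertex takes the value proposed by some preceding neighbor
  let φ : V → A := hwf.fix fun v rec =>
    if h : ∃ u, G.Adj v u ∧ l u < l v then rec h.choose h.choose_spec.2 + ω h.choose v else 0
  have hφ : ∀ v (h : ∃ u, G.Adj v u ∧ l u < l v), φ v = φ h.choose + ω h.choose v := by
    intro v h
    have := hwf.fix_eq (fun v (rec : ∀ u, l u < l v → A) =>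
      if h : ∃ u, G.Adj v u ∧ l u < l v then rec h.choose h.choose_spec.2 + ω h.choose v else 0) v
    rw [dif_pos h] at this
    exact this
  have main : ∀ v u, G.Adj v u → l u < l v → φ v = φ u + ω u v := by
    intro v
    induction v using hwf.induction with
    | _ v ih =>
    have ih' : ∀ u w, l u < l v → l w < l v → G.Adj u w → φ w = φ u + ω u w := by
      intro u w hu hw huw
      rcases lt_or_gt_of_ne (fun e => huw.ne (hinj e) : l u ≠ l w) with h | h
      · exact ih w hw u huw.symm h
      · rw [ih u hu w huw h, hanti u w huw]; abel
    -- the slope of the edge to `v` orders its preceding neighbors counterclockwise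
    let sl : V → ℝ := fun u => ((E.pos u).2 - (E.pos v).2) / (l u - l v)
    have hsl : ∀ u u', l u < l v → l u' < l v → det (E.pos v) (E.pos u) (E.pos u') =
        ((l u - l v) * (l u' - l v)) * (sl u' - sl u) := by
      intro u u' hu hu'
      have h1 : l u - l v ≠ 0 := (sub_neg.2 hu).ne
      have h2 : l u' - l v ≠ 0 := (sub_neg.2 hu').ne
      rw [det_lam ε]
      simp only [sl]
      field_simp
      simp only [l]
      ring
    have hprod : ∀ u u', l u < l v → l u' < l v → 0 < (l u - l v) * (l u' - l v) :=
      fun u u' hu hu' => mul_pos_of_neg_of_neg (sub_neg.2 hu) (sub_neg.2 hu')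
    intro u₁ hu₁ hlu₁
    obtain ⟨m, hm, hmax⟩ := Finset.exists_max_image
      (Finset.univ.filter fun u => G.Adj v u ∧ l u < l v) sl ⟨u₁, by simp [hu₁, hlu₁]⟩
    simp only [Finset.mem_filter, Finset.mem_univ, true_and] at hm hmax
    have hconst : ∀ u, G.Adj v u → l u < l v → φ u + ω u v = φ m + ω m v := by
      intro u
      induction u using (wfr fun u => -sl u).induction with
      | _ u ihu =>
      intro hvu hlu
      -- if `u` is not the last neighbor `m`, pass to the next one, `t v u`
      by_cases hum : u = m
      · rw [hum]
      have hd : 0 < det (E.pos v) (E.pos u) (E.pos m) := by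
        have hne : det (E.pos v) (E.pos u) (E.pos m) ≠ 0 := by
          intro h0
          rcases between_of_collinear (pos_ne E hvu) (pos_ne E hm.1) (fun e => hum (E.inj e)) h0
            with h | h | h
          · exact pos_notMem_openSegment E hvu _ h
          · exact pos_notMem_openSegment E hm.1 _ h
          · obtain ⟨s, t, hs, ht, hst, e⟩ := h
            have e' : l v = s * l u + t * l m := by
              simp only [l]; rw [← e, lam_comb]
            obtain rfl : s = 1 - t := by linarith
            have := mul_pos hs (sub_pos.2 hlu)
            have := mul_pos ht (sub_pos.2 hm.2)
            nlinarith
        refine lt_of_le_of_ne ?_ hne.symm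
        rw [hsl u m hlu hm.2]
        exact mul_nonneg (hprod u m hlu hm.2).le (sub_nonneg.2 (hmax u ⟨hvu, hlu⟩))
      obtain ⟨huw, hvw, F, hF, hneg, hpos⟩ := ht v u hvu
      obtain ⟨hlw, hdw⟩ := next_left E hinj hvu huw hvw hm.1 hlu hm.2 hd hF hneg hpos
      have hlw : l (t v u) < l v := hlw
      rw [hsl u _ hlu hlw] at hdw
      have hs := pos_of_mul_pos_right hdw (hprod u _ hlu hlw).le
      rw [← ihu (t v u) (by linarith) hvw hlw, ih' u (t v u) hlu hlw huw]
      have hc := hclosed v u hvu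
      rw [hanti u v hvu.symm, add_assoc, neg_add_eq_zero] at hc
      rw [add_assoc, ← hc]
    have hex : ∃ u, G.Adj v u ∧ l u < l v := ⟨u₁, hu₁, hlu₁⟩
    rw [hφ v hex, hconst _ hex.choose_spec.1 hex.choose_spec.2, hconst u₁ hu₁ hlu₁]
  refine ⟨φ, fun a b hab => ?_⟩
  rcases lt_or_gt_of_ne (fun e => hab.ne (hinj e) : l a ≠ l b) with h | h
  · exact main b a hab.symm h
  · rw [main a b hab h, hanti a b hab]; abel

theorem colorable_of_even [Fintype V] (E : PlaneEmbedding G) (htri : E.IsTriangulation)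
    (hev : ∀ v, Even (G.neighborSet v).ncard) : G.Colorable 3 := by
  obtain ⟨ε, hinj⟩ := exists_generic E
  obtain ⟨t, ht⟩ := exists_third E htri
  have hside : ∀ a b, G.Adj a b → side E ε a b = side E ε b (t a b) := by
    intro a b h
    obtain ⟨hbc, -, -, -, F, h1, h2, -⟩ := ht a b h
    exact side_eq E hinj hev h hbc h1 h2
  let ω : V → V → ZMod 3 := fun a b => if side E ε a b = 0 then 1 else -1
  obtain ⟨φ, hφ⟩ := exists_potential E hinj t
    (fun a b h => by
      obtain ⟨h1, h2, -, -, F, hF, -, h3, h4⟩ := ht a b h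
      exact ⟨h1, h2, F, hF.1, h3, h4⟩)
    ω
    (fun a b h => by
      simp only [ω]
      rw [side_swap E hinj h]
      generalize side E ε a b = s
      revert s; decide)
    (fun a b h => by
      obtain ⟨h1, -, h3, -⟩ := ht a b h
      have e1 := hside a b h
      have e2 := hside b _ h1
      rw [h3] at e2
      simp only [ω]
      rw [← e2, ← e1]
      generalize side E ε a b = s
      revert s; decide)
  refine (SimpleGraph.Coloring.mk φ fun {a b} h e => ?_ : G.Coloring (ZMod 3)).colorable
  have := hφ a b h
  rw [e, left_eq_add] at this
  revert this
  simp only [ω]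
  generalize side E ε a b = s
  revert s; decide

end Heawood


/-- **Heawood's three color theorem**: a finite plane triangulation is 3-colorable
if and only if it is even, i.e. every vertex has even degree. -/
theorem heawood_three_color {V : Type*} [Fintype V]
    (G : SimpleGraph V) (E : PlaneEmbedding G) (htri : E.IsTriangulation) :
    G.Colorable 3 ↔ ∀ v : V, Even (G.neighborSet v).ncard := by
  constructor
  · intro hc v
    obtain ⟨t, ht⟩ := Heawood.exists_third E htri
    exact Heawood.even_of_colorable t
      (fun a b h => ⟨(ht a b h).1, (ht a b h).2.1, (ht a b h).2.2.1, (ht a b h).2.2.2.1⟩) hc v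
  · exact Heawood.colorable_of_even E htri
end

section
/- There exists a constant C (indeed C = 11 suffices) such that every planar simple graph containing no cycle of any length from 4 to C is 3-colorable (Abbott–Zhou, answering a question of Erdős). -/
/-!
A finite graph without Kuratowski minors and without cycles of length 4 to 11 has a vertex of degree
at most two (`AbbottZhou.exists_deg_le_two`). Removing such a vertex and colouring it last gives a
3-colouring of every finite graph of this kind, and compactness (de Bruijn–Erdős) handles infinite
graphs.

**Replacing Euler's formula.** Planarity is the absence of the minors `K₅` and `K₃,₃`, and no
embedding is used. The role of face counting is played by the following bound
(`AbbottZhou.bound`). Let `H` be finite, without Kuratowski minors and not acyclic, let `β` be the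
dimension of its mod-2 cycle space, and let `l` be nonnegative edge weights for which every cycle
has weight at least `1`. Then `β + 1 ≤ 2 * ∑ l`. (In a plane embedding there are `β + 1` faces,
each edge is on at most two of them, and each face has weight at least `1`.) The proof is by
induction on the number of edges, and then on the number of constraints `l e ≥ 0` and
`l(cycle) ≥ 1` which are not tight:

* An edge of weight at least `1/2` is deleted, which lowers `β` by at most one.
* A cycle of weight exactly `1` (a tight cycle) whose removal separates the rest of `H` splits `H`
  into two smaller graphs `H₁`, `H₂` sharing this cycle, with `β + 1 ≤ β₁ + β₂`
  (`AbbottZhou.beta_split`).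
* Otherwise every edge of positive weight lies on at most two tight cycles
  (`AbbottZhou.lemma_three_cycles`): three nonseparating tight cycles through one edge give three
  paths between its ends. Two such paths meet only in a common initial and a common final part, as
  otherwise some cycle would weigh less than `1`, and nonseparation connects their middle parts to
  each other; this yields a `K₅` or `K₃,₃` minor. As every tight cycle has at least three positive
  edges, there are fewer tight cycles than positive edges. Hence the weights can be moved in some
  direction without changing the weight of a tight cycle and without increasing the total, until
  a new constraint becomes tight.

**Discharging.** Suppose that all degrees are at least three and there are no cycles of length 4 to
11. Triangles are then edge-disjoint. Every edge gets weight `1/12`, and a vertex of degree three on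
a triangle shifts `1/24` from each of its two triangular edges, adding `1/24` to its third edge
(`AbbottZhou.ell`). All cycles of length at least 12 have weight at least `1`: a cycle through two
triangular edges at such a vertex can be shortened along the third side of the triangle without
changing its weight, and a cycle of length 12 shortened in this way would have length 11
(`AbbottZhou.cycle_weight`). Removing from each triangle the edge of smallest `1 - 2 * ell` leaves
a graph `G'` whose cycles all have length at least 12, and summing the charges at the vertices
gives `|E(G')| - 2 * ∑ ell ≥ |V|`. With `|E(G')| < β + |V|` this contradicts the bound.
-/

/-- `G` has a cycle of length `n`: a closed walk that is a cycle (distinct vertices,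
consecutive vertices adjacent) of length `n`. -/
def SimpleGraph.HasCycleOfLength {V : Type*} (G : SimpleGraph V) (n : ℕ) : Prop :=
  ∃ (v : V) (w : G.Walk v v), w.IsCycle ∧ w.length = n

/-- `H` is a minor of `G`: there are pairwise disjoint branch sets in `G`, one for each
vertex of `H`, each inducing a connected subgraph, such that every edge of `H` is
realized by an edge of `G` between the corresponding branch sets. -/
def SimpleGraph.IsMinorOf {W V : Type*} (H : SimpleGraph W) (G : SimpleGraph V) : Prop :=
  ∃ B : W → Set V,
    (∀ w, (G.induce (B w)).Connected) ∧
    (∀ w₁ w₂, w₁ ≠ w₂ → Disjoint (B w₁) (B w₂)) ∧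
    (∀ w₁ w₂, H.Adj w₁ w₂ → ∃ u ∈ B w₁, ∃ v ∈ B w₂, G.Adj u v)

/-- A simple graph is planar iff it has no `K₅` minor and no `K₃,₃` minor
(Wagner's characterization of planarity). -/
def SimpleGraph.Planar {V : Type*} (G : SimpleGraph V) : Prop :=
  ¬ (⊤ : SimpleGraph (Fin 5)).IsMinorOf G ∧
  ¬ (completeBipartiteGraph (Fin 3) (Fin 3)).IsMinorOf G

/-! ### Mod-2 cycle space -/

namespace AbbottZhou
open Finset
open scoped Classical
noncomputable section

variable {V : Type*} [Fintype V]

/-- The boundary map of mod-2 edge chains; chains that occur are supported on edges, so the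
diagonal terms `z s(v, v)` vanish. -/
def bdry : (Sym2 V → ZMod 2) →ₗ[ZMod 2] (V → ZMod 2) where
  toFun z v := ∑ w, z s(v, w)
  map_add' x y := by ext v; simp [sum_add_distrib]
  map_smul' c x := by ext v; simp [mul_sum]

/-- Restriction of a chain to the non-edges of `H`. -/
def offEdges (H : SimpleGraph V) :
    (Sym2 V → ZMod 2) →ₗ[ZMod 2] ({e : Sym2 V // e ∉ H.edgeSet} → ZMod 2) :=
  LinearMap.funLeft _ _ Subtype.val

/-- The mod-2 cycle space of `H`: chains without boundary which vanish off the edges of `H`. -/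
def cycleSpace (H : SimpleGraph V) : Submodule (ZMod 2) (Sym2 V → ZMod 2) :=
  LinearMap.ker (bdry.prod (offEdges H))

/-- The dimension of the cycle space. -/
def beta (H : SimpleGraph V) : ℕ := Module.finrank (ZMod 2) (cycleSpace H)

/-- The edges of `H` as a finset. -/
def edgeFin (H : SimpleGraph V) : Finset (Sym2 V) := univ.filter (· ∈ H.edgeSet)

@[simp] lemma mem_edgeFin {H : SimpleGraph V} {e : Sym2 V} : e ∈ edgeFin H ↔ e ∈ H.edgeSet := by
  simp [edgeFin]

lemma mem_cycleSpace {H : SimpleGraph V} {z : Sym2 V → ZMod 2} :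
    z ∈ cycleSpace H ↔ (∀ v, ∑ w, z s(v, w) = 0) ∧ ∀ e ∉ H.edgeSet, z e = 0 := by
  simp [cycleSpace, offEdges, bdry, funext_iff, LinearMap.funLeft_apply]

lemma beta_deleteEdge (H : SimpleGraph V) (e : Sym2 V) :
    beta H ≤ beta (H.deleteEdges {e}) + 1 := by
  let f : cycleSpace H →ₗ[ZMod 2] ZMod 2 := (LinearMap.proj e).comp (cycleSpace H).subtype
  have h := LinearMap.finrank_range_add_finrank_ker f
  have h2 : Module.finrank (ZMod 2) (LinearMap.range f) ≤ 1 := by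
    simpa using Submodule.finrank_le (LinearMap.range f)
  have h3 : Module.finrank (ZMod 2) (LinearMap.ker f) ≤ beta (H.deleteEdges {e}) := by
    rw [← Submodule.finrank_map_subtype_eq (cycleSpace H) (LinearMap.ker f)]
    refine Submodule.finrank_mono ?_
    rintro _ ⟨⟨z, hz⟩, hzf, rfl⟩
    rw [mem_cycleSpace] at hz
    have hzf' : z e = 0 := hzf
    refine mem_cycleSpace.2 ⟨hz.1, fun e' he' => ?_⟩
    by_cases h : e' = e
    · subst h; exact hzf'
    · refine hz.2 e' fun h' => he' ?_
      simp [SimpleGraph.edgeSet_deleteEdges, h, h']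
  have h4 : Module.finrank (ZMod 2) (cycleSpace H) = beta H := rfl
  omega

omit [Fintype V] in
lemma sum_symm_eq_zero (S : Finset V) (z : Sym2 V → ZMod 2) (hz : ∀ v, z s(v, v) = 0) :
    ∑ v ∈ S, ∑ w ∈ S, z s(v, w) = 0 := by
  rw [← sum_product']
  refine sum_involution (fun a _ => a.swap) ?_ ?_ ?_ ?_
  · rintro ⟨a, b⟩ _
    simp only [Prod.swap_prod_mk, Sym2.eq_swap (a := b)]
    exact CharTwo.add_self_eq_zero _
  · rintro ⟨a, b⟩ _ h h2
    simp only [Prod.swap_prod_mk, Prod.mk.injEq] at h2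
    obtain ⟨rfl, -⟩ := h2
    exact h (hz _)
  · rintro ⟨a, b⟩ h
    simpa [and_comm] using h
  · rintro ⟨a, b⟩ h
    rfl

lemma cycleSpace_eq_bot {H : SimpleGraph V} (hH : H.IsAcyclic) : cycleSpace H = ⊥ := by
  rw [eq_bot_iff]
  intro z hz
  rw [mem_cycleSpace] at hz
  obtain ⟨hb, hs⟩ := hz
  rw [Submodule.mem_bot]
  by_contra hne
  obtain ⟨e, he⟩ := Function.ne_iff.1 hne
  have heH : e ∈ H.edgeSet := by by_contra h; exact he (hs e h)
  have hbr := SimpleGraph.isAcyclic_iff_forall_isBridge.1 hH heH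
  induction e with | _ x y
  rw [SimpleGraph.isBridge_iff] at hbr
  set S : Finset V := univ.filter fun v => (H.deleteEdges {s(x, y)}).Reachable x v
  have hx : x ∈ S := by simp [S]
  have h1 : ∑ v ∈ S, ∑ w, z s(v, w) = 0 := sum_eq_zero fun v _ => hb v
  have h2 : ∑ v ∈ S, ∑ w ∈ S, z s(v, w) = 0 :=
    sum_symm_eq_zero S z fun v => hs _ (by simp)
  have h3 : ∑ v ∈ S, ∑ w ∈ Sᶜ, z s(v, w) = z s(x, y) := by
    -- `x` and `y` are separated by the bridge, which is thus the only edge leaving `S`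
    have key : ∀ v ∈ S, ∀ w ∈ Sᶜ, z s(v, w) ≠ 0 → v = x ∧ w = y := by
      intro v hv w hw hzz
      have hvw : H.Adj v w := by by_contra h; exact hzz (hs _ h)
      simp only [S, mem_compl, mem_filter, mem_univ, true_and] at hv hw
      have h5 : ¬ (H.deleteEdges {s(x, y)}).Adj v w := fun h => hw (hv.trans h.reachable)
      simp only [SimpleGraph.deleteEdges_adj, hvw, true_and, Set.mem_singleton_iff, not_not] at h5
      rcases Sym2.eq_iff.1 h5 with h6 | ⟨rfl, rfl⟩
      · exact h6
      · exact (hbr hv).elim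
    have hy : y ∈ Sᶜ := by simpa [S] using hbr
    rw [sum_eq_single_of_mem x hx, sum_eq_single_of_mem y hy]
    · intro w hw hwy; by_contra h; exact hwy (key x hx w hw h).2
    · intro v hv hvx
      refine sum_eq_zero fun w hw => ?_
      by_contra h; exact hvx (key v hv w hw h).1
  have h4 : ∑ v ∈ S, ∑ w, z s(v, w) = ∑ v ∈ S, ∑ w ∈ S, z s(v, w) + ∑ v ∈ S, ∑ w ∈ Sᶜ, z s(v, w) := by
    rw [← sum_add_distrib]
    exact sum_congr rfl fun v _ => (sum_add_sum_compl _ _).symm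
  rw [h1, h2, h3, zero_add] at h4
  exact he h4.symm

lemma beta_eq_zero {H : SimpleGraph V} (hH : H.IsAcyclic) : beta H = 0 := by
  rw [beta, cycleSpace_eq_bot hH]; simp

/-- A graph has fewer edges than the sum of its cycle space dimension and its order: boundaries
of chains on edges have even total, so the rank of the boundary map is less than the order. -/
lemma card_edgeFin_lt [Nonempty V] (H : SimpleGraph V) :
    (edgeFin H).card < beta H + Fintype.card V := by
  have h := LinearMap.finrank_range_add_finrank_ker (bdry.prod (offEdges H))
  have h2 : LinearMap.range (bdry.prod (offEdges H)) < ⊤ := by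
    refine lt_top_iff_ne_top.2 fun ht => ?_
    obtain ⟨v⟩ := ‹Nonempty V›
    obtain ⟨z, hz⟩ := LinearMap.range_eq_top.1 ht (Pi.single v 1, 0)
    have hz : bdry z = Pi.single v 1 ∧ offEdges H z = 0 := Prod.mk.inj hz
    have h0 : ∀ u, z s(u, u) = 0 := fun u => congrFun hz.2 ⟨s(u, u), by simp⟩
    have h1 := sum_symm_eq_zero univ z h0
    have h3 : ∑ u, bdry z u = 1 := by rw [hz.1]; simp
    exact one_ne_zero (h3.symm.trans h1)
  have h2 := Submodule.finrank_lt h2.ne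
  have h3 : Fintype.card {e : Sym2 V // e ∉ H.edgeSet} = Fintype.card (Sym2 V) - (edgeFin H).card := by
    rw [Fintype.card_subtype_compl, edgeFin, Fintype.card_subtype]
  have h4 : (edgeFin H).card ≤ Fintype.card (Sym2 V) := card_le_univ _
  have h5 : Module.finrank (ZMod 2) (LinearMap.ker (bdry.prod (offEdges H))) = beta H := rfl
  simp only [Module.finrank_prod, Module.finrank_fintype_fun_eq_card] at h h2
  omega

end
end AbbottZhou

/-! ### Splitting along a cycle -/

namespace AbbottZhou
open Finset
open scoped Classical
noncomputable section

variable {V : Type*} [Fintype V]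

/-- The mod-2 chain of a walk: every edge counted with its number of traversals. -/
def walkChain {H : SimpleGraph V} {u v : V} (w : H.Walk u v) : Sym2 V → ZMod 2 :=
  fun e => (w.edges.count e : ZMod 2)

lemma bdry_walkChain {H : SimpleGraph V} {u v : V} (p : H.Walk u v) (t : V) :
    ∑ w, walkChain p s(t, w) = (if t = u then 1 else 0) + (if t = v then 1 else 0) := by
  induction p with
  | nil => simp [walkChain, CharTwo.add_self_eq_zero]
  | @cons a b c h p ih =>
    have h1 : ∀ w, walkChain (SimpleGraph.Walk.cons h p) s(t, w)
        = walkChain p s(t, w) + (if s(a, b) = s(t, w) then 1 else 0) := by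
      intro w
      simp [walkChain, List.count_cons]
    simp only [h1, sum_add_distrib, ih]
    have h2 : ∑ w, (if s(a, b) = s(t, w) then (1 : ZMod 2) else 0)
        = (if t = a then 1 else 0) + (if t = b then 1 else 0) := by
      have hab := h.ne
      by_cases hta : t = a
      · subst hta
        have : ∀ w, s(t, b) = s(t, w) ↔ b = w := by intro w; exact Sym2.congr_right
        simp [this, hab]
      · by_cases htb : t = b
        · subst htb
          have : ∀ w, s(a, t) = s(t, w) ↔ a = w := by
            intro w; rw [Sym2.eq_swap]; exact Sym2.congr_right
          simp [this, hta]
        · have : ∀ w, ¬ s(a, b) = s(t, w) := by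
            intro w hw
            rcases Sym2.eq_iff.1 hw with ⟨h, _⟩ | ⟨_, h⟩
            · exact hta h.symm
            · exact htb h.symm
          simp [this, hta, htb]
    rw [h2]
    generalize (if t = b then (1 : ZMod 2) else 0) = B
    have := CharTwo.add_self_eq_zero B
    linear_combination this

/-- A chain supported on the edges of `c` whose boundary is any prescribed even function on the
support of the closed walk `c`. -/
lemma exists_chain_of_walk {H : SimpleGraph V} {x : V} (c : H.Walk x x) (h : V → ZMod 2)
    (hsupp : ∀ v, v ∉ c.support → h v = 0) (hsum : ∑ v, h v = 0) :
    ∃ z : Sym2 V → ZMod 2, (∀ e ∉ c.edges, z e = 0) ∧ ∀ v, ∑ w, z s(v, w) = h v := by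
  let d : V → Sym2 V → ZMod 2 := fun v =>
    if hv : v ∈ c.support then walkChain (c.takeUntil v hv) else 0
  have hd : ∀ v, v ∈ c.support → ∀ t, ∑ w, d v s(t, w) =
      (if t = x then 1 else 0) + (if t = v then 1 else 0) := by
    intro v hv t
    simp only [d, hv, dif_pos]
    exact bdry_walkChain _ t
  refine ⟨fun e => ∑ v, h v * d v e, ?_, ?_⟩
  · intro e he
    refine sum_eq_zero fun v _ => ?_
    by_cases hv : v ∈ c.support
    · have : e ∉ (c.takeUntil v hv).edges := fun h => he (c.edges_takeUntil_subset_edges hv h)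
      simp [d, hv, walkChain, List.count_eq_zero_of_not_mem this]
    · simp [hsupp v hv]
  · intro t
    rw [sum_comm]
    have : ∀ v, ∑ w, h v * d v s(t, w) =
        h v * (if t = x then 1 else 0) + h v * (if t = v then 1 else 0) := by
      intro v
      rw [← mul_sum, ← mul_add]
      by_cases hv : v ∈ c.support
      · rw [hd v hv]
      · simp [hsupp v hv]
    simp only [this, sum_add_distrib, ← sum_mul, hsum]
    simp

/-- The part of `H` consisting of the edges of `c` and the edges with an end in `A`. -/
def innerPart (H : SimpleGraph V) (A : Set V) {x : V} (c : H.Walk x x) : SimpleGraph V where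
  Adj u v := H.Adj u v ∧ (u ∈ A ∨ v ∈ A ∨ s(u, v) ∈ c.edges)
  symm := ⟨fun _ _ h => ⟨h.1.symm, by rw [Sym2.eq_swap]; tauto⟩⟩
  loopless := ⟨fun _ h => h.1.ne rfl⟩

/-- The part of `H` consisting of the edges without an end in `A`. -/
def outerPart (H : SimpleGraph V) (A : Set V) : SimpleGraph V where
  Adj u v := H.Adj u v ∧ u ∉ A ∧ v ∉ A
  symm := ⟨fun _ _ h => ⟨h.1.symm, h.2.2, h.2.1⟩⟩
  loopless := ⟨fun _ h => h.1.ne rfl⟩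

omit [Fintype V] in
lemma innerPart_le (H : SimpleGraph V) (A : Set V) {x : V} (c : H.Walk x x) :
    innerPart H A c ≤ H := fun _ _ h => h.1

omit [Fintype V] in
lemma outerPart_le (H : SimpleGraph V) (A : Set V) : outerPart H A ≤ H := fun _ _ h => h.1

/-- Splitting a graph along a cycle `c`, where `A` is a union of components of the complement of
`c`: the two parts share exactly the cycle, which costs one dimension of the cycle space. -/
lemma beta_split (H : SimpleGraph V) (A : Set V) {x : V} (c : H.Walk x x) (hc : c.IsCycle)
    (hA : ∀ v ∈ A, v ∉ c.support)
    (hcl : ∀ v ∈ A, ∀ w, H.Adj v w → w ∉ c.support → w ∈ A) :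
    beta H + 1 ≤ beta (innerPart H A c) + beta (outerPart H A) := by
  have hcA : ∀ u v, s(u, v) ∈ c.edges → u ∉ A ∧ v ∉ A := fun u v h =>
    ⟨fun hu => hA u hu (c.fst_mem_support_of_mem_edges h),
      fun hv => hA v hv (c.snd_mem_support_of_mem_edges h)⟩
  have h1 : cycleSpace H ≤ cycleSpace (innerPart H A c) ⊔ cycleSpace (outerPart H A) := by
    intro z hz
    rw [mem_cycleSpace] at hz
    obtain ⟨hb, hs⟩ := hz
    let zA : Sym2 V → ZMod 2 := fun e => if ∃ v ∈ A, v ∈ e then z e else 0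
    have hzA0 : ∀ v, v ∉ c.support → ∑ w, zA s(v, w) = 0 := by
      intro v hv
      by_cases hvA : v ∈ A
      · rw [← hb v]
        refine sum_congr rfl fun w _ => ?_
        simp only [zA]
        rw [if_pos ⟨v, hvA, by simp⟩]
      · refine sum_eq_zero fun w _ => ?_
        simp only [zA]
        split_ifs with h
        · obtain ⟨t, ht, hte⟩ := h
          rcases Sym2.mem_iff.1 hte with rfl | rfl
          · exact absurd ht hvA
          · refine hs _ fun hadj => hvA (hcl t ht v (SimpleGraph.Adj.symm hadj) hv)
        · rfl
    obtain ⟨q, hq1, hq2⟩ := exists_chain_of_walk c (fun v => ∑ w, zA s(v, w)) hzA0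
      (sum_symm_eq_zero univ zA fun v => by
        have : z s(v, v) = 0 := hs _ (by simp)
        simp [zA, this])
    refine Submodule.mem_sup.2 ⟨zA + q, ?_, z - (zA + q), ?_, by simp⟩
    · refine mem_cycleSpace.2 ⟨fun v => ?_, fun e he => ?_⟩
      · simp only [Pi.add_apply, sum_add_distrib, hq2]
        exact CharTwo.add_self_eq_zero _
      · induction e with | _ u v
        have he' : ¬ (H.Adj u v ∧ (u ∈ A ∨ v ∈ A ∨ s(u, v) ∈ c.edges)) := he
        have hq : q s(u, v) = 0 := hq1 _ fun h => he' ⟨c.adj_of_mem_edges h, by tauto⟩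
        have hz' : zA s(u, v) = 0 := by
          simp only [zA]
          split_ifs with h
          · refine hs _ fun hadj => he' ⟨hadj, ?_⟩
            obtain ⟨t, ht, hte⟩ := h
            rcases Sym2.mem_iff.1 hte with rfl | rfl <;> tauto
          · rfl
        simp [hq, hz']
    · refine mem_cycleSpace.2 ⟨fun v => ?_, fun e he => ?_⟩
      · simp only [Pi.sub_apply, Pi.add_apply, sum_sub_distrib, sum_add_distrib, hq2, hb]
        rw [CharTwo.add_self_eq_zero, sub_zero]
      · induction e with | _ u v
        have he' : ¬ (H.Adj u v ∧ u ∉ A ∧ v ∉ A) := he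
        have hq : q s(u, v) = 0 := hq1 _ fun h => he' ⟨c.adj_of_mem_edges h, hcA u v h⟩
        have hz' : z s(u, v) = zA s(u, v) := by
          simp only [zA]
          split_ifs with h
          · rfl
          · refine hs _ fun hadj => he' ⟨hadj, ?_, ?_⟩
            · exact fun hu => h ⟨u, hu, by simp⟩
            · exact fun hu => h ⟨v, hu, by simp⟩
        simp [hq, hz']
  have h2 : 1 ≤ Module.finrank (ZMod 2)
      (cycleSpace (innerPart H A c) ⊓ cycleSpace (outerPart H A) :
        Submodule (ZMod 2) (Sym2 V → ZMod 2)) := by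
    rw [Submodule.one_le_finrank_iff]
    intro hbot
    have hmem : walkChain c ∈ (cycleSpace (innerPart H A c) ⊓ cycleSpace (outerPart H A) :
        Submodule (ZMod 2) (Sym2 V → ZMod 2)) := by
      have hb : ∀ v, ∑ w, walkChain c s(v, w) = 0 := fun v => by
        rw [bdry_walkChain]; exact CharTwo.add_self_eq_zero _
      refine ⟨mem_cycleSpace.2 ⟨hb, fun e he => ?_⟩, mem_cycleSpace.2 ⟨hb, fun e he => ?_⟩⟩
      · induction e with | _ u v
        have : s(u, v) ∉ c.edges := fun h => he ⟨c.adj_of_mem_edges h, by tauto⟩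
        simp [walkChain, List.count_eq_zero_of_not_mem this]
      · induction e with | _ u v
        have : s(u, v) ∉ c.edges := fun h => he ⟨c.adj_of_mem_edges h, hcA u v h⟩
        simp [walkChain, List.count_eq_zero_of_not_mem this]
    rw [hbot, Submodule.mem_bot] at hmem
    cases c with
    | nil => exact hc.not_nil (by simp)
    | @cons _ b _ h p =>
      have h3 := congrFun hmem (s(x, b))
      have h4 : List.count (s(x, b)) (SimpleGraph.Walk.cons h p).edges = 1 :=
        List.count_eq_one_of_mem hc.edges_nodup (by simp)
      rw [walkChain, h4] at h3
      simp at h3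
  have h3 := Submodule.finrank_sup_add_finrank_inf_eq (cycleSpace (innerPart H A c))
    (cycleSpace (outerPart H A))
  have h4 := Submodule.finrank_mono h1
  simp only [beta]
  omega

/-- The total weights of the two parts add up to that of the graph plus that of the shared cycle. -/
lemma sum_split (H : SimpleGraph V) (A : Set V) {x : V} (c : H.Walk x x)
    (hA : ∀ v ∈ A, v ∉ c.support) (l : Sym2 V → ℝ) :
    ∑ e ∈ edgeFin (innerPart H A c), l e + ∑ e ∈ edgeFin (outerPart H A), l e
      = ∑ e ∈ edgeFin H, l e + ∑ e ∈ c.edges.toFinset, l e := by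
  have h1 : edgeFin H = edgeFin (innerPart H A c) ∪ edgeFin (outerPart H A) := by
    ext e
    induction e with | _ u v
    simp only [mem_edgeFin, mem_union, SimpleGraph.mem_edgeSet, innerPart, outerPart]
    tauto
  have h2 : c.edges.toFinset = edgeFin (innerPart H A c) ∩ edgeFin (outerPart H A) := by
    ext e
    induction e with | _ u v
    have h3 : s(u, v) ∈ c.edges → H.Adj u v ∧ u ∉ A ∧ v ∉ A := fun h =>
      ⟨c.adj_of_mem_edges h, fun hu => hA u hu (c.fst_mem_support_of_mem_edges h),
        fun hv => hA v hv (c.snd_mem_support_of_mem_edges h)⟩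
    simp only [mem_edgeFin, mem_inter, SimpleGraph.mem_edgeSet, innerPart, outerPart,
      List.mem_toFinset]
    tauto
  rw [h1, h2, sum_union_inter]

end
end AbbottZhou

/-! ### Connected sets and minors -/

namespace AbbottZhou
open scoped Classical
noncomputable section

variable {V : Type*} {H : SimpleGraph V}

/-- `S` induces a (nonempty) connected subgraph. -/
def Conn (H : SimpleGraph V) (S : Set V) : Prop := (H.induce S).Connected

/-- Some edge joins `S` to `T`. -/
def Touch (H : SimpleGraph V) (S T : Set V) : Prop := ∃ u ∈ S, ∃ v ∈ T, H.Adj u v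

lemma Touch.symm {S T : Set V} (h : Touch H S T) : Touch H T S := by
  obtain ⟨u, hu, v, hv, h⟩ := h
  exact ⟨v, hv, u, hu, h.symm⟩

lemma Touch.mono {S T S' T' : Set V} (h : Touch H S T) (hS : S ⊆ S') (hT : T ⊆ T') :
    Touch H S' T' := by
  obtain ⟨u, hu, v, hv, h⟩ := h
  exact ⟨u, hS hu, v, hT hv, h⟩

lemma conn_singleton (v : V) : Conn H {v} := by
  have : Subsingleton ({v} : Set V) := inferInstance
  have : Nonempty ({v} : Set V) := inferInstance
  exact ⟨SimpleGraph.Preconnected.of_subsingleton⟩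

lemma Conn.union {S T : Set V} (hS : Conn H S) (hT : Conn H T) (h : Touch H S T) :
    Conn H (S ∪ T) := by
  obtain ⟨u, hu, v, hv, h⟩ := h
  exact SimpleGraph.connected_induce_union hS.preconnected hT.preconnected hu hv h

/-- The vertices of `p` with index in `[i, j]`. -/
def seg {x y : V} (p : H.Walk x y) (i j : ℕ) : Set V := {v | ∃ k, i ≤ k ∧ k ≤ j ∧ p.getVert k = v}

lemma conn_seg {x y : V} (p : H.Walk x y) {i j : ℕ} (hij : i ≤ j) (hj : j ≤ p.length) :
    Conn H (seg p i j) := by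
  induction j, hij using Nat.le_induction with
  | base =>
    have : seg p i i = {p.getVert i} := by
      ext v
      constructor
      · rintro ⟨k, h1, h2, rfl⟩
        obtain rfl : k = i := by omega
        rfl
      · rintro rfl
        exact ⟨i, le_rfl, le_rfl, rfl⟩
    rw [this]
    exact conn_singleton _
  | succ j hij ih =>
    have : seg p i (j + 1) = seg p i j ∪ {p.getVert (j + 1)} := by
      ext v
      constructor
      · rintro ⟨k, h1, h2, rfl⟩
        rcases Nat.lt_or_ge j k with h | h
        · obtain rfl : k = j + 1 := by omega
          exact Or.inr rfl
        · exact Or.inl ⟨k, h1, h, rfl⟩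
      · rintro (⟨k, h1, h2, rfl⟩ | rfl)
        · exact ⟨k, h1, by omega, rfl⟩
        · exact ⟨j + 1, by omega, le_rfl, rfl⟩
    rw [this]
    exact (ih (by omega)).union (conn_singleton _)
      ⟨_, ⟨j, hij, le_rfl, rfl⟩, _, rfl, p.adj_getVert_succ (by omega)⟩

/-- The component of `o` in the subgraph induced by `O`. -/
def comp (H : SimpleGraph V) (O : Set V) (o : V) : Set V :=
  {v | ∃ w : H.Walk o v, ∀ t ∈ w.support, t ∈ O}

lemma comp_subset (O : Set V) (o : V) : comp H O o ⊆ O := by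
  rintro v ⟨w, hw⟩
  exact hw v w.end_mem_support

lemma mem_comp_self {O : Set V} {o : V} (ho : o ∈ O) : o ∈ comp H O o :=
  ⟨.nil, by simpa using ho⟩

lemma comp_closed {O : Set V} {o u v : V} (hu : u ∈ comp H O o) (h : H.Adj u v) (hv : v ∈ O) :
    v ∈ comp H O o := by
  obtain ⟨w, hw⟩ := hu
  refine ⟨w.concat h, fun t ht => ?_⟩
  rw [SimpleGraph.Walk.support_concat] at ht
  simp only [List.mem_append, List.mem_singleton] at ht
  rcases ht with ht | rfl
  · exact hw t ht
  · exact hv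

lemma comp_eq_of_mem {O : Set V} {o v : V} (hv : v ∈ comp H O o) : comp H O v = comp H O o := by
  obtain ⟨w, hw⟩ := hv
  ext t
  constructor
  · rintro ⟨w', hw'⟩
    refine ⟨w.append w', fun t ht => ?_⟩
    rw [SimpleGraph.Walk.mem_support_append_iff] at ht
    exact ht.elim (hw t) (hw' t)
  · rintro ⟨w', hw'⟩
    refine ⟨w.reverse.append w', fun t ht => ?_⟩
    rw [SimpleGraph.Walk.mem_support_append_iff] at ht
    refine ht.elim (fun h => hw t (by simpa using h)) (hw' t)

lemma conn_comp {O : Set V} {o : V} (ho : o ∈ O) : Conn H (comp H O o) := by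
  refine SimpleGraph.induce_connected_of_patches o (mem_comp_self ho) ?_
  rintro v ⟨w, hw⟩
  refine ⟨{t | t ∈ w.support}, ?_, by simp, by simp, w.connected_induce_support _ _⟩
  intro t ht
  exact ⟨w.takeUntil t ht, fun s hs => hw s (w.support_takeUntil_subset_support ht hs)⟩

/-- A walk inside `R` from `O` to a vertex outside `O` leaves the component of its start in `O`
along an edge. -/
lemma exists_exit {O R : Set V} {u v : V} (w : H.Walk u v) (hw : ∀ t ∈ w.support, t ∈ R)
    (hu : u ∈ O) (hv : v ∉ O) :
    ∃ k ∈ comp H O u, ∃ z ∈ R, z ∉ O ∧ H.Adj k z := by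
  induction w with
  | nil => exact absurd hu hv
  | @cons a b c h p ih =>
    by_cases hb : b ∈ O
    · obtain ⟨k, hk, z, hz, hzO, hkz⟩ := ih (fun t ht => hw t (by simp [ht])) hb hv
      have : b ∈ comp H O a := comp_closed (mem_comp_self hu) h hb
      exact ⟨k, comp_eq_of_mem this ▸ hk, z, hz, hzO, hkz⟩
    · exact ⟨a, mem_comp_self hu, b, hw b (by simp), hb, h⟩

lemma isMinorOf_mono {W : Type*} {M : SimpleGraph W} {G : SimpleGraph V} (hHG : H ≤ G)
    (h : M.IsMinorOf H) : M.IsMinorOf G := by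
  obtain ⟨B, h1, h2, h3⟩ := h
  refine ⟨B, fun w => (h1 w).mono ?_, h2, fun a b hab => ?_⟩
  · intro u v huv
    exact hHG huv
  · obtain ⟨u, hu, v, hv, h⟩ := h3 a b hab
    exact ⟨u, hu, v, hv, hHG h⟩

lemma isMinorOf_K33 (A B : Fin 3 → Set V) (hA : ∀ i, Conn H (A i)) (hB : ∀ i, Conn H (B i))
    (hAA : ∀ i j, i < j → Disjoint (A i) (A j)) (hBB : ∀ i j, i < j → Disjoint (B i) (B j))
    (hAB : ∀ i j, Disjoint (A i) (B j)) (ht : ∀ i j, Touch H (A i) (B j)) :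
    (completeBipartiteGraph (Fin 3) (Fin 3)).IsMinorOf H := by
  refine ⟨Sum.elim A B, ?_, ?_, ?_⟩
  · rintro (i | i)
    · exact hA i
    · exact hB i
  · rintro (i | i) (j | j) h
    · rcases lt_trichotomy i j with h' | rfl | h'
      · exact hAA i j h'
      · exact absurd rfl h
      · exact (hAA j i h').symm
    · exact hAB i j
    · exact (hAB j i).symm
    · rcases lt_trichotomy i j with h' | rfl | h'
      · exact hBB i j h'
      · exact absurd rfl h
      · exact (hBB j i h').symm
  · rintro (i | i) (j | j) h
    · simp at h
    · exact ht i j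
    · exact (ht j i).symm
    · simp at h

lemma isMinorOf_K5 (A : Fin 5 → Set V) (hA : ∀ i, Conn H (A i))
    (hAA : ∀ i j, i < j → Disjoint (A i) (A j)) (ht : ∀ i j, i < j → Touch H (A i) (A j)) :
    (⊤ : SimpleGraph (Fin 5)).IsMinorOf H := by
  refine ⟨A, hA, ?_, ?_⟩
  · intro i j h
    rcases lt_trichotomy i j with h' | rfl | h'
    · exact hAA i j h'
    · exact absurd rfl h
    · exact (hAA j i h').symm
  · intro i j h
    rcases lt_trichotomy i j with h' | rfl | h'
    · exact ht i j h'
    · exact absurd rfl h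
    · exact (ht j i h').symm

end
end AbbottZhou

/-! ### Weights and tight paths -/

namespace AbbottZhou
open scoped Classical
noncomputable section

variable {V : Type*} {H : SimpleGraph V}

/-- The weight of the part of `p` between the indices `i` and `j`. -/
def wseg (l : Sym2 V → ℝ) {x y : V} (p : H.Walk x y) (i j : ℕ) : ℝ :=
  ∑ k ∈ Finset.Ico i j, l s(p.getVert k, p.getVert (k + 1))

lemma wseg_add (l : Sym2 V → ℝ) {x y : V} (p : H.Walk x y) {i j k : ℕ} (h1 : i ≤ j) (h2 : j ≤ k) :
    wseg l p i j + wseg l p j k = wseg l p i k :=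
  Finset.sum_Ico_consecutive _ h1 h2

lemma wseg_congr (l : Sym2 V → ℝ) {x y x' y' : V} (p : H.Walk x y) (q : H.Walk x' y')
    {i i' j j' : ℕ} (h : i' - i = j' - j)
    (hk : ∀ k ≤ i' - i, p.getVert (i + k) = q.getVert (j + k)) :
    wseg l p i i' = wseg l q j j' := by
  unfold wseg
  rw [Finset.sum_Ico_eq_sum_range, Finset.sum_Ico_eq_sum_range, ← h]
  refine Finset.sum_congr rfl fun k hk' => ?_
  rw [Finset.mem_range] at hk'
  rw [hk k (by omega), add_assoc, add_assoc, hk (k + 1) (by omega)]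

lemma wseg_nonneg {l : Sym2 V → ℝ} (hl : ∀ e, 0 ≤ l e) {x y : V} (p : H.Walk x y) (i j : ℕ) :
    0 ≤ wseg l p i j := Finset.sum_nonneg fun _ _ => hl _

lemma sum_edges_eq_wseg (l : Sym2 V → ℝ) {x y : V} (p : H.Walk x y) :
    (p.edges.map l).sum = wseg l p 0 p.length := by
  induction p with
  | nil => simp [wseg]
  | cons h p ih =>
    unfold wseg at *
    simp only [SimpleGraph.Walk.edges_cons, List.map_cons, List.sum_cons,
      SimpleGraph.Walk.length_cons]
    rw [ih, Finset.sum_Ico_eq_sum_range, Finset.sum_Ico_eq_sum_range]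
    simp only [Nat.sub_zero]
    rw [Finset.sum_range_succ']
    simp only [zero_add, SimpleGraph.Walk.getVert_cons_succ, SimpleGraph.Walk.getVert_zero]
    exact add_comm _ _

lemma sum_toFinset_eq {l : Sym2 V → ℝ} {x y : V} {p : H.Walk x y} (hp : p.IsTrail) :
    ∑ e ∈ p.edges.toFinset, l e = (p.edges.map l).sum :=
  List.sum_toFinset _ hp.edges_nodup

lemma exists_subpath {x y : V} {p : H.Walk x y} (hp : p.IsPath) {i j : ℕ} (hij : i ≤ j)
    (hj : j ≤ p.length) {u v : V} (hu : p.getVert i = u) (hv : p.getVert j = v) :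
    ∃ r : H.Walk u v, r.IsPath ∧ r.length = j - i ∧
      ∀ k ≤ j - i, r.getVert k = p.getVert (i + k) := by
  subst hu
  have h1 : (p.drop i).getVert (j - i) = v := by
    rw [SimpleGraph.Walk.drop_getVert, ← hv]; congr 1; omega
  subst h1
  refine ⟨(p.drop i).take (j - i), (hp.drop i).take _, ?_, ?_⟩
  · rw [SimpleGraph.Walk.take_length, SimpleGraph.Walk.drop_length]; omega
  · intro k hk
    rw [SimpleGraph.Walk.take_getVert, SimpleGraph.Walk.drop_getVert]
    congr 1
    omega

lemma subwalk_sum_le {l : Sym2 V → ℝ} (hl : ∀ e, 0 ≤ l e) {x y x' y' : V} {p' : H.Walk x' y'}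
    {p : H.Walk x y} (h : p'.IsSubwalk p) : (p'.edges.map l).sum ≤ (p.edges.map l).sum := by
  obtain ⟨r, s, rfl⟩ := h
  simp only [SimpleGraph.Walk.edges_append, List.map_append, List.sum_append]
  have h1 : 0 ≤ (r.edges.map l).sum := List.sum_nonneg (by simp; intros; exact hl _)
  have h2 : 0 ≤ (s.edges.map l).sum := List.sum_nonneg (by simp; intros; exact hl _)
  linarith

/-- The hypotheses on the weights: nonnegative, every cycle has weight at least `1`. -/
structure Wtd (H : SimpleGraph V) (l : Sym2 V → ℝ) : Prop where
  nonneg : ∀ e, 0 ≤ l e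
  cyc : ∀ (v : V) (c : H.Walk v v), c.IsCycle → 1 ≤ ∑ e ∈ c.edges.toFinset, l e

variable {l : Sym2 V → ℝ}

/-- Two distinct paths with the same ends contain a cycle in their union, so their total weight is at
least `1`. -/
lemma Wtd.dist (hl : Wtd H l) {x y : V} {p q : H.Walk x y} (hp : p.IsPath) (hq : q.IsPath)
    (h : p ≠ q) : 1 ≤ wseg l p 0 p.length + wseg l q 0 q.length := by
  obtain ⟨u, v, p', q', h1, h2, h3⟩ := hp.exists_isCycle_of_ne hq h
  have h4 := hl.cyc _ _ h3
  rw [sum_toFinset_eq h3.isTrail] at h4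
  have h5 := subwalk_sum_le hl.nonneg h1
  have h6 := subwalk_sum_le hl.nonneg h2
  rw [← sum_edges_eq_wseg, ← sum_edges_eq_wseg]
  simp only [SimpleGraph.Walk.edges_append, SimpleGraph.Walk.edges_reverse, List.map_append,
    List.sum_append, List.map_reverse, List.sum_reverse] at h4
  linarith

/-- Two different pieces of paths with the same ends have total weight at least `1`. -/
lemma Wtd.dist_sub (hl : Wtd H l) {x y x' y' : V} {p : H.Walk x y} {q : H.Walk x' y'}
    (hp : p.IsPath) (hq : q.IsPath) {i i' j j' : ℕ} (hi : i ≤ i') (hi' : i' ≤ p.length)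
    (hj : j ≤ j') (hj' : j' ≤ q.length) (h : p.getVert i = q.getVert j)
    (h' : p.getVert i' = q.getVert j')
    (hne : ¬ (i' - i = j' - j ∧ ∀ k ≤ i' - i, p.getVert (i + k) = q.getVert (j + k))) :
    1 ≤ wseg l p i i' + wseg l q j j' := by
  obtain ⟨r, hr, hrl, hrk⟩ := exists_subpath hp hi hi' h h'
  obtain ⟨s, hs, hsl, hsk⟩ := exists_subpath hq hj hj' rfl rfl
  have hrs : r ≠ s := by
    rintro rfl
    apply hne
    refine ⟨by omega, fun k hk => ?_⟩
    rw [← hrk k hk, ← hsk k (by omega)]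
  have := hl.dist hr hs hrs
  rwa [wseg_congr l r p (i := 0) (j := i) (j' := i') (by omega)
    (fun k hk => by rw [zero_add]; exact hrk k (by omega)),
    wseg_congr l s q (i := 0) (j := j) (j' := j') (by omega)
    (fun k hk => by rw [zero_add]; exact hsk k (by omega))] at this

/-- A path from `x` to `y` closing up with the edge `xy` to a cycle of weight `1` whose removal
leaves the non-isolated vertices connected. -/
structure TP (H : SimpleGraph V) (l : Sym2 V → ℝ) {x y : V} (p : H.Walk x y) : Prop where
  path : p.IsPath
  wt : wseg l p 0 p.length + l s(x, y) = 1
  nonsep : ∀ u v, u ∉ p.support → v ∉ p.support → (∃ t, H.Adj u t) → (∃ t, H.Adj v t) →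
    ∃ w : H.Walk u v, ∀ t ∈ w.support, t ∉ p.support

lemma wseg_reverse {x y : V} (p : H.Walk x y) :
    wseg l p.reverse 0 p.reverse.length = wseg l p 0 p.length := by
  rw [← sum_edges_eq_wseg, ← sum_edges_eq_wseg]
  simp

lemma TP.reverse {x y : V} {p : H.Walk x y} (h : TP H l p) : TP H l p.reverse where
  path := h.path.reverse
  wt := by rw [wseg_reverse, Sym2.eq_swap, h.wt]
  nonsep := by simpa using h.nonsep

/-- The first index where two walks differ. -/
def fd {x y : V} (p q : H.Walk x y) : ℕ := sInf {k | p.getVert k ≠ q.getVert k}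

lemma fd_comm {x y : V} (p q : H.Walk x y) : fd p q = fd q p := by
  unfold fd; congr 1; ext k; exact ne_comm

lemma fd_spec {x y : V} {p q : H.Walk x y} (h : p ≠ q) :
    p.getVert (fd p q) ≠ q.getVert (fd p q) := by
  refine Nat.sInf_mem (s := {k | p.getVert k ≠ q.getVert k}) ?_
  by_contra hc
  rw [Set.not_nonempty_iff_eq_empty, Set.eq_empty_iff_forall_notMem] at hc
  exact h (SimpleGraph.Walk.ext_getVert fun k => not_not.1 (hc k))

lemma eq_of_lt_fd {x y : V} {p q : H.Walk x y} {k : ℕ} (h : k < fd p q) :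
    p.getVert k = q.getVert k := by
  by_contra hc
  exact absurd (Nat.sInf_le (s := {k | p.getVert k ≠ q.getVert k}) hc) (not_le.2 h)

lemma fd_pos {x y : V} {p q : H.Walk x y} (h : p ≠ q) : 1 ≤ fd p q := by
  by_contra hc
  have h0 : fd p q = 0 := by omega
  have := fd_spec h
  rw [h0] at this
  simp at this

lemma fd_le {x y : V} {p q : H.Walk x y} (hq : q.IsPath) (h : p ≠ q) : fd p q ≤ p.length := by
  by_contra hc
  push Not at hc
  have h1 := eq_of_lt_fd hc
  rw [SimpleGraph.Walk.getVert_length] at h1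
  have h2 : q.length ≤ p.length := by
    by_contra h3
    push Not at h3
    have := (hq.getVert_eq_end_iff h3.le).1 h1.symm
    omega
  refine fd_spec h ?_
  rw [p.getVert_of_length_le hc.le, q.getVert_of_length_le (by omega)]

lemma path_inj {x y : V} {p : H.Walk x y} (hp : p.IsPath) {i j : ℕ} (hi : i ≤ p.length)
    (hj : j ≤ p.length) (h : p.getVert i = p.getVert j) : i = j :=
  hp.getVert_injOn hi hj h

variable {x y : V}

lemma eq_of_lt_fd_rev {p q : H.Walk x y} {k : ℕ} (h : k < fd p.reverse q.reverse) :
    p.getVert (p.length - k) = q.getVert (q.length - k) := by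
  have := eq_of_lt_fd h
  rwa [SimpleGraph.Walk.getVert_reverse, SimpleGraph.Walk.getVert_reverse] at this

lemma rev_ne {p q : H.Walk x y} (h : p ≠ q) : p.reverse ≠ q.reverse :=
  fun h' => h (SimpleGraph.Walk.reverse_injective h')

/-- A common vertex of two tight paths lies in their common initial or common final part. -/
lemma common {p q : H.Walk x y} (hl : Wtd H l) (hp : TP H l p) (hq : TP H l q)
    (he : 0 < l s(x, y)) (hpq : p ≠ q) {i j : ℕ} (hi : i ≤ p.length) (hj : j ≤ q.length)
    (h : p.getVert i = q.getVert j) :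
    (i < fd p q ∧ i = j) ∨ (p.length - i < fd p.reverse q.reverse ∧
      p.length - i = q.length - j) := by
  by_cases h1 : i - 0 = j - 0 ∧ ∀ k ≤ i - 0, p.getVert (0 + k) = q.getVert (0 + k)
  · left
    obtain ⟨h1, h2⟩ := h1
    refine ⟨?_, by omega⟩
    by_contra hc
    refine fd_spec hpq ?_
    simpa using h2 (fd p q) (by omega)
  by_cases h2 : p.length - i = q.length - j ∧
      ∀ k ≤ p.length - i, p.getVert (i + k) = q.getVert (j + k)
  · right
    obtain ⟨h2, h3⟩ := h2
    refine ⟨?_, h2⟩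
    by_contra hc
    refine fd_spec (rev_ne hpq) ?_
    set b := fd p.reverse q.reverse
    rw [SimpleGraph.Walk.getVert_reverse, SimpleGraph.Walk.getVert_reverse]
    have := h3 (p.length - i - b) (by omega)
    convert this using 2 <;> omega
  have h3 := hl.dist_sub hp.path hq.path (Nat.zero_le i) hi (Nat.zero_le j) hj (by simp) h h1
  have h4 := hl.dist_sub hp.path hq.path hi le_rfl hj le_rfl h (by simp) h2
  have h5 := hp.wt
  have h6 := hq.wt
  rw [← wseg_add l p (Nat.zero_le i) hi] at h5
  rw [← wseg_add l q (Nat.zero_le j) hj] at h6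
  linarith

/-- Some vertex of `p` lies between the common initial and the common final part of two tight paths:
otherwise an edge of `p` would close a cycle with the middle part of `q`, which weighs the same as
that edge, so the edge would have weight at least `1/2`. -/
lemma fd_add_le {p q : H.Walk x y} (hl : Wtd H l) (hh : ∀ e ∈ H.edgeSet, l e < 1 / 2)
    (hp : TP H l p) (hq : TP H l q) (hpq : p ≠ q) :
    fd p q + fd p.reverse q.reverse ≤ p.length := by
  have ha := fd_pos hpq
  have hb := fd_pos (rev_ne hpq)
  have ha1 := fd_le hq.path hpq
  have ha2 := fd_le hp.path hpq.symm
  have hb1 := fd_le hq.path.reverse (rev_ne hpq)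
  have hb2 := fd_le hp.path.reverse (rev_ne hpq.symm)
  rw [fd_comm] at ha2 hb2
  rw [SimpleGraph.Walk.length_reverse] at hb1 hb2
  have hd := fd_spec hpq
  have hA : ∀ k < fd p q, p.getVert k = q.getVert k := fun k hk => eq_of_lt_fd hk
  have hB : ∀ k < fd p.reverse q.reverse, p.getVert (p.length - k) = q.getVert (q.length - k) :=
    fun k hk => eq_of_lt_fd_rev hk
  set a := fd p q
  set b := fd p.reverse q.reverse
  by_contra hc
  push Not at hc
  have h1 : b = p.length - a + 1 := by
    by_contra h1
    have h2 := hB (p.length - a + 1) (by omega)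
    have h3 := hA (a - 1) (by omega)
    rw [show p.length - (p.length - a + 1) = a - 1 by omega, h3] at h2
    have h4 := path_inj hq.path (by omega) (by omega) h2
    have h5 := hB (p.length - a) (by omega)
    apply hd
    convert h5 using 2 <;> omega
  have ht : p.getVert a = q.getVert (q.length - (p.length - a)) := by
    have := hB (p.length - a) (by omega)
    rwa [show p.length - (p.length - a) = a by omega] at this
  have hlt : p.length < q.length := by
    by_contra hlt
    rcases eq_or_lt_of_le (not_lt.1 hlt) with h | h
    · apply hd
      convert ht using 2
      omega
    · have h2 := hA (q.length - (p.length - a)) (by omega)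
      rw [← ht] at h2
      have := path_inj hp.path (by omega) (by omega) h2
      omega
  set j := q.length - (p.length - a) with hj
  have h3 := hl.dist_sub hp.path hq.path (i := a - 1) (i' := a) (j := a - 1) (j' := j) (by omega)
    ha1 (by omega) (by omega) (hA _ (by omega)) ht (by omega)
  have hwp := hp.wt
  have hwq := hq.wt
  rw [← wseg_add l p (Nat.zero_le a) ha1,
    ← wseg_add l p (Nat.zero_le (a - 1)) (show a - 1 ≤ a by omega)] at hwp
  rw [← wseg_add l q (Nat.zero_le j) (by omega),
    ← wseg_add l q (Nat.zero_le (a - 1)) (show a - 1 ≤ j by omega)] at hwq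
  have e1 : wseg l p 0 (a - 1) = wseg l q 0 (a - 1) :=
    wseg_congr l p q (by omega) fun k hk => by
      rw [zero_add]; exact hA k (by omega)
  have e2 : wseg l p a p.length = wseg l q j q.length :=
    wseg_congr l p q (by omega) fun k hk => by
      have := hB (p.length - a - k) (by omega)
      convert this using 2 <;> omega
  have e3 : wseg l p (a - 1) a < 1 / 2 := by
    obtain ⟨a', ha'⟩ : ∃ a', a = a' + 1 := ⟨a - 1, by omega⟩
    rw [ha']
    simp only [wseg, Nat.add_sub_cancel, Nat.Ico_succ_singleton, Finset.sum_singleton]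
    exact hh _ (p.adj_getVert_succ (by omega))
  linarith

end
end AbbottZhou

/-! ### Three tight paths that separate or rejoin at different places -/

namespace AbbottZhou
open scoped Classical
noncomputable section

variable {V : Type*} {H : SimpleGraph V} {l : Sym2 V → ℝ} {x y : V}

/-- One of the two Kuratowski graphs is a minor of `H`. -/
def Kur (H : SimpleGraph V) : Prop :=
  (⊤ : SimpleGraph (Fin 5)).IsMinorOf H ∨
    (completeBipartiteGraph (Fin 3) (Fin 3)).IsMinorOf H

lemma kur_K33 {A1 A2 A3 B1 B2 B3 : Set V}
    (c1 : Conn H A1) (c2 : Conn H A2) (c3 : Conn H A3)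
    (c4 : Conn H B1) (c5 : Conn H B2) (c6 : Conn H B3)
    (d12 : Disjoint A1 A2) (d13 : Disjoint A1 A3) (d23 : Disjoint A2 A3)
    (e12 : Disjoint B1 B2) (e13 : Disjoint B1 B3) (e23 : Disjoint B2 B3)
    (f11 : Disjoint A1 B1) (f12 : Disjoint A1 B2) (f13 : Disjoint A1 B3)
    (f21 : Disjoint A2 B1) (f22 : Disjoint A2 B2) (f23 : Disjoint A2 B3)
    (f31 : Disjoint A3 B1) (f32 : Disjoint A3 B2) (f33 : Disjoint A3 B3)
    (t11 : Touch H A1 B1) (t12 : Touch H A1 B2) (t13 : Touch H A1 B3)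
    (t21 : Touch H A2 B1) (t22 : Touch H A2 B2) (t23 : Touch H A2 B3)
    (t31 : Touch H A3 B1) (t32 : Touch H A3 B2) (t33 : Touch H A3 B3) : Kur H := by
  right
  refine isMinorOf_K33 ![A1, A2, A3] ![B1, B2, B3] ?_ ?_ ?_ ?_ ?_ ?_
  · intro i; fin_cases i <;> assumption
  · intro i; fin_cases i <;> assumption
  · intro i j hij; fin_cases i <;> fin_cases j <;> first | assumption | (exfalso; revert hij; decide)
  · intro i j hij; fin_cases i <;> fin_cases j <;> first | assumption | (exfalso; revert hij; decide)
  · intro i j; fin_cases i <;> fin_cases j <;> assumption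
  · intro i j; fin_cases i <;> fin_cases j <;> assumption

lemma kur_K5 {A1 A2 A3 A4 A5 : Set V}
    (c1 : Conn H A1) (c2 : Conn H A2) (c3 : Conn H A3) (c4 : Conn H A4) (c5 : Conn H A5)
    (d12 : Disjoint A1 A2) (d13 : Disjoint A1 A3) (d14 : Disjoint A1 A4) (d15 : Disjoint A1 A5)
    (d23 : Disjoint A2 A3) (d24 : Disjoint A2 A4) (d25 : Disjoint A2 A5)
    (d34 : Disjoint A3 A4) (d35 : Disjoint A3 A5) (d45 : Disjoint A4 A5)
    (t12 : Touch H A1 A2) (t13 : Touch H A1 A3) (t14 : Touch H A1 A4) (t15 : Touch H A1 A5)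
    (t23 : Touch H A2 A3) (t24 : Touch H A2 A4) (t25 : Touch H A2 A5)
    (t34 : Touch H A3 A4) (t35 : Touch H A3 A5) (t45 : Touch H A4 A5) : Kur H := by
  left
  refine isMinorOf_K5 ![A1, A2, A3, A4, A5] ?_ ?_ ?_
  · intro i; fin_cases i <;> assumption
  · intro i j hij; fin_cases i <;> fin_cases j <;> first | assumption | (exfalso; revert hij; decide)
  · intro i j hij; fin_cases i <;> fin_cases j <;> first | assumption | (exfalso; revert hij; decide)

lemma mem_support_idx {p : H.Walk x y} {v : V} :
    v ∈ p.support ↔ ∃ k ≤ p.length, p.getVert k = v := by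
  rw [SimpleGraph.Walk.mem_support_iff_exists_getVert]
  constructor <;> rintro ⟨k, h1, h2⟩ <;> exact ⟨k, h2, h1⟩

lemma seg_disjoint {p : H.Walk x y} (hp : p.IsPath) {i j i' j' : ℕ} (h : j < i')
    (hj : j' ≤ p.length) : Disjoint (seg p i j) (seg p i' j') := by
  rw [Set.disjoint_left]
  rintro v ⟨k, h1, h2, rfl⟩ ⟨k', h3, h4, h5⟩
  have := path_inj hp (by omega) (by omega) h5
  omega

lemma getVert_mem_both {p q : H.Walk x y} {k : ℕ}
    (h : k < fd p q ∨ p.length - k < fd p.reverse q.reverse) (hk : k ≤ p.length) :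
    p.getVert k ∈ p.support ∧ p.getVert k ∈ q.support := by
  refine ⟨p.getVert_mem_support _, ?_⟩
  rcases h with h | h
  · rw [eq_of_lt_fd h]; exact q.getVert_mem_support _
  · have := eq_of_lt_fd_rev h
    rw [show p.length - (p.length - k) = k by omega] at this
    rw [this]; exact q.getVert_mem_support _

/-- The middle part of `p` consists of the vertices of `p` that are not on `q`. -/
lemma mem_mid {p q : H.Walk x y} (hl : Wtd H l) (hp : TP H l p) (hq : TP H l q)
    (he : 0 < l s(x, y)) (hpq : p ≠ q) {v : V} :
    v ∈ seg p (fd p q) (p.length - fd p.reverse q.reverse) ↔ v ∈ p.support ∧ v ∉ q.support := by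
  have hb := fd_pos (rev_ne hpq)
  have hb' := fd_le hq.path.reverse (rev_ne hpq)
  rw [SimpleGraph.Walk.length_reverse] at hb'
  constructor
  · rintro ⟨k, h1, h2, rfl⟩
    refine ⟨p.getVert_mem_support _, fun h => ?_⟩
    obtain ⟨j, hj, h⟩ := mem_support_idx.1 h
    rcases common hl hp hq he hpq (by omega) hj h.symm with h | h <;> omega
  · rintro ⟨h1, h2⟩
    obtain ⟨k, hk, rfl⟩ := mem_support_idx.1 h1
    refine ⟨k, ?_, ?_, rfl⟩ <;> by_contra hc
    · exact h2 (getVert_mem_both (Or.inl (by omega)) hk).2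
    · exact h2 (getVert_mem_both (Or.inr (by omega)) hk).2

lemma nonisol {p : H.Walk x y} (hxy : H.Adj x y) {v : V} (hv : v ∈ p.support) : ∃ t, H.Adj v t := by
  by_cases hp : p.Nil
  · obtain rfl : x = y := hp.eq
    exact (hxy.ne rfl).elim
  obtain ⟨k, hk, rfl⟩ := mem_support_idx.1 hv
  rcases Nat.lt_or_ge k p.length with h | h
  · exact ⟨_, p.adj_getVert_succ h⟩
  · have h0 : 0 < p.length := SimpleGraph.Walk.not_nil_iff_lt_length.1 hp
    have := p.adj_getVert_succ (i := p.length - 1) (by omega)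
    refine ⟨p.getVert (p.length - 1), ?_⟩
    rw [show k = p.length - 1 + 1 by omega]
    exact this.symm

/-- If three tight paths do not all separate at the same place, there is a `K₃,₃` minor. Say `r`
leaves the common part of `p` and `q` at the vertex `m`, before `p` and `q` separate. One side
consists of `m` and the middle parts of `p` and `q`, the other of the component containing the
next vertex of `r`, the part of `p` after `m` up to where `p` and `q` separate, and the rest of the
common part, which the edge `xy` connects. -/
lemma stage1 (hl : Wtd H l) (hh : ∀ e ∈ H.edgeSet, l e < 1 / 2) (hxy : H.Adj x y)
    (he : 0 < l s(x, y)) {p q r : H.Walk x y} (hp : TP H l p) (hq : TP H l q) (hr : TP H l r)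
    (hpq : p ≠ q) (hpr : p ≠ r) (hqr : q ≠ r) (hlt : fd p r < fd p q) : Kur H := by
  have hfd : fd q r = fd p r := by
    refine le_antisymm ?_ ?_ <;> by_contra hc <;> push Not at hc
    · have h1 := eq_of_lt_fd hc
      have h2 := eq_of_lt_fd hlt
      exact fd_spec hpr (h2.trans h1)
    · have h1 := eq_of_lt_fd hc
      have h2 := eq_of_lt_fd (hc.trans hlt)
      exact fd_spec hqr (h2.symm.trans h1)
  have hi := fd_pos hpr
  have hB := fd_pos (rev_ne hpq)
  have hAB := fd_add_le hl hh hp hq hpq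
  have hAB' := fd_add_le hl hh hq hp hpq.symm
  have hr1 := fd_add_le hl hh hr hp hpr.symm
  have hr2 := fd_add_le hl hh hr hq hqr.symm
  have hr3 := fd_pos (rev_ne hpr.symm)
  have hr4 := fd_pos (rev_ne hqr.symm)
  have hmidp := fun v => mem_mid (v := v) hl hp hq he hpq
  have hmidq := fun v => mem_mid (v := v) hl hq hp he hpq.symm
  have hboth := fun k => getVert_mem_both (p := p) (q := q) (k := k)
  have hA : ∀ k < fd p q, p.getVert k = q.getVert k := fun k hk => eq_of_lt_fd hk
  have hBe : ∀ k < fd p.reverse q.reverse, p.getVert (p.length - k) = q.getVert (q.length - k) :=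
    fun k hk => eq_of_lt_fd_rev hk
  have hn1 : r.getVert (fd p r) ∉ p.support := by
    intro h
    obtain ⟨j, hj, h⟩ := mem_support_idx.1 h
    rcases common hl hr hp he hpr.symm (i := fd p r) (by rw [fd_comm r p] at hr1; omega) hj h.symm
      with h | h
    · rw [fd_comm r p] at h; omega
    · rw [fd_comm r p] at hr1; omega
  have hn2 : r.getVert (fd p r) ∉ q.support := by
    intro h
    obtain ⟨j, hj, h⟩ := mem_support_idx.1 h
    rcases common hl hr hq he hqr.symm (i := fd p r) (by rw [fd_comm r q] at hr2; omega) hj h.symm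
      with h | h
    · rw [fd_comm r q] at h; omega
    · rw [fd_comm r q] at hr2; omega
  have hnr : fd p r ≤ r.length := by rw [fd_comm r p] at hr1; omega
  have hm : r.getVert (fd p r - 1) = p.getVert (fd p r - 1) :=
    (eq_of_lt_fd (show fd p r - 1 < fd p r by omega)).symm
  rw [fd_comm q p, fd_comm q.reverse p.reverse] at hmidq hAB'
  set i := fd p r
  set A := fd p q
  set B := fd p.reverse q.reverse
  set n := r.getVert i with hn
  set O : Set V := {v | v ∉ p.support ∧ v ∉ q.support} with hO
  have hnO : n ∈ O := ⟨hn1, hn2⟩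
  have hKO := comp_subset (H := H) O n
  have hnt : ∃ t, H.Adj n t := nonisol (p := r) hxy (r.getVert_mem_support _)
  -- the component of `n` touches the middle part of `p`
  have tQ1 : Touch H (comp H O n) (seg p A (p.length - B)) := by
    have h1 : p.getVert A ∈ seg p A (p.length - B) := ⟨A, le_rfl, by omega, rfl⟩
    obtain ⟨w, hw⟩ := hq.nonsep n _ hn2 ((hmidp _).1 h1).2 hnt
      (nonisol hxy (p.getVert_mem_support _))
    obtain ⟨k, hk, z, hz, hzO, hkz⟩ := exists_exit (O := O) (R := {v | v ∉ q.support}) w hw hnO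
      (fun h => h.1 (p.getVert_mem_support _))
    refine ⟨k, hk, z, (hmidp z).2 ⟨?_, hz⟩, hkz⟩
    by_contra hc
    exact hzO ⟨hc, hz⟩
  have tQ2 : Touch H (comp H O n) (seg q A (q.length - B)) := by
    have h1 : q.getVert A ∈ seg q A (q.length - B) := ⟨A, le_rfl, by omega, rfl⟩
    obtain ⟨w, hw⟩ := hp.nonsep n _ hn1 ((hmidq _).1 h1).2 hnt
      (nonisol hxy (q.getVert_mem_support _))
    obtain ⟨k, hk, z, hz, hzO, hkz⟩ := exists_exit (O := O) (R := {v | v ∉ p.support}) w hw hnO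
      (fun h => h.2 (q.getVert_mem_support _))
    refine ⟨k, hk, z, (hmidq z).2 ⟨?_, hz⟩, hkz⟩
    by_contra hc
    exact hzO ⟨hz, hc⟩
  -- the set `R`: everything common to `p` and `q` apart from the part near the vertex `m`
  obtain ⟨R, hRc, hRm, hRR, hRk⟩ : ∃ R : Set V, Conn H R ∧ Touch H R {p.getVert (i - 1)} ∧
      seg p (p.length - B + 1) p.length ⊆ R ∧
      ∀ v ∈ R, ∃ k ≤ p.length, (k + 2 ≤ i ∨ p.length - k < B) ∧ p.getVert k = v := by
    have hy : y ∈ seg p (p.length - B + 1) p.length := ⟨p.length, by omega, le_rfl, by simp⟩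
    rcases Nat.lt_or_ge i 2 with h | h
    · refine ⟨_, conn_seg p (by omega) le_rfl, ⟨y, hy, x, ?_, hxy.symm⟩, subset_rfl, ?_⟩
      · rw [show i - 1 = 0 by omega]; simp
      · rintro v ⟨k, h1, h2, rfl⟩
        exact ⟨k, h2, Or.inr (by omega), rfl⟩
    · refine ⟨_, (conn_seg p (Nat.zero_le (i - 2)) (by omega)).union
        (conn_seg p (i := p.length - B + 1) (by omega) le_rfl)
        ⟨x, ⟨0, le_rfl, by omega, by simp⟩, y, hy, hxy⟩,
        ⟨p.getVert (i - 2), Or.inl ⟨i - 2, by omega, le_rfl, rfl⟩, _, rfl, ?_⟩,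
        Set.subset_union_right, ?_⟩
      · have := p.adj_getVert_succ (i := i - 2) (by omega)
        rwa [show i - 2 + 1 = i - 1 by omega] at this
      · rintro v (⟨k, h1, h2, rfl⟩ | ⟨k, h1, h2, rfl⟩)
        · exact ⟨k, by omega, Or.inl (by omega), rfl⟩
        · exact ⟨k, h2, Or.inr (by omega), rfl⟩
  have hLb : ∀ v ∈ seg p i (A - 1), v ∈ p.support ∧ v ∈ q.support := by
    rintro v ⟨k, h1, h2, rfl⟩
    exact hboth k (Or.inl (by omega)) (by omega)
  have hRb : ∀ v ∈ R, v ∈ p.support ∧ v ∈ q.support := by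
    intro v hv
    obtain ⟨k, h1, h2, rfl⟩ := hRk v hv
    exact hboth k (h2.imp (by omega) id) (by omega)
  have hmb : ∀ v ∈ ({p.getVert (i - 1)} : Set V), v ∈ p.support ∧ v ∈ q.support := by
    rintro v rfl
    exact hboth _ (Or.inl (by omega)) (by omega)
  have dK : ∀ S : Set V, (∀ v ∈ S, v ∈ p.support ∧ v ∈ q.support) → Disjoint (comp H O n) S :=
    fun S hS => Set.disjoint_left.2 fun v h1 h2 => (hKO h1).1 (hS v h2).1
  have d1 : ∀ S : Set V, (∀ v ∈ S, v ∈ p.support ∧ v ∈ q.support) →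
      Disjoint S (seg p A (p.length - B)) :=
    fun S hS => Set.disjoint_left.2 fun v h1 h2 => ((hmidp v).1 h2).2 (hS v h1).2
  have d2 : ∀ S : Set V, (∀ v ∈ S, v ∈ p.support ∧ v ∈ q.support) →
      Disjoint S (seg q A (q.length - B)) :=
    fun S hS => Set.disjoint_left.2 fun v h1 h2 => ((hmidq v).1 h2).2 (hS v h1).1
  have tB1 : Touch H R (seg p A (p.length - B)) := by
    refine Touch.symm ⟨p.getVert (p.length - B), ⟨_, by omega, le_rfl, rfl⟩,
      p.getVert (p.length - B + 1), hRR ⟨_, le_rfl, by omega, rfl⟩, ?_⟩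
    exact p.adj_getVert_succ (by omega)
  have tB2 : Touch H R (seg q A (q.length - B)) := by
    refine Touch.symm ⟨q.getVert (q.length - B), ⟨_, by omega, le_rfl, rfl⟩,
      p.getVert (p.length - B + 1), hRR ⟨_, le_rfl, by omega, rfl⟩, ?_⟩
    have h1 := hBe (B - 1) (by omega)
    rw [show p.length - (B - 1) = p.length - B + 1 by omega,
      show q.length - (B - 1) = q.length - B + 1 by omega] at h1
    rw [h1]
    exact q.adj_getVert_succ (by omega)
  refine kur_K33 (A1 := comp H O n) (A2 := seg p i (A - 1)) (A3 := R)
    (B1 := {p.getVert (i - 1)}) (B2 := seg p A (p.length - B)) (B3 := seg q A (q.length - B))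
    (conn_comp hnO) (conn_seg p (by omega) (by omega)) hRc (conn_singleton _)
    (conn_seg p (by omega) (by omega)) (conn_seg q (by omega) (by omega))
    (dK _ hLb) (dK _ hRb) ?_ (d1 _ hmb) (d2 _ hmb) ?_ (dK _ hmb) ?_ ?_ ?_ (d1 _ hLb) (d2 _ hLb)
    ?_ (d1 _ hRb) (d2 _ hRb) ?_ tQ1 tQ2 ?_ ?_ ?_ hRm tB1 tB2
  · rw [Set.disjoint_left]
    rintro v ⟨k, h1, h2, rfl⟩ hv
    obtain ⟨k', h3, h4, h5⟩ := hRk _ hv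
    have := path_inj hp.path h3 (by omega) h5
    omega
  · rw [Set.disjoint_left]
    intro v h1 h2
    exact ((hmidp v).1 h1).2 ((hmidq v).1 h2).1
  · rw [Set.disjoint_left]
    intro v h1 h2
    exact (hKO h1).1 ((hmidp v).1 h2).1
  · rw [Set.disjoint_left]
    intro v h1 h2
    exact (hKO h1).2 ((hmidq v).1 h2).1
  · rw [Set.disjoint_left]
    rintro v ⟨k, h1, h2, rfl⟩ hv
    have := path_inj hp.path (by omega) (by omega) hv
    omega
  · rw [Set.disjoint_left]
    rintro v hv rfl
    obtain ⟨k', h3, h4, h5⟩ := hRk _ hv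
    have := path_inj hp.path h3 (by omega) h5
    omega
  · refine ⟨n, mem_comp_self hnO, _, rfl, ?_⟩
    rw [← hm]
    have := r.adj_getVert_succ (i := i - 1) (by omega)
    rw [show i - 1 + 1 = i by omega] at this
    exact this.symm
  · refine ⟨p.getVert i, ⟨i, le_rfl, by omega, rfl⟩, _, rfl, ?_⟩
    have := p.adj_getVert_succ (i := i - 1) (by omega)
    rw [show i - 1 + 1 = i by omega] at this
    exact this.symm
  · refine ⟨p.getVert (A - 1), ⟨A - 1, by omega, le_rfl, rfl⟩, p.getVert A,
      ⟨A, le_rfl, by omega, rfl⟩, ?_⟩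
    have := p.adj_getVert_succ (i := A - 1) (by omega)
    rwa [show A - 1 + 1 = A by omega] at this
  · refine ⟨p.getVert (A - 1), ⟨A - 1, by omega, le_rfl, rfl⟩, q.getVert A,
      ⟨A, le_rfl, by omega, rfl⟩, ?_⟩
    have := q.adj_getVert_succ (i := A - 1) (by omega)
    rw [show A - 1 + 1 = A by omega] at this
    rwa [hA _ (by omega)]

end
end AbbottZhou

/-! ### Three tight paths that separate and rejoin together -/

namespace AbbottZhou
open scoped Classical
noncomputable section

variable {V : Type*} {H : SimpleGraph V} {l : Sym2 V → ℝ} {x y : V}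

/-- `Q` can be joined to `Q'` by an edge or through a component of the subgraph induced by `O`. -/
def Link (H : SimpleGraph V) (O Q Q' : Set V) : Prop :=
  ∃ K : Set V, K ⊆ O ∧ Conn H (Q ∪ K) ∧ Touch H (Q ∪ K) Q' ∧
    (K = ∅ ∨ ∃ o ∈ O, K = comp H O o ∧ Touch H K Q ∧ Touch H K Q')

/-- Two connected sets `U`, `W` that touch each other and three sets, which are pairwise linked,
give a Kuratowski minor. -/
lemma stage2_sets {U W Q1 Q2 Q3 O : Set V} (cU : Conn H U) (cW : Conn H W) (c1 : Conn H Q1)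
    (c2 : Conn H Q2) (c3 : Conn H Q3) (dUW : Disjoint U W) (dU1 : Disjoint U Q1)
    (dU2 : Disjoint U Q2) (dU3 : Disjoint U Q3) (dW1 : Disjoint W Q1) (dW2 : Disjoint W Q2)
    (dW3 : Disjoint W Q3) (d12 : Disjoint Q1 Q2) (d13 : Disjoint Q1 Q3) (d23 : Disjoint Q2 Q3)
    (oU : Disjoint U O) (oW : Disjoint W O) (o1 : Disjoint Q1 O) (o2 : Disjoint Q2 O)
    (o3 : Disjoint Q3 O) (tUW : Touch H U W) (tU1 : Touch H U Q1) (tU2 : Touch H U Q2)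
    (tU3 : Touch H U Q3) (tW1 : Touch H W Q1) (tW2 : Touch H W Q2) (tW3 : Touch H W Q3)
    (l12 : Link H O Q1 Q2) (l23 : Link H O Q2 Q3) (l31 : Link H O Q3 Q1) : Kur H := by
  have key : ∀ o ∈ O, Touch H (comp H O o) Q1 → Touch H (comp H O o) Q2 →
      Touch H (comp H O o) Q3 → Kur H := by
    intro o ho t1 t2 t3
    have hs := comp_subset (H := H) O o
    exact kur_K33 (conn_comp ho) cU cW c1 c2 c3 (oU.mono_right hs).symm (oW.mono_right hs).symm
      dUW d12 d13 d23 (o1.mono_right hs).symm (o2.mono_right hs).symm (o3.mono_right hs).symm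
      dU1 dU2 dU3 dW1 dW2 dW3 t1 t2 t3 tU1 tU2 tU3 tW1 tW2 tW3
  have eqc : ∀ o o' : V, ¬ Disjoint (comp H O o) (comp H O o') → comp H O o = comp H O o' := by
    intro o o' h
    obtain ⟨v, h1, h2⟩ := Set.not_disjoint_iff.1 h
    rw [← comp_eq_of_mem h1, comp_eq_of_mem h2]
  obtain ⟨K1, k1, e1, t1, h1⟩ := l12
  obtain ⟨K2, k2, e2, t2, h2⟩ := l23
  obtain ⟨K3, k3, e3, t3, h3⟩ := l31
  by_cases D12 : Disjoint K1 K2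
  swap
  · rcases h1 with rfl | ⟨a, ha, rfl, h1, h1'⟩
    · simp at D12
    rcases h2 with rfl | ⟨b, hb, rfl, h2, h2'⟩
    · simp at D12
    rw [← eqc _ _ D12] at h2'
    exact key a ha h1 h1' h2'
  by_cases D23 : Disjoint K2 K3
  swap
  · rcases h2 with rfl | ⟨a, ha, rfl, h2, h2'⟩
    · simp at D23
    rcases h3 with rfl | ⟨b, hb, rfl, h3, h3'⟩
    · simp at D23
    rw [← eqc _ _ D23] at h3'
    exact key a ha h3' h2 h2'
  by_cases D13 : Disjoint K1 K3
  swap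
  · rcases h1 with rfl | ⟨a, ha, rfl, h1, h1'⟩
    · simp at D13
    rcases h3 with rfl | ⟨b, hb, rfl, h3, h3'⟩
    · simp at D13
    rw [← eqc _ _ D13] at h3
    exact key a ha h1 h1' h3
  have dis : ∀ {A B K L : Set V}, Disjoint A B → Disjoint A O → Disjoint B O → K ⊆ O → L ⊆ O →
      Disjoint K L → Disjoint (A ∪ K) (B ∪ L) := by
    intro A B K L hAB hA hB hK hL hKL
    rw [Set.disjoint_union_left, Set.disjoint_union_right, Set.disjoint_union_right]
    exact ⟨⟨hAB, hA.mono_right hL⟩, (hB.mono_right hK).symm, hKL⟩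
  have dis' : ∀ {A B K : Set V}, Disjoint A B → Disjoint A O → K ⊆ O → Disjoint A (B ∪ K) := by
    intro A B K hAB hA hK
    rw [Set.disjoint_union_right]
    exact ⟨hAB, hA.mono_right hK⟩
  have su : ∀ {A B : Set V}, A ⊆ A ∪ B := fun {A B} => Set.subset_union_left
  exact kur_K5 cU cW e1 e2 e3 dUW (dis' dU1 oU k1) (dis' dU2 oU k2) (dis' dU3 oU k3)
    (dis' dW1 oW k1) (dis' dW2 oW k2) (dis' dW3 oW k3) (dis d12 o1 o2 k1 k2 D12)
    (dis d13 o1 o3 k1 k3 D13) (dis d23 o2 o3 k2 k3 D23) tUW (tU1.mono subset_rfl su)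
    (tU2.mono subset_rfl su) (tU3.mono subset_rfl su) (tW1.mono subset_rfl su)
    (tW2.mono subset_rfl su) (tW3.mono subset_rfl su) (t1.mono subset_rfl su)
    (t3.mono subset_rfl su).symm (t2.mono subset_rfl su)

/-- A walk from `Q` to `Q'` inside `O ∪ Q ∪ Q'` links the two sets. -/
lemma link_of_walk {O Q Q' : Set V} (cQ : Conn H Q) (hQO : Disjoint Q O) {u v : V} (w : H.Walk u v)
    (hu : u ∈ Q) (hv : v ∈ Q') (hQQ : Disjoint Q Q') (hQO' : Disjoint Q' O)
    (hw : ∀ t ∈ w.support, t ∈ O ∨ t ∈ Q ∨ t ∈ Q') : Link H O Q Q' := by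
  obtain ⟨k, hk, z, hz, hzO, hkz⟩ := exists_exit (O := O ∪ Q) (R := {t | t ∈ O ∨ t ∈ Q ∨ t ∈ Q'})
    w hw (Or.inr hu) (fun h => h.elim (Set.disjoint_left.1 hQO' hv)
      (fun h => Set.disjoint_left.1 hQQ h hv))
  have hzQ : z ∈ Q' := by
    rcases hz with h | h | h
    · exact absurd (Or.inl h) hzO
    · exact absurd (Or.inr h) hzO
    · exact h
  rcases comp_subset _ _ hk with hkO | hkQ
  · obtain ⟨w', hw'⟩ := hk
    obtain ⟨k', hk', z', hz', hzO', hkz'⟩ := exists_exit (O := O) (R := O ∪ Q) w'.reverse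
      (by simpa using hw') hkO (Set.disjoint_left.1 hQO hu)
    have hz'Q : z' ∈ Q := hz'.resolve_left hzO'
    have t1 : Touch H (comp H O k) Q := ⟨k', hk', z', hz'Q, hkz'⟩
    have t2 : Touch H (comp H O k) Q' := ⟨k, mem_comp_self hkO, z, hzQ, hkz⟩
    exact ⟨comp H O k, comp_subset _ _, cQ.union (conn_comp hkO) t1.symm,
      t2.mono Set.subset_union_right subset_rfl, Or.inr ⟨k, hkO, rfl, t1, t2⟩⟩
  · exact ⟨∅, by simp, by simpa using cQ, ⟨k, Or.inl hkQ, z, hzQ, hkz⟩, Or.inl rfl⟩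

/-- The middle parts of two of three tight paths are linked off all three paths, since the third path
does not separate them. -/
lemma stage2_link (hl : Wtd H l) (hh : ∀ e ∈ H.edgeSet, l e < 1 / 2) (hxy : H.Adj x y)
    (he : 0 < l s(x, y)) {p q r : H.Walk x y} (hp : TP H l p) (hq : TP H l q) (hr : TP H l r)
    (hpq : p ≠ q) (hpr : p ≠ r) (hqr : q ≠ r) {a b : ℕ} (h1 : fd p q = a) (h2 : fd p r = a)
    (h3 : fd q r = a) (h4 : fd p.reverse q.reverse = b) (h5 : fd p.reverse r.reverse = b)
    (h6 : fd q.reverse r.reverse = b) :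
    Link H {v | v ∉ p.support ∧ v ∉ q.support ∧ v ∉ r.support} (seg p a (p.length - b))
      (seg q a (q.length - b)) := by
  have hab := fd_add_le hl hh hp hq hpq
  have hab' := fd_add_le hl hh hq hp hpq.symm
  rw [fd_comm q, fd_comm q.reverse] at hab'
  have m1 := fun v => mem_mid (v := v) hl hp hq he hpq
  have m2 := fun v => mem_mid (v := v) hl hq hp he hpq.symm
  have m3 := fun v => mem_mid (v := v) hl hp hr he hpr
  have m4 := fun v => mem_mid (v := v) hl hq hr he hqr
  rw [fd_comm q, fd_comm q.reverse] at m2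
  rw [h1, h4] at m1 m2 hab hab'
  rw [h2, h5] at m3
  rw [h3, h6] at m4
  have hu : p.getVert a ∈ seg p a (p.length - b) := ⟨a, le_rfl, by omega, rfl⟩
  have hv : q.getVert a ∈ seg q a (q.length - b) := ⟨a, le_rfl, by omega, rfl⟩
  obtain ⟨w, hw⟩ := hr.nonsep _ _ ((m3 _).1 hu).2 ((m4 _).1 hv).2
    (nonisol hxy (p.getVert_mem_support _)) (nonisol hxy (q.getVert_mem_support _))
  refine link_of_walk (conn_seg p (by omega) (by omega)) ?_ w hu hv ?_ ?_ ?_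
  · exact Set.disjoint_left.2 fun v h h' => h'.1 ((m1 v).1 h).1
  · exact Set.disjoint_left.2 fun v h h' => ((m1 v).1 h).2 ((m2 v).1 h').1
  · exact Set.disjoint_left.2 fun v h h' => h'.2.1 ((m2 v).1 h).1
  · intro t ht
    have := hw t ht
    by_cases i1 : t ∈ p.support
    · exact Or.inr (Or.inl ((m3 t).2 ⟨i1, this⟩))
    by_cases i2 : t ∈ q.support
    · exact Or.inr (Or.inr ((m4 t).2 ⟨i2, this⟩))
    exact Or.inl ⟨i1, i2, this⟩

/-- If three tight paths separate at one common place and rejoin at one common place, there is a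
Kuratowski minor: `stage2_sets` applies to the common initial part, the common final part (joined
by the edge `xy`) and the three middle parts. -/
lemma stage2 (hl : Wtd H l) (hh : ∀ e ∈ H.edgeSet, l e < 1 / 2) (hxy : H.Adj x y)
    (he : 0 < l s(x, y)) {p q r : H.Walk x y} (hp : TP H l p) (hq : TP H l q) (hr : TP H l r)
    (hpq : p ≠ q) (hpr : p ≠ r) (hqr : q ≠ r) {a b : ℕ} (h1 : fd p q = a) (h2 : fd p r = a)
    (h3 : fd q r = a) (h4 : fd p.reverse q.reverse = b) (h5 : fd p.reverse r.reverse = b)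
    (h6 : fd q.reverse r.reverse = b) : Kur H := by
  have h1' := (fd_comm q p).trans h1
  have h2' := (fd_comm r p).trans h2
  have h3' := (fd_comm r q).trans h3
  have h4' := (fd_comm _ _).trans h4
  have h5' := (fd_comm _ _).trans h5
  have h6' := (fd_comm _ _).trans h6
  have l12 := stage2_link hl hh hxy he hp hq hr hpq hpr hqr h1 h2 h3 h4 h5 h6
  have l23 := stage2_link hl hh hxy he hq hr hp hqr hpq.symm hpr.symm h3 h1' h2' h6 h4' h5'
  have l31 := stage2_link hl hh hxy he hr hp hq hpr.symm hqr.symm hpq h2' h3' h1 h5' h6' h4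
  have s1 := fd_add_le hl hh hp hq hpq
  have s2 := fd_add_le hl hh hq hp hpq.symm
  have s3 := fd_add_le hl hh hr hp hpr.symm
  have a0 := fd_pos hpq
  have b0 := fd_pos (rev_ne hpq)
  rw [h1, h4] at s1
  rw [h1', h4'] at s2
  rw [h2', h5'] at s3
  rw [h1] at a0
  rw [h4] at b0
  have m12 := fun v => mem_mid (v := v) hl hp hq he hpq
  have m13 := fun v => mem_mid (v := v) hl hp hr he hpr
  have m23 := fun v => mem_mid (v := v) hl hq hr he hqr
  have m21 := fun v => mem_mid (v := v) hl hq hp he hpq.symm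
  have m31 := fun v => mem_mid (v := v) hl hr hp he hpr.symm
  rw [h1, h4] at m12
  rw [h2, h5] at m13
  rw [h3, h6] at m23
  rw [h1', h4'] at m21
  rw [h2', h5'] at m31
  have A : ∀ {q : H.Walk x y}, fd p q = a → ∀ k < a, p.getVert k = q.getVert k :=
    fun h k hk => eq_of_lt_fd (h ▸ hk)
  have B : ∀ {q : H.Walk x y}, fd p.reverse q.reverse = b →
      ∀ k < b, p.getVert (p.length - k) = q.getVert (q.length - k) :=
    fun h k hk => eq_of_lt_fd_rev (h ▸ hk)
  have hUW : ∀ v, v ∈ seg p 0 (a - 1) ∨ v ∈ seg p (p.length - b + 1) p.length →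
      v ∈ p.support ∧ v ∈ q.support ∧ v ∈ r.support := by
    rintro v (⟨k, i1, i2, rfl⟩ | ⟨k, i1, i2, rfl⟩)
    · have e1 := getVert_mem_both (p := p) (q := q) (k := k) (Or.inl (by omega)) (by omega)
      have e2 := getVert_mem_both (p := p) (q := r) (k := k) (Or.inl (by omega)) (by omega)
      exact ⟨e1.1, e1.2, e2.2⟩
    · have e1 := getVert_mem_both (p := p) (q := q) (k := k) (Or.inr (by omega)) (by omega)
      have e2 := getVert_mem_both (p := p) (q := r) (k := k) (Or.inr (by omega)) (by omega)
      exact ⟨e1.1, e1.2, e2.2⟩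
  have tU : ∀ {q : H.Walk x y}, (∀ k < a, p.getVert k = q.getVert k) → a + b ≤ q.length →
      Touch H (seg p 0 (a - 1)) (seg q a (q.length - b)) := by
    intro q hA hs
    refine ⟨p.getVert (a - 1), ⟨_, by omega, le_rfl, rfl⟩, q.getVert a, ⟨a, le_rfl, by omega, rfl⟩, ?_⟩
    rw [hA _ (by omega)]
    have := q.adj_getVert_succ (i := a - 1) (by omega)
    rwa [show a - 1 + 1 = a by omega] at this
  have tW : ∀ {q : H.Walk x y},
      (∀ k < b, p.getVert (p.length - k) = q.getVert (q.length - k)) → a + b ≤ q.length →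
      Touch H (seg p (p.length - b + 1) p.length) (seg q a (q.length - b)) := by
    intro q hB hs
    refine ⟨p.getVert (p.length - b + 1), ⟨_, le_rfl, by omega, rfl⟩, q.getVert (q.length - b),
      ⟨_, by omega, le_rfl, rfl⟩, ?_⟩
    have := hB (b - 1) (by omega)
    rw [show p.length - (b - 1) = p.length - b + 1 by omega,
      show q.length - (b - 1) = q.length - b + 1 by omega] at this
    rw [this]
    exact (q.adj_getVert_succ (by omega)).symm
  refine stage2_sets (U := seg p 0 (a - 1)) (W := seg p (p.length - b + 1) p.length)
    (Q1 := seg p a (p.length - b)) (Q2 := seg q a (q.length - b)) (Q3 := seg r a (r.length - b))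
    (conn_seg p (by omega) (by omega)) (conn_seg p (by omega) (by omega))
    (conn_seg p (by omega) (by omega)) (conn_seg q (by omega) (by omega))
    (conn_seg r (by omega) (by omega)) (seg_disjoint hp.path (by omega) (by omega))
    (Set.disjoint_left.2 fun v h h' => ((m12 v).1 h').2 (hUW v (Or.inl h)).2.1)
    (Set.disjoint_left.2 fun v h h' => ((m21 v).1 h').2 (hUW v (Or.inl h)).1)
    (Set.disjoint_left.2 fun v h h' => ((m31 v).1 h').2 (hUW v (Or.inl h)).1)
    (Set.disjoint_left.2 fun v h h' => ((m12 v).1 h').2 (hUW v (Or.inr h)).2.1)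
    (Set.disjoint_left.2 fun v h h' => ((m21 v).1 h').2 (hUW v (Or.inr h)).1)
    (Set.disjoint_left.2 fun v h h' => ((m31 v).1 h').2 (hUW v (Or.inr h)).1)
    (Set.disjoint_left.2 fun v h h' => ((m12 v).1 h).2 ((m21 v).1 h').1)
    (Set.disjoint_left.2 fun v h h' => ((m13 v).1 h).2 ((m31 v).1 h').1)
    (Set.disjoint_left.2 fun v h h' => ((m23 v).1 h).2 ((m31 v).1 h').1)
    (O := {v | v ∉ p.support ∧ v ∉ q.support ∧ v ∉ r.support})
    (Set.disjoint_left.2 fun v h h' => h'.1 (hUW v (Or.inl h)).1)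
    (Set.disjoint_left.2 fun v h h' => h'.1 (hUW v (Or.inr h)).1)
    (Set.disjoint_left.2 fun v h h' => h'.1 ((m12 v).1 h).1)
    (Set.disjoint_left.2 fun v h h' => h'.2.1 ((m21 v).1 h).1)
    (Set.disjoint_left.2 fun v h h' => h'.2.2 ((m31 v).1 h).1)
    ⟨x, ⟨0, le_rfl, by omega, by simp⟩, y, ⟨p.length, by omega, le_rfl, by simp⟩, hxy⟩
    (tU (fun _ _ => rfl) s1) (tU (A h1) s2) (tU (A h2) s3)
    (tW (fun _ _ => rfl) s1) (tW (B h4) s2) (tW (B h5) s3) l12 ?_ ?_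
  · convert l23 using 3; tauto
  · convert l31 using 3; tauto

/-- Three distinct tight paths closing up with the same edge of positive weight give a Kuratowski
minor. -/
lemma lemma_three (hl : Wtd H l) (hh : ∀ e ∈ H.edgeSet, l e < 1 / 2) (hxy : H.Adj x y)
    (he : 0 < l s(x, y)) {p q r : H.Walk x y} (hp : TP H l p) (hq : TP H l q) (hr : TP H l r)
    (hpq : p ≠ q) (hpr : p ≠ r) (hqr : q ≠ r) : Kur H := by
  have key : ∀ {x y : V}, H.Adj x y → 0 < l s(x, y) → ∀ {p q r : H.Walk x y}, TP H l p → TP H l q →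
      TP H l r → p ≠ q → p ≠ r → q ≠ r → Kur H ∨ (fd p q = fd p r ∧ fd p q = fd q r) := by
    intro x y hxy he p q r hp hq hr hpq hpr hqr
    rcases lt_trichotomy (fd p r) (fd p q) with h | h | h
    · exact Or.inl (stage1 hl hh hxy he hp hq hr hpq hpr hqr h)
    · rcases lt_trichotomy (fd p q) (fd q r) with h' | h' | h'
      · left
        rw [fd_comm p q] at h'
        exact stage1 hl hh hxy he hq hr hp hqr hpq.symm hpr.symm h'
      · exact Or.inr ⟨h.symm, h'⟩
      · left
        rw [fd_comm p q] at h'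
        exact stage1 hl hh hxy he hq hp hr hpq.symm hqr hpr h'
    · exact Or.inl (stage1 hl hh hxy he hp hr hq hpr hpq hqr.symm h)
  rcases key hxy he hp hq hr hpq hpr hqr with h | ⟨h1, h2⟩
  · exact h
  rcases key hxy.symm (by rwa [Sym2.eq_swap]) hp.reverse hq.reverse hr.reverse (rev_ne hpq)
    (rev_ne hpr) (rev_ne hqr) with h | ⟨h3, h4⟩
  · exact h
  exact stage2 hl hh hxy he hp hq hr hpq hpr hqr rfl h1.symm h2.symm rfl h3.symm h4.symm

end
end AbbottZhou

/-! ### Tight cycles through an edge -/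

namespace AbbottZhou
open scoped Classical
noncomputable section

variable {V : Type*} {H : SimpleGraph V} {l : Sym2 V → ℝ} {x y : V}

/-- `p` is the cycle `c` without its edge `xy`. -/
def Opens {v : V} (c : H.Walk v v) (p : H.Walk x y) : Prop :=
  p.IsPath ∧ s(x, y) ∉ p.edges ∧ insert s(x, y) p.edges.toFinset = c.edges.toFinset ∧
    ∀ t, t ∈ p.support ↔ t ∈ c.support

lemma exists_opens_snd {c : H.Walk x x} (hc : c.IsCycle) (hy : c.snd = y) :
    ∃ p : H.Walk x y, Opens c p := by
  cases c with
  | nil => exact absurd hc SimpleGraph.Walk.not_isCycle_nil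
  | cons h q =>
    simp only [SimpleGraph.Walk.snd_cons] at hy
    subst hy
    rw [SimpleGraph.Walk.cons_isCycle_iff] at hc
    refine ⟨q.reverse, hc.1.reverse, by simpa using hc.2, ?_, ?_⟩
    · ext e; simp
    · intro t
      simp only [SimpleGraph.Walk.support_reverse, List.mem_reverse,
        SimpleGraph.Walk.support_cons, List.mem_cons]
      constructor
      · exact Or.inr
      · rintro (rfl | h)
        · exact q.end_mem_support
        · exact h

/-- A cycle can be opened at any of its edges, in the given direction of the edge. -/
lemma exists_opens {v : V} {c : H.Walk v v} (hc : c.IsCycle) (he : s(x, y) ∈ c.edges) :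
    ∃ p : H.Walk x y, Opens c p := by
  have hx : x ∈ c.support := c.fst_mem_support_of_mem_edges he
  have hc' := hc.rotate hx
  have hE : ∀ e, e ∈ (c.rotate x hx).edges ↔ e ∈ c.edges := fun e => (c.rotate_edges x hx).mem_iff
  have hS : ∀ t, t ∈ (c.rotate x hx).support ↔ t ∈ c.support := by
    intro t; exact SimpleGraph.Walk.mem_support_rotate_iff c x hx
  have he' := (hE _).2 he
  have : ∃ d : H.Walk x x, d.IsCycle ∧ d.snd = y ∧ (∀ e, e ∈ d.edges ↔ e ∈ c.edges) ∧
      ∀ t, t ∈ d.support ↔ t ∈ c.support := by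
    by_cases hs : (c.rotate x hx).snd = y
    · exact ⟨_, hc', hs, hE, hS⟩
    · refine ⟨(c.rotate x hx).reverse, hc'.reverse, ?_, by simpa using hE, by simp⟩
      rw [SimpleGraph.Walk.snd_reverse]
      generalize c.rotate x hx = d at *
      cases d with
      | nil => exact absurd hc' SimpleGraph.Walk.not_isCycle_nil
      | @cons _ z _ h q =>
        simp only [SimpleGraph.Walk.snd_cons] at hs
        rw [SimpleGraph.Walk.cons_isCycle_iff] at hc'
        have hq : s(x, y) ∈ q.edges := by
          simp only [SimpleGraph.Walk.edges_cons, List.mem_cons] at he'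
          rcases he' with h' | h'
          · rcases Sym2.eq_iff.1 h' with h' | h'
            · exact absurd h'.2.symm hs
            · exact absurd h'.1.symm h.ne.symm
          · exact h'
        rw [SimpleGraph.Walk.penultimate_cons_of_not_nil _ _
          (fun hn => h.ne hn.eq.symm)]
        exact (hc'.1.eq_penultimate_of_mem_edges hq).symm
  obtain ⟨d, h1, h2, h3, h4⟩ := this
  obtain ⟨p, p1, p2, p3, p4⟩ := exists_opens_snd h1 h2
  refine ⟨p, p1, p2, ?_, fun t => (p4 t).trans (h4 t)⟩
  rw [p3]
  ext e
  simpa using h3 e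

/-- No two non-isolated vertices off the cycle are separated by it. -/
def NonSep {v : V} (c : H.Walk v v) : Prop :=
  ∀ a b, a ∉ c.support → b ∉ c.support → (∃ t, H.Adj a t) → (∃ t, H.Adj b t) →
    ∃ w : H.Walk a b, ∀ t ∈ w.support, t ∉ c.support

/-- Opening a nonseparating cycle of weight `1` gives a tight path. -/
lemma Opens.tp {v : V} {c : H.Walk v v} {p : H.Walk x y} (h : Opens c p)
    (hw : ∑ e ∈ c.edges.toFinset, l e = 1) (hn : NonSep c) : TP H l p := by
  obtain ⟨h1, h2, h3, h4⟩ := h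
  refine ⟨h1, ?_, ?_⟩
  · rw [← h3, Finset.sum_insert (by simpa using h2), sum_toFinset_eq h1.isTrail,
      sum_edges_eq_wseg] at hw
    linarith
  · intro a b ha hb ha' hb'
    obtain ⟨w, hw⟩ := hn a b (by rwa [← h4]) (by rwa [← h4]) ha' hb'
    exact ⟨w, fun t ht => by rw [h4]; exact hw t ht⟩

/-- The edge sets of tight cycles. -/
def tight (H : SimpleGraph V) (l : Sym2 V → ℝ) : Set (Finset (Sym2 V)) :=
  {S | ∃ (v : V) (c : H.Walk v v), c.IsCycle ∧ c.edges.toFinset = S ∧ ∑ e ∈ S, l e = 1}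

/-- If no tight cycle separates, an edge of positive weight lies on at most two tight cycles, just as
a tight cycle would bound a face in a plane embedding. -/
lemma lemma_three_cycles (hl : Wtd H l) (hh : ∀ e ∈ H.edgeSet, l e < 1 / 2)
    (hn : ∀ (v : V) (c : H.Walk v v), c.IsCycle → ∑ e ∈ c.edges.toFinset, l e = 1 → NonSep c)
    (hk : ¬ Kur H) {e : Sym2 V} (he : 0 < l e) {S1 S2 S3 : Finset (Sym2 V)}
    (h1 : S1 ∈ tight H l) (h2 : S2 ∈ tight H l) (h3 : S3 ∈ tight H l)
    (e1 : e ∈ S1) (e2 : e ∈ S2) (e3 : e ∈ S3) : S1 = S2 ∨ S1 = S3 ∨ S2 = S3 := by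
  induction e using Sym2.ind with | _ x y => ?_
  have key : ∀ S ∈ tight H l, s(x, y) ∈ S →
      H.Adj x y ∧ ∃ p : H.Walk x y, TP H l p ∧ insert s(x, y) p.edges.toFinset = S := by
    rintro S ⟨v, c, hc, rfl, hw⟩ hS
    have hS' : s(x, y) ∈ c.edges := by simpa using hS
    obtain ⟨p, hp⟩ := exists_opens hc hS'
    exact ⟨c.adj_of_mem_edges hS', p, hp.tp hw (hn v c hc hw), hp.2.2.1⟩
  obtain ⟨hxy, p, hp, rfl⟩ := key S1 h1 e1
  obtain ⟨-, q, hq, rfl⟩ := key S2 h2 e2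
  obtain ⟨-, r, hr, rfl⟩ := key S3 h3 e3
  by_contra hc
  push Not at hc
  refine hk (lemma_three hl hh hxy he hp hq hr ?_ ?_ ?_)
  · rintro rfl; exact hc.1 rfl
  · rintro rfl; exact hc.2.1 rfl
  · rintro rfl; exact hc.2.2 rfl

end
end AbbottZhou

/-! ### The weight bound -/

namespace AbbottZhou
open scoped Classical
open Finset
noncomputable section

variable {V : Type*} {H H' : SimpleGraph V} {l : Sym2 V → ℝ}

lemma Kur.mono (h : H' ≤ H) (hk : Kur H') : Kur H :=
  hk.imp (isMinorOf_mono h) (isMinorOf_mono h)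

lemma Wtd.mono (h : H' ≤ H) (hl : Wtd H l) : Wtd H' l where
  nonneg := hl.nonneg
  cyc v c hc := by
    have := hl.cyc v (c.mapLe h) (hc.mapLe h)
    simpa using this

lemma not_acyclic_of_cycle {v : V} {c : H.Walk v v} (hc : c.IsCycle)
    (h : ∀ e ∈ c.edges, e ∈ H'.edgeSet) : ¬ H'.IsAcyclic :=
  fun ha => ha (c.transfer H' h) (hc.transfer h)

/-- Ratio test: the largest step in the direction `r` that keeps all slacks `s` nonnegative makes one
of them vanish. -/
lemma exists_step {ι : Type*} (I : Finset ι) (s r : ι → ℝ) (hs : ∀ i ∈ I, 0 < s i)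
    (hr : ∃ i ∈ I, r i < 0) :
    ∃ t : ℝ, 0 < t ∧ (∀ i ∈ I, 0 ≤ s i + t * r i) ∧ ∃ i ∈ I, s i + t * r i = 0 := by
  obtain ⟨i, hi, hi'⟩ := hr
  obtain ⟨j, hj, hmin⟩ := Finset.exists_min_image (I.filter (fun i => r i < 0))
    (fun i => s i / (- r i)) ⟨i, by simp [hi, hi']⟩
  simp only [mem_filter] at hj hmin
  have hrj : 0 < - r j := by linarith [hj.2]
  have h0 : 0 < s j / (- r j) := div_pos (hs j hj.1) hrj
  refine ⟨s j / (- r j), h0, fun k hk => ?_, j, hj.1, ?_⟩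
  · by_cases hk' : r k < 0
    · have := hmin k ⟨hk, hk'⟩
      rw [le_div_iff₀ (by linarith)] at this
      linarith
    · have := hs k hk
      have := mul_nonneg h0.le (not_lt.1 hk')
      linarith
  · have : r j ≠ 0 := by linarith [hj.2]
    field_simp
    ring

variable [Fintype V]

lemma edgeFin_lt (h : H' ≤ H) {e : Sym2 V} (he : e ∈ H.edgeSet) (he' : e ∉ H'.edgeSet) :
    (edgeFin H').card < (edgeFin H).card := by
  refine card_lt_card ⟨fun f hf => ?_, fun hs => he' ?_⟩
  · rw [mem_edgeFin] at *; exact SimpleGraph.edgeSet_mono h hf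
  · simpa using hs (mem_edgeFin.2 he)

/-- The bound on the cycle space dimension `β` for all admissible weights `l`: `β + 1 ≤ 2 * ∑ l`. The
additional `1` stands for the outer face, so acyclic graphs are excluded. -/
def Bound (H : SimpleGraph V) : Prop :=
  ∀ l : Sym2 V → ℝ, Wtd H l → ¬ H.IsAcyclic → (beta H : ℝ) + 1 ≤ 2 * ∑ e ∈ edgeFin H, l e

lemma one_le_sum (hl : Wtd H l) (hH : ¬ H.IsAcyclic) : 1 ≤ ∑ e ∈ edgeFin H, l e := by
  unfold SimpleGraph.IsAcyclic at hH
  push Not at hH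
  obtain ⟨v, c, hc⟩ := hH
  refine (hl.cyc v c hc).trans (sum_le_sum_of_subset_of_nonneg ?_ fun e _ _ => hl.nonneg e)
  intro e he
  rw [mem_edgeFin]
  exact c.edges_subset_edgeSet (by simpa using he)

/-- A heavy edge can be deleted. -/
lemma bound_heavy (ih : ∀ H' : SimpleGraph V, H' ≤ H → (edgeFin H').card < (edgeFin H).card →
    Bound H') (hl : Wtd H l) (hH : ¬ H.IsAcyclic) {e : Sym2 V} (he : e ∈ H.edgeSet)
    (hle : 1 / 2 ≤ l e) : (beta H : ℝ) + 1 ≤ 2 * ∑ e ∈ edgeFin H, l e := by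
  have h1 : (beta H : ℝ) ≤ beta (H.deleteEdges {e}) + 1 := by exact_mod_cast beta_deleteEdge H e
  have hle' : H.deleteEdges {e} ≤ H := SimpleGraph.deleteEdges_le _
  by_cases ha : (H.deleteEdges {e}).IsAcyclic
  · rw [beta_eq_zero ha] at h1
    have := one_le_sum hl hH
    push_cast at h1
    linarith
  · have h2 := ih _ hle' (edgeFin_lt hle' he (by simp)) l (hl.mono hle') ha
    have h3 : edgeFin H = insert e (edgeFin (H.deleteEdges {e})) := by
      ext f
      simp only [mem_edgeFin, mem_insert, SimpleGraph.edgeSet_deleteEdges, Set.mem_sdiff,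
        Set.mem_singleton_iff]
      by_cases hf : f = e
      · simp [hf, he]
      · simp [hf]
    rw [h3, sum_insert (by simp)]
    linarith

/-- A separating tight cycle splits the graph into two smaller ones. -/
lemma bound_sep (ih : ∀ H' : SimpleGraph V, H' ≤ H → (edgeFin H').card < (edgeFin H).card →
    Bound H') (hl : Wtd H l) {v : V} {c : H.Walk v v} (hc : c.IsCycle)
    (hw : ∑ e ∈ c.edges.toFinset, l e = 1) (hn : ¬ NonSep c) :
    (beta H : ℝ) + 1 ≤ 2 * ∑ e ∈ edgeFin H, l e := by
  unfold NonSep at hn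
  push Not at hn
  obtain ⟨a, b, ha, hb, ⟨t, hat⟩, ⟨s, hbs⟩, hab⟩ := hn
  set O : Set V := {u | u ∉ c.support} with hO
  set A := comp H O a with hA
  have hAc : ∀ v ∈ A, v ∉ c.support := fun v hv => comp_subset O a hv
  have haA : a ∈ A := mem_comp_self ha
  have hcl : ∀ v ∈ A, ∀ w, H.Adj v w → w ∉ c.support → w ∈ A :=
    fun v hv w hvw hw => comp_closed hv hvw hw
  have hbA : b ∉ A := by
    rintro ⟨w, hw⟩
    obtain ⟨t, ht, ht'⟩ := hab w
    exact hw t ht ht'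
  have hsA : s ∉ A := fun hs => hbA (hcl s hs b hbs.symm hb)
  have e1 : ∀ e ∈ c.edges, e ∈ (innerPart H A c).edgeSet := by
    intro e he
    induction e with | _ x y
    exact ⟨c.adj_of_mem_edges he, Or.inr (Or.inr he)⟩
  have e2 : ∀ e ∈ c.edges, e ∈ (outerPart H A).edgeSet := by
    intro e he
    induction e with | _ x y
    exact ⟨c.adj_of_mem_edges he, fun h => hAc _ h (c.fst_mem_support_of_mem_edges he),
      fun h => hAc _ h (c.snd_mem_support_of_mem_edges he)⟩
  have h1 := ih _ (innerPart_le H A c) (edgeFin_lt (innerPart_le H A c) (e := s(b, s)) hbs (by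
    rintro ⟨-, h | h | h⟩
    · exact hbA h
    · exact hsA h
    · exact hb (c.fst_mem_support_of_mem_edges h))) l (hl.mono (innerPart_le H A c))
    (not_acyclic_of_cycle hc e1)
  have h2 := ih _ (outerPart_le H A) (edgeFin_lt (outerPart_le H A) (e := s(a, t)) hat
    (fun h => h.2.1 haA)) l (hl.mono (outerPart_le H A)) (not_acyclic_of_cycle hc e2)
  have h3 : (beta H : ℝ) + 1 ≤ beta (innerPart H A c) + beta (outerPart H A) := by
    exact_mod_cast beta_split H A c hc hAc hcl
  have h4 := sum_split H A c hAc l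
  linarith

/-- The constraints that are not tight: the edges of positive weight and the (edge sets of) cycles
of weight larger than `1`. -/
def slackIdx (H : SimpleGraph V) (l : Sym2 V → ℝ) : Finset (Sym2 V ⊕ Finset (Sym2 V)) :=
  univ.filter (Sum.elim (fun e => e ∈ H.edgeSet ∧ 0 < l e)
    (fun S => (∃ (v : V) (c : H.Walk v v), c.IsCycle ∧ c.edges.toFinset = S) ∧
      1 < ∑ e ∈ S, l e))

lemma mem_slackIdx_inl {e : Sym2 V} :
    Sum.inl e ∈ slackIdx H l ↔ e ∈ H.edgeSet ∧ 0 < l e := by simp [slackIdx]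

lemma mem_slackIdx_inr {S : Finset (Sym2 V)} :
    Sum.inr S ∈ slackIdx H l ↔
      (∃ (v : V) (c : H.Walk v v), c.IsCycle ∧ c.edges.toFinset = S) ∧ 1 < ∑ e ∈ S, l e := by
  simp [slackIdx]

/-- If every positive edge lies on at most two tight cycles, then the weights can be moved without
changing the tight constraints. -/
lemma exists_direction (hl : Wtd H l) (hH : ¬ H.IsAcyclic) (hh : ∀ e ∈ H.edgeSet, l e < 1 / 2)
    (h3 : ∀ e, 0 < l e → ∀ S1 ∈ tight H l, ∀ S2 ∈ tight H l, ∀ S3 ∈ tight H l,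
      e ∈ S1 → e ∈ S2 → e ∈ S3 → S1 = S2 ∨ S1 = S3 ∨ S2 = S3) :
    ∃ d : Sym2 V → ℝ, (∀ e, ¬ (e ∈ H.edgeSet ∧ 0 < l e) → d e = 0) ∧
      (∀ S ∈ tight H l, ∑ e ∈ S, d e = 0) ∧ (∃ e, d e < 0) ∧ ∑ e ∈ edgeFin H, d e ≤ 0 := by
  set P : Finset (Sym2 V) := univ.filter (fun e => e ∈ H.edgeSet ∧ 0 < l e) with hP
  set T : Finset (Finset (Sym2 V)) := univ.filter (· ∈ tight H l) with hT
  have hSe : ∀ S ∈ tight H l, ∀ e ∈ S, e ∈ H.edgeSet := by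
    rintro S ⟨v, c, hc, rfl, hw⟩ e he
    exact c.edges_subset_edgeSet (by simpa using he)
  have hcount : T.card * 3 ≤ P.card * 2 := by
    refine card_mul_le_card_mul (fun S e => e ∈ S) ?_ ?_
    · intro S hS
      simp only [hT, mem_filter, mem_univ, true_and] at hS
      have hw : ∑ e ∈ S, l e = 1 := by obtain ⟨v, c, hc, rfl, hw⟩ := hS; exact hw
      set Q := bipartiteAbove (fun S e => e ∈ S) P S with hQ
      have hQS : Q = S.filter (fun e => 0 < l e) := by
        ext e
        simp only [hQ, mem_bipartiteAbove, hP, mem_filter, mem_univ, true_and]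
        have := hSe S hS e
        tauto
      have hw' : ∑ e ∈ Q, l e = 1 := by
        rw [hQS, sum_filter, ← hw]
        refine sum_congr rfl fun e _ => ?_
        split_ifs with h
        · rfl
        · exact le_antisymm (hl.nonneg e) (not_lt.1 h)
      by_contra hc
      push Not at hc
      have hne : Q.Nonempty := by
        rw [nonempty_iff_ne_empty]
        intro h
        rw [h] at hw'
        simp at hw'
      have : ∑ e ∈ Q, l e < ∑ e ∈ Q, (1 / 2 : ℝ) := by
        refine sum_lt_sum_of_nonempty hne fun e he => hh e (hSe S hS e ?_)
        rw [hQS] at he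
        exact (mem_filter.1 he).1
      rw [hw', sum_const, nsmul_eq_mul] at this
      have h2 : (Q.card : ℝ) ≤ 2 := by exact_mod_cast (by omega : Q.card ≤ 2)
      linarith
    · intro e he
      simp only [hP, mem_filter, mem_univ, true_and] at he
      by_contra hc
      push Not at hc
      obtain ⟨S1, m1, S2, m2, S3, m3, n1, n2, n3⟩ := two_lt_card.1 hc
      simp only [mem_bipartiteBelow, hT, mem_filter, mem_univ, true_and] at m1 m2 m3
      rcases h3 e he.2 S1 m1.1 S2 m2.1 S3 m3.1 m1.2 m2.2 m3.2 with h | h | h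
      · exact n1 h
      · exact n2 h
      · exact n3 h
  have hPne : 0 < P.card := by
    rw [card_pos]
    have := one_le_sum hl hH
    by_contra hc
    rw [not_nonempty_iff_eq_empty] at hc
    have h0 : ∑ e ∈ edgeFin H, l e = 0 := by
      refine sum_eq_zero fun e he => ?_
      by_contra hne
      have : e ∈ P := by
        simp only [hP, mem_filter, mem_univ, true_and]
        exact ⟨mem_edgeFin.1 he, lt_of_le_of_ne (hl.nonneg e) (Ne.symm hne)⟩
      rw [hc] at this
      simp at this
    linarith
  -- a vector in the kernel of the incidence map from positive edges to tight cycles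
  let ext0 : (P → ℝ) → Sym2 V → ℝ := fun f e => if h : e ∈ P then f ⟨e, h⟩ else 0
  let F : (P → ℝ) →ₗ[ℝ] (T → ℝ) :=
    { toFun := fun f S => ∑ e ∈ (S : Finset (Sym2 V)), ext0 f e
      map_add' := by
        intro f g; ext S
        simp only [Pi.add_apply, ← sum_add_distrib]
        refine sum_congr rfl fun e _ => ?_
        simp only [ext0]; split_ifs <;> simp
      map_smul' := by
        intro a f; ext S
        simp only [Pi.smul_apply, smul_eq_mul, mul_sum, RingHom.id_apply]
        refine sum_congr rfl fun e _ => ?_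
        simp only [ext0]; split_ifs <;> simp }
  have hker : LinearMap.ker F ≠ ⊥ := by
    apply LinearMap.ker_ne_bot_of_finrank_lt
    simp only [Module.finrank_fintype_fun_eq_card, Fintype.card_coe]
    omega
  obtain ⟨f, hf, hf0⟩ := Submodule.exists_mem_ne_zero_of_ne_bot hker
  have hfT : ∀ S ∈ tight H l, ∑ e ∈ S, ext0 f e = 0 := by
    intro S hS
    have := congrFun (LinearMap.mem_ker.1 hf) ⟨S, by simpa [hT] using hS⟩
    exact this
  have hfP : ∀ e, ¬ (e ∈ H.edgeSet ∧ 0 < l e) → ext0 f e = 0 := by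
    intro e he
    have : e ∉ P := by simpa [hP] using he
    simp [ext0, this]
  obtain ⟨e0, he0⟩ : ∃ e, ext0 f e ≠ 0 := by
    by_contra hc
    push Not at hc
    apply hf0
    ext ⟨e, he⟩
    have := hc e
    simpa [ext0, he] using this
  have fin : ∀ d : Sym2 V → ℝ, (∀ e, ¬ (e ∈ H.edgeSet ∧ 0 < l e) → d e = 0) → d e0 ≠ 0 →
      ∑ e ∈ edgeFin H, d e ≤ 0 → ∃ e, d e < 0 := by
    intro d hd hd0 hs
    by_contra hc
    push Not at hc
    have h1 := (sum_eq_zero_iff_of_nonneg (fun e _ => hc e)).1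
      (le_antisymm hs (sum_nonneg fun e _ => hc e))
    have : e0 ∈ edgeFin H := by
      rw [mem_edgeFin]
      by_contra h
      exact hd0 (hd e0 fun h' => h h'.1)
    exact hd0 (h1 e0 this)
  rcases le_total (∑ e ∈ edgeFin H, ext0 f e) 0 with h | h
  · exact ⟨ext0 f, hfP, hfT, fin _ hfP he0 h, h⟩
  · have q1 : ∀ e, ¬ (e ∈ H.edgeSet ∧ 0 < l e) → -ext0 f e = 0 := fun e he => by
      rw [hfP e he, neg_zero]
    have q2 : ∑ e ∈ edgeFin H, -ext0 f e ≤ 0 := by rw [sum_neg_distrib]; linarith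
    refine ⟨fun e => - ext0 f e, q1, fun S hS => ?_, fin _ q1 (neg_ne_zero.2 he0) q2, q2⟩
    rw [sum_neg_distrib, hfT S hS, neg_zero]

/-- The dimension of the cycle space of a graph without Kuratowski minors is less than twice the
total weight, if all cycles have weight at least `1`. -/
theorem bound (H : SimpleGraph V) (hk : ¬ Kur H) : Bound H := by
  induction hn : (edgeFin H).card using Nat.strong_induction_on generalizing H with | _ n ihn
  have ih : ∀ H' : SimpleGraph V, H' ≤ H → (edgeFin H').card < (edgeFin H).card → Bound H' :=
    fun H' h1 h2 => ihn _ (hn ▸ h2) H' (fun h => hk (h.mono h1)) rfl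
  clear ihn
  intro l hl hH
  induction hN : (slackIdx H l).card using Nat.strong_induction_on generalizing l with | _ N ihN
  by_cases hheavy : ∃ e ∈ H.edgeSet, 1 / 2 ≤ l e
  · obtain ⟨e, he, hle⟩ := hheavy
    exact bound_heavy ih hl hH he hle
  push Not at hheavy
  by_cases hsep : ∃ (v : V) (c : H.Walk v v), c.IsCycle ∧ ∑ e ∈ c.edges.toFinset, l e = 1 ∧
      ¬ NonSep c
  · obtain ⟨v, c, hc, hw, hns⟩ := hsep
    exact bound_sep ih hl hc hw hns
  push Not at hsep
  obtain ⟨d, hd0, hdT, ⟨e0, he0⟩, hdS⟩ := exists_direction hl hH hheavy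
    (fun e he S1 h1 S2 h2 S3 h3 i1 i2 i3 =>
      lemma_three_cycles hl hheavy hsep hk he h1 h2 h3 i1 i2 i3)
  obtain ⟨t, ht0, ht, i, hi, hti⟩ := exists_step (slackIdx H l)
    (Sum.elim l (fun S => ∑ e ∈ S, l e - 1)) (Sum.elim d (fun S => ∑ e ∈ S, d e)) (by
      rintro (e | S) h
      · exact (mem_slackIdx_inl.1 h).2
      · have := (mem_slackIdx_inr.1 h).2
        simp only [Sum.elim_inr]
        linarith)
    ⟨Sum.inl e0, mem_slackIdx_inl.2 (by
      by_contra h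
      rw [hd0 e0 h] at he0
      exact lt_irrefl _ he0), he0⟩
  set l' : Sym2 V → ℝ := fun e => l e + t * d e with hl'
  have hsum : ∀ S : Finset (Sym2 V), ∑ e ∈ S, l' e = ∑ e ∈ S, l e + t * ∑ e ∈ S, d e := by
    intro S; rw [mul_sum, ← sum_add_distrib]
  have hW : Wtd H l' := by
    constructor
    · intro e
      by_cases he : e ∈ H.edgeSet ∧ 0 < l e
      · exact ht (Sum.inl e) (mem_slackIdx_inl.2 he)
      · simp only [hl']
        rw [hd0 e he, mul_zero, add_zero]
        exact hl.nonneg e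
    · intro v c hc
      rcases eq_or_lt_of_le (hl.cyc v c hc) with h | h
      · rw [hsum, hdT _ ⟨v, c, hc, rfl, h.symm⟩, ← h]
        simp
      · have := ht (Sum.inr c.edges.toFinset) (mem_slackIdx_inr.2 ⟨⟨v, c, hc, rfl⟩, h⟩)
        simp only [Sum.elim_inr] at this
        rw [hsum]
        linarith
  have hlt : (slackIdx H l').card < N := by
    rw [← hN]
    refine card_lt_card ⟨?_, fun hs => ?_⟩
    · rintro (e | S) h
      · rw [mem_slackIdx_inl] at h ⊢
        by_contra hc
        have h2 := h.2
        have h4 : ¬ 0 < l e := fun h' => hc ⟨h.1, h'⟩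
        simp only [hl', hd0 e hc, mul_zero, add_zero] at h2
        exact h4 h2
      · rw [mem_slackIdx_inr] at h ⊢
        obtain ⟨⟨v, c, hc, rfl⟩, h2⟩ := h
        refine ⟨⟨v, c, hc, rfl⟩, lt_of_le_of_ne (hl.cyc v c hc) fun h => ?_⟩
        rw [hsum, hdT _ ⟨v, c, hc, rfl, h.symm⟩, ← h] at h2
        simp at h2
    · have hi' := hs hi
      rcases i with e | S
      · have := (mem_slackIdx_inl.1 hi').2
        simp only [Sum.elim_inl] at hti
        simp only [hl', hti, lt_self_iff_false] at this
      · have := (mem_slackIdx_inr.1 hi').2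
        simp only [Sum.elim_inr] at hti
        rw [hsum] at this
        linarith
  have h1 := ihN _ hlt l' hW rfl
  rw [hsum] at h1
  nlinarith

end
end AbbottZhou

/-! ### Edge weights and long cycles -/

namespace AbbottZhou
open scoped Classical
open Finset
noncomputable section

variable {V : Type*} {G : SimpleGraph V}

/-- Replacing the two edges of a cycle at its base vertex by a chord between the two neighbours gives
a cycle shorter by one. -/
lemma shortcut {a : V} {c : G.Walk a a} (hc : c.IsCycle) (h4 : 4 ≤ c.length)
    (had : G.Adj c.penultimate c.snd) :
    ∃ x, ∃ c' : G.Walk x x, c'.IsCycle ∧ c'.length + 1 = c.length ∧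
      ∀ l : Sym2 V → ℝ, (c'.edges.map l).sum + (l s(a, c.snd) + l s(a, c.penultimate)) =
        (c.edges.map l).sum + l s(c.snd, c.penultimate) := by
  cases c with
  | nil => simp at h4
  | @cons _ b _ h p =>
    have hpn : ¬ p.Nil := SimpleGraph.Walk.not_nil_of_isCycle_cons hc
    obtain ⟨d, q, h', rfl⟩ : ∃ d, ∃ q : G.Walk b d, ∃ h' : G.Adj d a, p = q.concat h' :=
      ⟨_, p.dropLast, p.adj_penultimate hpn, (p.concat_dropLast _).symm⟩
    rw [SimpleGraph.Walk.cons_isCycle_iff] at hc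
    have hp : (SimpleGraph.Walk.cons h (q.concat h')).penultimate = d := by
      rw [SimpleGraph.Walk.penultimate_cons_of_not_nil _ _ hpn, SimpleGraph.Walk.penultimate_concat]
    have hq : q.IsPath := ((SimpleGraph.Walk.concat_isPath_iff _).1 hc.1).1
    simp only [SimpleGraph.Walk.snd_cons, hp] at had ⊢
    simp only [SimpleGraph.Walk.length_cons, SimpleGraph.Walk.length_concat] at h4
    refine ⟨d, .cons had q, ?_, ?_, ?_⟩
    · rw [SimpleGraph.Walk.cons_isCycle_iff]
      refine ⟨hq, fun h => ?_⟩
      have := hq.length_eq_one_of_mem_edges (Sym2.eq_swap ▸ h)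
      omega
    · simp
    · intro l
      simp only [SimpleGraph.Walk.edges_cons, SimpleGraph.Walk.edges_concat, List.map_cons,
        List.sum_cons, List.concat_eq_append, List.map_append, List.sum_append, List.map_nil,
        List.sum_nil, Sym2.eq_swap (a := d)]
      ring

variable [Fintype V]

/-- Double counting: a weight on edges that splits into a part at each end may be summed over
vertices. -/
lemma sum_edge_eq_sum_adj (H : SimpleGraph V) (g : Sym2 V → ℝ) (h : V → V → ℝ)
    (hg : ∀ a b, H.Adj a b → g s(a, b) = h a b + h b a) :
    ∑ e ∈ edgeFin H, g e = ∑ a, ∑ b with H.Adj a b, h a b := by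
  have h1 : ∑ a, ∑ b with H.Adj a b, h a b =
      ∑ p ∈ (univ : Finset (V × V)) with H.Adj p.1 p.2, h p.1 p.2 := by
    rw [Finset.sum_filter, Fintype.sum_prod_type]
    simp only [Finset.sum_filter]
  rw [h1, ← Finset.sum_fiberwise_of_maps_to (t := edgeFin H) (g := fun p : V × V => s(p.1, p.2))
    (fun p hp => by simpa using hp)]
  refine Finset.sum_congr rfl fun e => ?_
  induction e using Sym2.ind with | _ a b => ?_
  intro hab
  have hab : H.Adj a b := by simpa using hab
  have : (univ.filter fun p : V × V => H.Adj p.1 p.2).filter (fun p => s(p.1, p.2) = s(a, b)) =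
      {(a, b), (b, a)} := by
    ext ⟨x, y⟩
    simp only [mem_filter, mem_univ, true_and, Sym2.eq_iff, mem_insert, mem_singleton,
      Prod.mk.injEq]
    constructor
    · exact fun h => h.2
    · rintro (⟨rfl, rfl⟩ | ⟨rfl, rfl⟩)
      · exact ⟨hab, by simp⟩
      · exact ⟨hab.symm, by simp⟩
  rw [this, Finset.sum_pair (by simp [hab.ne]), hg a b hab]

/-- `deg G a` is the number of neighbours of `a`. -/
def deg (G : SimpleGraph V) (a : V) : ℕ := (univ.filter (G.Adj a)).card

/-- For adjacent `a` and `b`, `tri G a b` says that the edge `ab` lies in a triangle. -/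
def tri (G : SimpleGraph V) (a b : V) : Prop := ∃ c, G.Adj a c ∧ G.Adj b c

omit [Fintype V] in
lemma tri_comm {a b : V} : tri G a b ↔ tri G b a := by
  simp only [tri, and_comm]

/-- The charge which a vertex of degree three on a triangle shifts from its triangular
edges to its third edge. -/
def shift (G : SimpleGraph V) (a : V) : ℝ :=
  if deg G a = 3 ∧ ∃ b, G.Adj a b ∧ tri G a b then 1 / 24 else 0

/-- The share of the edge weight `ell` sitting at the end `a` of the edge `ab`. -/
def half (G : SimpleGraph V) (a b : V) : ℝ :=
  if tri G a b then 1 / 24 - shift G a else 1 / 24 + shift G a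

/-- The edge weight to which the length bound is applied: `1/12`, adjusted at both ends
by `shift`. -/
def ell (G : SimpleGraph V) : Sym2 V → ℝ :=
  Sym2.lift ⟨fun a b => half G a b + half G b a, fun _ _ => add_comm _ _⟩

@[simp] lemma ell_mk (a b : V) : ell G s(a, b) = half G a b + half G b a := rfl

lemma shift_cases (a : V) : shift G a = 0 ∨ shift G a = 1 / 24 := by
  unfold shift; split_ifs <;> simp

lemma deg_of_shift {a : V} (h : shift G a ≠ 0) : deg G a = 3 := by
  unfold shift at h; split_ifs at h with h' <;> simp_all

lemma half_nonneg (a b : V) : 0 ≤ half G a b := by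
  unfold half; rcases shift_cases (G := G) a with h | h <;> rw [h] <;> split_ifs <;> norm_num

lemma ell_nonneg (e : Sym2 V) : 0 ≤ ell G e := by
  induction e using Sym2.ind with | _ a b => ?_
  exact add_nonneg (half_nonneg a b) (half_nonneg b a)

/-- Two triangles sharing an edge coincide, as otherwise there is a 4-cycle. -/
def NoFour (G : SimpleGraph V) : Prop :=
  ∀ a b c d, G.Adj a b → G.Adj a c → G.Adj b c → G.Adj a d → G.Adj b d → c = d

omit [Fintype V] in
lemma noFour (h : ¬ G.HasCycleOfLength 4) : NoFour G := by
  intro a b c d hab hac hbc had hbd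
  by_contra hcd
  refine h ⟨a, .cons hac (.cons hbc.symm (.cons hbd (.cons had.symm .nil))), ?_, rfl⟩
  rw [SimpleGraph.Walk.cons_isCycle_iff]
  have := hab.ne
  have := hac.ne
  have := hbc.ne
  have := had.ne
  have := hbd.ne
  simp
  grind

/-- Two triangular edges at a vertex of degree three lie in one triangle: two triangles through the
vertex without a common edge would need four neighbours. -/
lemma bad_adj (h4 : NoFour G) {a b d : V} (hs : shift G a ≠ 0) (hab : G.Adj a b)
    (had : G.Adj a d) (hbd : b ≠ d) (tb : tri G a b) (td : tri G a d) : G.Adj b d := by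
  obtain ⟨z, haz, hbz⟩ := tb
  obtain ⟨w, haw, hdw⟩ := td
  have hdeg := deg_of_shift hs
  by_contra hn
  have hzw : z ≠ w := by
    rintro rfl
    exact hbd (h4 a z b d haz hab hbz.symm had hdw.symm)
  have hzd : z ≠ d := by rintro rfl; exact hn hbz
  have hwb : w ≠ b := by rintro rfl; exact hn hdw.symm
  have : ({b, d, z, w} : Finset V) ⊆ univ.filter (G.Adj a) := by
    intro x hx
    simp only [mem_insert, mem_singleton] at hx
    rcases hx with rfl | rfl | rfl | rfl <;> simpa
  have := Finset.card_le_card this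
  rw [Finset.card_eq_of_equiv_fin (n := 4)] at this
  · unfold deg at hdeg; omega
  · refine Finset.equivFinOfCardEq ?_
    have := hbz.ne
    have := hdw.ne
    rw [Finset.card_insert_of_notMem, Finset.card_insert_of_notMem, Finset.card_insert_of_notMem,
      Finset.card_singleton] <;> grind

/-- At a vertex which shifts charge, going through the triangle weighs as much as its third edge, so
shortcuts do not change the weight. -/
lemma ell_shortcut {a b d : V} (hs : shift G a ≠ 0) (hab : G.Adj a b)
    (had : G.Adj a d) (hbd : G.Adj b d) :
    ell G s(a, b) + ell G s(a, d) = ell G s(b, d) := by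
  have t1 : tri G a b := ⟨d, had, hbd⟩
  have t2 : tri G a d := ⟨b, hab, hbd.symm⟩
  have t3 : tri G b d := ⟨a, hab.symm, had.symm⟩
  have := (shift_cases (G := G) a).resolve_left hs
  simp only [ell_mk, half, t1, t2, t3, tri_comm.1 t1, tri_comm.1 t2, tri_comm.1 t3, if_true, this]
  ring

/-- Every cycle of length at least twelve has weight at least one. If some vertex loses charge
along the cycle, the cycle uses two edges of a triangle there and can be shortened
without changing its weight; otherwise the shifts only add to the initial `1/12` per edge. -/
lemma cycle_weight (h4 : NoFour G) (h11 : ¬ G.HasCycleOfLength 11) (n : ℕ) (hn : 12 ≤ n) {v : V}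
    (c : G.Walk v v) (hc : c.IsCycle) (hlen : c.length = n) : 1 ≤ (c.edges.map (ell G)).sum := by
  induction n using Nat.strong_induction_on generalizing v with | _ n ih
  by_cases hbad : ∃ a, ∃ c' : G.Walk a a, c'.IsCycle ∧ c'.length = n ∧ c'.edges.Perm c.edges ∧
      shift G a ≠ 0 ∧ tri G a c'.snd ∧ tri G a c'.penultimate
  · obtain ⟨a, c', hc', hl, hp, hs, t1, t2⟩ := hbad
    have a1 := c'.adj_snd hc'.not_nil
    have a2 := (c'.adj_penultimate hc'.not_nil).symm
    have a3 := bad_adj h4 hs a1 a2 hc'.snd_ne_penultimate t1 t2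
    obtain ⟨x, c'', hc'', hl'', hsum⟩ := shortcut hc' (by omega) a3.symm
    have hne : c''.length ≠ 11 := fun h => h11 ⟨_, c'', hc'', h⟩
    have := ih c''.length (by omega) (by omega) c'' hc'' rfl
    have h1 := hsum (ell G)
    have h2 := ell_shortcut hs a1 a2 a3
    rw [← (hp.map (ell G)).sum_eq]
    linarith
  · let C : SimpleGraph V := c.toSubgraph.spanningCoe
    have hC : ∀ a b, C.Adj a b ↔ s(a, b) ∈ c.edges := fun a b => by
      simp [C, SimpleGraph.Walk.adj_toSubgraph_iff_mem_edges]
    have hE : edgeFin C = c.edges.toFinset := by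
      ext e
      induction e using Sym2.ind with | _ a b => ?_
      simp [hC]
    have hnd := hc.isTrail.edges_nodup
    have e1 : (c.edges.map (ell G)).sum = ∑ a, ∑ b with C.Adj a b, half G a b := by
      rw [← sum_edge_eq_sum_adj C (ell G) (half G) (fun _ _ _ => rfl), hE,
        List.sum_toFinset _ hnd]
    have e2 : (n : ℝ) / 12 = ∑ a, ∑ b with C.Adj a b, (1 / 24 : ℝ) := by
      rw [← sum_edge_eq_sum_adj C (fun _ => 1 / 12) _ (fun _ _ _ => by norm_num), hE,
        List.sum_toFinset _ hnd]
      simp [hlen]; ring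
    have e3 : (1 : ℝ) ≤ n / 12 := by
      rw [le_div_iff₀ (by norm_num)]; exact_mod_cast by omega
    rw [e1]
    refine (e3.trans_eq e2).trans (Finset.sum_le_sum fun a _ => ?_)
    by_cases ha : a ∈ c.support
    · let c' := c.rotate a ha
      have hc' : c'.IsCycle := hc.rotate ha
      have hp : c'.edges.Perm c.edges := (c.rotate_edges a ha).perm
      have hN : univ.filter (fun b => C.Adj a b) = {c'.snd, c'.penultimate} := by
        ext b
        have := Set.ext_iff.1 hc'.neighborSet_toSubgraph_endpoint b
        simpa [C, c', SimpleGraph.Walk.toSubgraph_rotate] using this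
      rw [hN, Finset.sum_pair hc'.snd_ne_penultimate, Finset.sum_pair hc'.snd_ne_penultimate]
      unfold half
      by_cases hs : shift G a = 0
      · simp [hs]
      · have hs' := (shift_cases (G := G) a).resolve_left hs
        have : ¬ (tri G a c'.snd ∧ tri G a c'.penultimate) := fun h =>
          hbad ⟨a, c', hc', by simp [c', hlen], hp, hs, h.1, h.2⟩
        rw [hs']
        split_ifs with t1 t2
        · exact absurd ⟨t1, t2⟩ this
        all_goals norm_num
    · have : univ.filter (fun b => C.Adj a b) = ∅ := by
        ext b
        simp only [mem_filter, mem_univ, true_and, notMem_empty, iff_false, hC]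
        exact fun h => ha (c.fst_mem_support_of_mem_edges h)
      simp [this]

end
end AbbottZhou

/-! ### A vertex of small degree -/

namespace AbbottZhou
open scoped Classical
open Finset
noncomputable section

variable {V : Type*} [Fintype V] {G : SimpleGraph V}

/-- The edge sets of the triangles of `G`. -/
def triangles (G : SimpleGraph V) : Finset (Finset (Sym2 V)) :=
  univ.filter fun S => ∃ a b c, G.Adj a b ∧ G.Adj a c ∧ G.Adj b c ∧
    S = {s(a, b), s(a, c), s(b, c)}

lemma triangles_spec {S : Finset (Sym2 V)} (hS : S ∈ triangles G) {x y : V} (h : s(x, y) ∈ S) :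
    ∃ z, G.Adj x y ∧ G.Adj x z ∧ G.Adj y z ∧ S = {s(x, y), s(x, z), s(y, z)} := by
  simp only [triangles, mem_filter, mem_univ, true_and] at hS
  obtain ⟨a, b, c, hab, hac, hbc, rfl⟩ := hS
  simp only [mem_insert, mem_singleton, Sym2.eq_iff] at h
  rcases h with (⟨rfl, rfl⟩ | ⟨rfl, rfl⟩) | (⟨rfl, rfl⟩ | ⟨rfl, rfl⟩) | (⟨rfl, rfl⟩ | ⟨rfl, rfl⟩)
  · exact ⟨c, hab, hac, hbc, rfl⟩
  · exact ⟨c, hab.symm, hbc, hac, by ext e; simp [Sym2.eq_swap (a := x)]; tauto⟩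
  · exact ⟨b, hac, hab, hbc.symm, by ext e; simp [Sym2.eq_swap (a := b)]; tauto⟩
  · exact ⟨b, hac.symm, hbc.symm, hab, by
      ext e; simp [Sym2.eq_swap (a := x)]; tauto⟩
  · exact ⟨a, hbc, hab.symm, hac.symm, by
      ext e; simp [Sym2.eq_swap (a := a)]; tauto⟩
  · exact ⟨a, hbc.symm, hac.symm, hab.symm, by
      ext e
      simp only [mem_insert, mem_singleton, Sym2.eq_swap (a := x) (b := a),
        Sym2.eq_swap (a := x) (b := y), Sym2.eq_swap (a := y) (b := a)]
      tauto⟩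

/-- Distinct triangles have no edge in common. -/
lemma triangles_eq (h4 : NoFour G) {S T : Finset (Sym2 V)} (hS : S ∈ triangles G)
    (hT : T ∈ triangles G) {e : Sym2 V} (h1 : e ∈ S) (h2 : e ∈ T) : S = T := by
  induction e using Sym2.ind with | _ x y => ?_
  obtain ⟨z, hxy, hxz, hyz, rfl⟩ := triangles_spec hS h1
  obtain ⟨w, -, hxw, hyw, rfl⟩ := triangles_spec hT h2
  rw [h4 x y z w hxy hxz hyz hxw hyw]

lemma mem_biUnion_triangles {x y : V} :
    s(x, y) ∈ (triangles G).biUnion id ↔ G.Adj x y ∧ tri G x y := by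
  simp only [mem_biUnion, id]
  constructor
  · rintro ⟨S, hS, h⟩
    obtain ⟨z, hxy, hxz, hyz, -⟩ := triangles_spec hS h
    exact ⟨hxy, z, hxz, hyz⟩
  · rintro ⟨hxy, z, hxz, hyz⟩
    exact ⟨{s(x, y), s(x, z), s(y, z)},
      by simp only [triangles, mem_filter, mem_univ, true_and]; exact ⟨x, y, z, hxy, hxz, hyz, rfl⟩,
      by simp⟩

lemma exists_min_edge (w : Sym2 V → ℝ) {S : Finset (Sym2 V)} (hS : S ∈ triangles G) :
    ∃ e ∈ S, 3 * w e ≤ ∑ f ∈ S, w f := by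
  have hcard : S.card = 3 ∧ S.Nonempty := by
    simp only [triangles, mem_filter, mem_univ, true_and] at hS
    obtain ⟨a, b, c, hab, hac, hbc, rfl⟩ := hS
    refine ⟨Finset.card_eq_three.2 ⟨_, _, _, ?_, ?_, ?_, rfl⟩, by simp⟩ <;>
    · have := hab.ne
      have := hac.ne
      have := hbc.ne
      simp only [ne_eq, Sym2.eq_iff]
      grind
  obtain ⟨e, he, hmin⟩ := S.exists_min_image w hcard.2
  refine ⟨e, he, ?_⟩
  have := Finset.card_nsmul_le_sum S w (w e) hmin
  simpa [hcard.1] using this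

/-- One edge can be removed from every triangle at a total cost of at most a third of the
weight of all triangular edges. -/
lemma exists_delete [Nonempty V] (h4 : NoFour G) (w : Sym2 V → ℝ) :
    ∃ D : Finset (Sym2 V), D ⊆ edgeFin G ∧ (∀ S ∈ triangles G, ∃ e ∈ S, e ∈ D) ∧
      3 * ∑ e ∈ D, w e ≤ ∑ e ∈ (triangles G).biUnion id, w e := by
  have : Nonempty (Sym2 V) := ⟨s(Classical.arbitrary V, Classical.arbitrary V)⟩
  choose! f hf hf' using fun S (hS : S ∈ triangles G) => exists_min_edge w hS
  have hdis : (triangles G : Set (Finset (Sym2 V))).PairwiseDisjoint id := by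
    intro S hS T hT hne
    rw [Function.onFun, Finset.disjoint_left]
    exact fun e h1 h2 => hne (triangles_eq h4 hS hT h1 h2)
  refine ⟨(triangles G).image f, ?_, fun S hS => ⟨f S, hf S hS, mem_image_of_mem _ hS⟩, ?_⟩
  · intro e he
    obtain ⟨S, hS, rfl⟩ := mem_image.1 he
    have := hf S hS
    generalize f S = e at this
    induction e using Sym2.ind with | _ x y => ?_
    obtain ⟨z, hxy, -⟩ := triangles_spec hS this
    simpa using hxy
  · rw [Finset.sum_biUnion hdis, Finset.sum_image, Finset.mul_sum]
    · exact Finset.sum_le_sum fun S hS => hf' S hS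
    · intro S hS T hT h
      exact triangles_eq h4 hS hT (hf S hS) (h ▸ hf T hT)

/-- The share at the end `a` of the edge `ab` in `1 - 2 ell`, where triangular edges are
discounted by a third to pay for the removed edges. -/
def share (G : SimpleGraph V) (a b : V) : ℝ :=
  if tri G a b then 5 / 18 + 4 / 3 * shift G a else 5 / 12 - 2 * shift G a

/-- The final charge of a vertex of degree at least three is at least `1`: it is at least `3 * 5/12`
for a vertex of degree three off all triangles, `3 * 1/3` for one on a triangle, and `4 * 5/18` for
a vertex of larger degree. -/
lemma one_le_sum_share (a : V) (h3 : 3 ≤ deg G a) : 1 ≤ ∑ b with G.Adj a b, share G a b := by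
  have key : ∀ t : ℝ, (∀ b, G.Adj a b → t ≤ share G a b) →
      deg G a * t ≤ ∑ b with G.Adj a b, share G a b := fun t ht => by
    have := Finset.card_nsmul_le_sum (univ.filter (G.Adj a)) (share G a) t
      (fun b hb => ht b (by simpa using hb))
    simpa [deg] using this
  by_cases hs : shift G a = 0
  · by_cases h : deg G a = 3
    · have := key (5 / 12) fun b hab => by
        have : ¬ tri G a b := fun ht => by
          simp [shift, h] at hs
          exact hs b hab ht
        simp [share, this, hs]
      rw [h] at this
      norm_num at this ⊢
      linarith
    · have := key (5 / 18) fun b hab => by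
        unfold share; split_ifs <;> rw [hs] <;> norm_num
      have h4 : (4 : ℝ) ≤ deg G a := by exact_mod_cast (by omega : 4 ≤ deg G a)
      linarith
  · have := key (1 / 3) fun b hab => by
      unfold share; rw [(shift_cases (G := G) a).resolve_left hs]; split_ifs <;> norm_num
    rw [deg_of_shift hs] at this
    norm_num at this ⊢
    linarith

/-- A finite nonempty graph without Kuratowski minors and without cycles of length between four
and eleven has a vertex of degree at most two. -/
theorem exists_deg_le_two [Nonempty V] (hk : ¬ Kur G)
    (hN : ∀ n, 4 ≤ n → n ≤ 11 → ¬ G.HasCycleOfLength n) : ∃ a, deg G a ≤ 2 := by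
  by_contra! h3
  have h4 := noFour (hN 4 (by norm_num) (by norm_num))
  obtain ⟨D, hDG, hD, hDw⟩ := exists_delete h4 (fun e => 1 - 2 * ell G e)
  let G' := G.deleteEdges (D : Set (Sym2 V))
  have hle : G' ≤ G := G.deleteEdges_le _
  have hW : Wtd G' (ell G) := by
    refine ⟨ell_nonneg, fun v c hc => ?_⟩
    rw [sum_toFinset_eq hc.isTrail]
    have hc' := hc.mapLe hle
    have h12 : 12 ≤ c.length := by
      have h3 := hc.three_le_length
      by_contra! hlt
      by_cases h : c.length = 3
      · clear hc'
        match c, h with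
        | .cons (v := b) h1 (.cons (v := d) h2 (.cons h5 .nil)), _ =>
          obtain ⟨e, heS, heD⟩ := hD {s(v, b), s(v, d), s(b, d)} (by
            simp only [triangles, mem_filter, mem_univ, true_and]
            exact ⟨v, b, d, hle h1, hle h5.symm, hle h2, rfl⟩)
          simp only [G', SimpleGraph.deleteEdges_adj, mem_coe] at h1 h2 h5
          simp only [mem_insert, mem_singleton] at heS
          rcases heS with rfl | rfl | rfl
          · exact h1.2 heD
          · exact h5.2 (Sym2.eq_swap ▸ heD)
          · exact h2.2 heD
      · exact hN c.length (by omega) (by omega) ⟨v, _, hc', by simp⟩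
    have := cycle_weight h4 (hN 11 (by norm_num) le_rfl) _ h12 (c.mapLe hle) hc' (by simp)
    simpa using this
  have hE : edgeFin G' = edgeFin G \ D := by
    ext e; simp [G', SimpleGraph.edgeSet_deleteEdges]
  have hsum : ∑ e ∈ edgeFin G', (1 - 2 * ell G e) + ∑ e ∈ D, (1 - 2 * ell G e) =
      ∑ e ∈ edgeFin G, (1 - 2 * ell G e) := by
    rw [hE]; exact Finset.sum_sdiff hDG
  have hU : (triangles G).biUnion id ⊆ edgeFin G := by
    intro e he
    induction e using Sym2.ind with | _ x y => ?_
    simpa using (mem_biUnion_triangles.1 he).1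
  have hshare : ∑ e ∈ edgeFin G, ((1 - 2 * ell G e) -
      if e ∈ (triangles G).biUnion id then (1 - 2 * ell G e) / 3 else 0) =
      ∑ a, ∑ b with G.Adj a b, share G a b := by
    refine sum_edge_eq_sum_adj G _ _ fun a b hab => ?_
    simp only [mem_biUnion_triangles, hab, true_and, ell_mk, half, share,
      tri_comm (a := b) (b := a)]
    split_ifs <;> ring
  rw [Finset.sum_sub_distrib, ← Finset.sum_filter, Finset.filter_mem_eq_inter,
    Finset.inter_eq_right.2 hU, ← Finset.sum_div] at hshare
  have hn : (Fintype.card V : ℝ) ≤ ∑ a, ∑ b with G.Adj a b, share G a b := by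
    have := Finset.card_nsmul_le_sum univ (fun a => ∑ b with G.Adj a b, share G a b) 1
      (fun a _ => one_le_sum_share a (h3 a))
    simpa using this
  have hcard : ((edgeFin G').card : ℝ) + 1 ≤ beta G' + Fintype.card V := by
    exact_mod_cast card_edgeFin_lt G'
  have hsum' : ∑ e ∈ edgeFin G', (1 - 2 * ell G e) =
      (edgeFin G').card - 2 * ∑ e ∈ edgeFin G', ell G e := by
    rw [Finset.sum_sub_distrib, ← Finset.mul_sum]; simp
  have hnn : 0 ≤ ∑ e ∈ edgeFin G', ell G e := Finset.sum_nonneg fun e _ => ell_nonneg e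
  by_cases hac : G'.IsAcyclic
  · have := beta_eq_zero hac
    rw [this] at hcard
    push_cast at hcard
    linarith
  · have := bound G' (fun h => hk (h.mono hle)) (ell G) hW hac
    linarith

end
end AbbottZhou

/-! ### Colouring -/

namespace AbbottZhou
open scoped Classical
open Finset
noncomputable section

universe u
variable {V V' : Type*} {G : SimpleGraph V} {G' : SimpleGraph V'}

lemma isMinorOf_hom {W : Type*} {M : SimpleGraph W} (f : G' →g G) (hf : Function.Injective f)
    (h : M.IsMinorOf G') : M.IsMinorOf G := by
  obtain ⟨B, h1, h2, h3⟩ := h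
  refine ⟨fun w => f '' B w, fun w => ?_, fun a b hab => (Set.disjoint_image_iff hf).2 (h2 a b hab),
    fun a b hab => ?_⟩
  · refine (h1 w).map (SimpleGraph.induceHom f (Set.mapsTo_image f (B w))) ?_
    rintro ⟨_, x, hx, rfl⟩
    exact ⟨⟨x, hx⟩, rfl⟩
  · obtain ⟨u, hu, v, hv, h⟩ := h3 a b hab
    exact ⟨f u, ⟨u, hu, rfl⟩, f v, ⟨v, hv, rfl⟩, f.map_adj h⟩

/-- Graphs without Kuratowski minors and without cycles of length between four and eleven. -/
def Good (G : SimpleGraph V) : Prop :=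
  ¬ Kur G ∧ ∀ n, 4 ≤ n → n ≤ 11 → ¬ G.HasCycleOfLength n

lemma Good.of_hom (h : Good G) (f : G' →g G) (hf : Function.Injective f) : Good G' := by
  refine ⟨fun hk => h.1 (hk.imp (isMinorOf_hom f hf) (isMinorOf_hom f hf)), fun n h4 h11 => ?_⟩
  rintro ⟨v, c, hc, rfl⟩
  exact h.2 _ h4 h11 ⟨f v, c.map f, hc.map hf, by simp⟩

/-- A vertex of degree at most two can be coloured last. -/
lemma colorable_extend [Fintype V] (a : V) (ha : deg G a ≤ 2)
    (h : (G.induce {a}ᶜ).Colorable 3) : G.Colorable 3 := by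
  obtain ⟨C⟩ := h
  let col : V → Fin 3 := fun v => if hv : v ∈ ({a}ᶜ : Set V) then C ⟨v, hv⟩ else 0
  have hcol : ∀ v w, v ≠ a → w ≠ a → G.Adj v w → col v ≠ col w := fun v w hv hw hvw => by
    simp only [col, Set.mem_compl_iff, Set.mem_singleton_iff, hv, hw, not_false_eq_true, dif_pos]
    exact C.valid hvw
  obtain ⟨x, hx⟩ : ∃ x, x ∉ (univ.filter (G.Adj a)).image col := by
    by_contra! hall
    have := (Finset.card_le_card (fun x _ => hall x : univ ⊆ _)).trans Finset.card_image_le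
    simp only [Finset.card_univ, Fintype.card_fin] at this
    unfold deg at ha
    omega
  have hx : ∀ b, G.Adj a b → col b ≠ x := fun b hb he =>
    hx (mem_image.2 ⟨b, by simpa using hb, he⟩)
  refine ⟨SimpleGraph.Coloring.mk (Function.update col a x) fun {v w} hvw => ?_⟩
  by_cases hv : v = a
  · subst hv
    rw [Function.update_self, Function.update_of_ne hvw.ne']
    exact (hx w hvw).symm
  · by_cases hw : w = a
    · subst hw
      rw [Function.update_self, Function.update_of_ne hv]
      exact hx v hvw.symm
    · rw [Function.update_of_ne hv, Function.update_of_ne hw]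
      exact hcol v w hv hw hvw

/-- Induction on the number of vertices, removing a vertex of degree at most two. -/
lemma Good.colorable_finite (n : ℕ) : ∀ (V : Type u) [Fintype V] (G : SimpleGraph V),
    Fintype.card V = n → Good G → G.Colorable 3 := by
  induction n using Nat.strong_induction_on with | _ n ih
  intro V _ G hn hG
  rcases isEmpty_or_nonempty V with hV | hV
  · exact ⟨SimpleGraph.Coloring.mk (fun v => hV.elim v) fun {v} => hV.elim v⟩
  obtain ⟨a, ha⟩ := exists_deg_le_two hG.1 hG.2
  refine colorable_extend a ha (ih (Fintype.card ({a}ᶜ : Set V)) ?_ _ _ rfl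
    (hG.of_hom (SimpleGraph.Embedding.induce _).toHom Subtype.val_injective))
  rw [← hn]
  exact Fintype.card_subtype_lt (x := a) (by simp)

/-- The finite case extends to infinite graphs by compactness. -/
lemma Good.colorable (hG : Good G) : G.Colorable 3 :=
  SimpleGraph.nonempty_hom_of_forall_finite_subgraph_hom fun G' hfin => by
    have := hfin.fintype
    exact (Good.colorable_finite _ _ G'.coe rfl (hG.of_hom G'.hom G'.hom_injective)).some

end
end AbbottZhou

/-- **Abbott–Zhou** (answering a question of Erdős): there is a constant `C`
(indeed `C = 11` suffices) such that every planar simple graph containing no cycle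
of any length from 4 to `C` is 3-colorable. -/
theorem abbott_zhou :
    ∃ C : ℕ, C = 11 ∧ ∀ (V : Type) (G : SimpleGraph V),
      G.Planar → (∀ n, 4 ≤ n → n ≤ C → ¬ G.HasCycleOfLength n) → G.Colorable 3 := by
  refine ⟨11, rfl, fun V G hG hN => ?_⟩
  exact AbbottZhou.Good.colorable ⟨not_or.2 hG, hN⟩
end
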